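/- arXiv:1601.08248 — 2 statements merged into one kernel-verified Lean document; each statement's English description precedes it below -/
import Mathlib

section
/- (Fully discrete L² estimate.) Under the hypotheses β₀ ∈ W_+^6(H^{1/2}(Γ)) and β₁ ∈ W_+^5(H^{-1/2}(Γ)), the errors e_k^h := u^h − u_k^h and e_k^⋆ := u^⋆ − u_k^⋆ of the trapezoidal-rule time discretization of the semidiscrete problem satisfy, for all t ≥ 0, ‖e_k^h(t)‖_{Ω_-} + ‖e_k^⋆(t)‖_{ℝ^d∖Γ} ≤ C k² t² (H₃(β₀⁽³⁾,t|H^{1/2}(Γ)) + H₂(β₁⁽³⁾,t|H^{-1/2}(Γ))), with C independent of t, k, and the discrete spaces. -/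
open scoped RealInnerProductSpace

noncomputable section

/-- A function of time is causal when it vanishes for `t ≤ 0`. -/
def Causal {X : Type*} [AddCommGroup X] (f : ℝ → X) : Prop := ∀ t ≤ 0, f t = 0

/-- The Sobolev class `W_+^k(X)` of causal functions of class `C^{k-1}` whose `k`-th
distributional derivative is integrable. -/
def WP {X : Type*} [NormedAddCommGroup X] [NormedSpace ℝ X] (k : ℕ) (f : ℝ → X) : Prop :=
  ContDiff ℝ (k - 1 : ℕ) f ∧ Causal f ∧
    MeasureTheory.Integrable (iteratedDeriv k f) ∧
    ∀ s t : ℝ, iteratedDeriv (k - 1) f t - iteratedDeriv (k - 1) f s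
      = ∫ τ in s..t, iteratedDeriv k f τ

/-- The accumulated quantity `H_k(f,t|X) = ∑_{j=0}^k ∫_0^t ‖f^{(j)}(τ)‖_X dτ`. -/
noncomputable def Hfun {X : Type*} [NormedAddCommGroup X] [NormedSpace ℝ X]
    (k : ℕ) (f : ℝ → X) (t : ℝ) : ℝ :=
  ∑ j ∈ Finset.range (k + 1), ∫ τ in (0:ℝ)..t, ‖iteratedDeriv j f τ‖

/-- The antidifferentiation operator `∂⁻¹ f (t) = ∫_0^t f(τ) dτ` (for causal `f`). -/
noncomputable def aInt {X : Type*} [NormedAddCommGroup X] [NormedSpace ℝ X]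
    (f : ℝ → X) (t : ℝ) : X := ∫ τ in (0:ℝ)..t, f τ

/-- The averaging operator `α_k g (t) = (g t + g (t-k))/2`. -/
def amean {X : Type*} [AddCommGroup X] [Module ℝ X] (k : ℝ) (f : ℝ → X) (t : ℝ) : X :=
  (2⁻¹ : ℝ) • (f t + f (t - k))

/-- The differencing operator `∂_k g (t) = (g t - g (t-k))/k`. -/
def dquot {X : Type*} [AddCommGroup X] [Module ℝ X] (k : ℝ) (f : ℝ → X) (t : ℝ) : X :=
  (k⁻¹ : ℝ) • (f t - f (t - k))

/-- A (strong, causal) solution of the exotic transmission problem (2.10).  The exterior field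
`u^⋆` is represented together with the `H(div)` realization `wst` of its gradient, so that
`Δu^⋆(t) = ∇·wst t` and `∂_ν^± u^⋆(t) = γ_ν^± (wst t)`. -/
def Solves210
    {L2Ω L2Ωv L2s L2sv Hp Hm H1Ω H1s Hdiv : Type*}
    [NormedAddCommGroup L2Ω] [InnerProductSpace ℝ L2Ω]
    [NormedAddCommGroup L2Ωv] [InnerProductSpace ℝ L2Ωv]
    [NormedAddCommGroup L2s] [InnerProductSpace ℝ L2s]
    [NormedAddCommGroup L2sv] [InnerProductSpace ℝ L2sv]
    [NormedAddCommGroup Hp] [InnerProductSpace ℝ Hp]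
    [NormedAddCommGroup Hm] [InnerProductSpace ℝ Hm]
    [NormedAddCommGroup H1Ω] [NormedSpace ℝ H1Ω]
    [NormedAddCommGroup H1s] [NormedSpace ℝ H1s]
    [NormedAddCommGroup Hdiv] [NormedSpace ℝ Hdiv]
    (ι : H1Ω →L[ℝ] L2Ω) (grad : H1Ω →L[ℝ] L2Ωv) (γ : H1Ω →L[ℝ] Hp)
    (ιs : H1s →L[ℝ] L2s) (grads : H1s →L[ℝ] L2sv) (γm γp : H1s →L[ℝ] Hp)
    (ιdiv : Hdiv →L[ℝ] L2sv) (divs : Hdiv →L[ℝ] L2s) (γνm γνp : Hdiv →L[ℝ] Hm)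
    (dpair : Hm →L[ℝ] Hp →L[ℝ] ℝ)
    (cinv2 : L2Ω →L[ℝ] L2Ω) (kap : L2Ωv →L[ℝ] L2Ωv)
    (Uh : Submodule ℝ H1Ω) (Xh : Submodule ℝ Hm) (Yh : Submodule ℝ Hp)
    (β0 : ℝ → Hp) (β1 : ℝ → Hm)
    (uh : ℝ → H1Ω) (us : ℝ → H1s) (wst : ℝ → Hdiv) : Prop :=
  (∀ t : ℝ, uh t ∈ Uh) ∧ Causal uh ∧ Causal us ∧ Causal wst ∧
  ContDiff ℝ 2 (fun τ => ι (uh τ)) ∧ ContDiff ℝ 2 (fun τ => ιs (us τ)) ∧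
  Continuous uh ∧ Continuous us ∧
  (∀ t : ℝ, ιdiv (wst t) = grads (us t)) ∧
  (∀ t : ℝ, ∀ w ∈ Uh,
    ⟪cinv2 (iteratedDeriv 2 (fun τ => ι (uh τ)) t), ι w⟫
      + ⟪kap (grad (uh t)), grad w⟫
      + dpair (γνm (wst t) - γνp (wst t)) (γ w)
      = dpair (β1 t) (γ w)) ∧
  (∀ t : ℝ, iteratedDeriv 2 (fun τ => ιs (us τ)) t = divs (wst t)) ∧
  (∀ t : ℝ, γm (us t) - γp (us t) ∈ Yh) ∧
  (∀ t : ℝ, γνm (wst t) - γνp (wst t) ∈ Xh) ∧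
  (∀ t : ℝ, ∀ ψ ∈ Yh, dpair (γνm (wst t)) ψ = 0) ∧
  (∀ t : ℝ, ∀ μ ∈ Xh, dpair μ (γ (uh t) - γp (us t) - β0 t) = 0)

/-- A (causal) solution of the fully discrete problem (4.3): trapezoidal-rule time stepping
of the exotic transmission problem (2.10), extended to continuous time. -/
def Solves43
    {L2Ω L2Ωv L2s L2sv Hp Hm H1Ω H1s Hdiv : Type*}
    [NormedAddCommGroup L2Ω] [InnerProductSpace ℝ L2Ω]
    [NormedAddCommGroup L2Ωv] [InnerProductSpace ℝ L2Ωv]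
    [NormedAddCommGroup L2s] [InnerProductSpace ℝ L2s]
    [NormedAddCommGroup L2sv] [InnerProductSpace ℝ L2sv]
    [NormedAddCommGroup Hp] [InnerProductSpace ℝ Hp]
    [NormedAddCommGroup Hm] [InnerProductSpace ℝ Hm]
    [NormedAddCommGroup H1Ω] [NormedSpace ℝ H1Ω]
    [NormedAddCommGroup H1s] [NormedSpace ℝ H1s]
    [NormedAddCommGroup Hdiv] [NormedSpace ℝ Hdiv]
    (ι : H1Ω →L[ℝ] L2Ω) (grad : H1Ω →L[ℝ] L2Ωv) (γ : H1Ω →L[ℝ] Hp)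
    (ιs : H1s →L[ℝ] L2s) (grads : H1s →L[ℝ] L2sv) (γm γp : H1s →L[ℝ] Hp)
    (ιdiv : Hdiv →L[ℝ] L2sv) (divs : Hdiv →L[ℝ] L2s) (γνm γνp : Hdiv →L[ℝ] Hm)
    (dpair : Hm →L[ℝ] Hp →L[ℝ] ℝ)
    (cinv2 : L2Ω →L[ℝ] L2Ω) (kap : L2Ωv →L[ℝ] L2Ωv)
    (Uh : Submodule ℝ H1Ω) (Xh : Submodule ℝ Hm) (Yh : Submodule ℝ Hp)
    (k : ℝ) (β0 : ℝ → Hp) (β1 : ℝ → Hm)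
    (ukh : ℝ → H1Ω) (uks : ℝ → H1s) (wkst : ℝ → Hdiv) : Prop :=
  (∀ t : ℝ, ukh t ∈ Uh) ∧ Causal ukh ∧ Causal uks ∧ Causal wkst ∧
  (∀ t : ℝ, ιdiv (wkst t) = grads (uks t)) ∧
  (∀ t : ℝ, ∀ w ∈ Uh,
    ⟪cinv2 (dquot k (dquot k (fun τ => ι (ukh τ))) t), ι w⟫
      + ⟪kap (grad (amean k (amean k ukh) t)), grad w⟫
      + dpair (amean k (amean k (fun τ => γνm (wkst τ) - γνp (wkst τ))) t) (γ w)
      = dpair (amean k (amean k β1) t) (γ w)) ∧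
  (∀ t : ℝ, dquot k (dquot k (fun τ => ιs (uks τ))) t
      = amean k (amean k (fun τ => divs (wkst τ))) t) ∧
  (∀ t : ℝ, γm (uks t) - γp (uks t) ∈ Yh) ∧
  (∀ t : ℝ, γνm (wkst t) - γνp (wkst t) ∈ Xh) ∧
  (∀ t : ℝ, ∀ ψ ∈ Yh, dpair (γνm (wkst t)) ψ = 0) ∧
  (∀ t : ℝ, ∀ μ ∈ Xh, dpair μ (γ (ukh t) - γp (uks t) - β0 t) = 0)


/-! ### Helper material -/

theorem aux_causal_deriv {X : Type*} [NormedAddCommGroup X] [NormedSpace ℝ X]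
    {f f' : ℝ → X} (hf : Causal f) (h : ∀ t, HasDerivAt f (f' t) t) : Causal f' := by
  intro t ht
  have h1 : HasDerivWithinAt f (f' t) (Set.Iic t) t := (h t).hasDerivWithinAt
  have h2 : HasDerivWithinAt f 0 (Set.Iic t) t := by
    refine (hasDerivWithinAt_const t (Set.Iic t) (0 : X)).congr ?_ (hf t ht)
    intro y hy
    exact hf y (le_trans hy ht)
  exact (uniqueDiffWithinAt_Iic t).eq_deriv _ h1 h2

theorem aux_growth {X : Type*} [NormedAddCommGroup X] [NormedSpace ℝ X]
    {f f' : ℝ → X} (h0 : f 0 = 0) (h : ∀ t, HasDerivAt f (f' t) t) {M T : ℝ} (n : ℕ) (hM : 0 ≤ M)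
    (hb : ∀ r, 0 ≤ r → r ≤ T → ‖f' r‖ ≤ M * r ^ n) :
    ∀ r, 0 ≤ r → r ≤ T → ‖f r‖ ≤ M * r ^ (n + 1) := by
  intro r hr hrT
  have := norm_image_sub_le_of_norm_deriv_le_segment' (f := f) (f' := f') (a := 0) (b := r)
    (C := M * r ^ n) (fun x _ => (h x).hasDerivWithinAt)
    (fun x hx => (hb x hx.1 (hx.2.le.trans hrT)).trans
      (mul_le_mul_of_nonneg_left (pow_le_pow_left₀ hx.1 hx.2.le n) hM)) r ⟨hr, le_rfl⟩
  rw [h0, sub_zero, sub_zero] at this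
  calc _ ≤ _ := this
    _ = _ := by ring

/-- consistency error -/
def chi {X : Type*} [AddCommGroup X] [Module ℝ X] (k : ℝ) (q p : ℝ → X) (s : ℝ) : X :=
  dquot k (dquot k q) s - amean k (amean k p) s

theorem aux_chi_eq {X : Type*} [AddCommGroup X] [Module ℝ X] (k : ℝ) (q p : ℝ → X) (s : ℝ) :
    chi k q p s = (k⁻¹ * k⁻¹) • (q s - (2:ℝ) • q (s - k) + q (s - 2 * k))
      - (4⁻¹ : ℝ) • (p s + (2:ℝ) • p (s - k) + p (s - 2 * k)) := by
  have : s - k - k = s - 2 * k := by ring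
  simp only [chi, dquot, amean, this]
  module

theorem aux_taylor {X : Type*} [NormedAddCommGroup X] [NormedSpace ℝ X]
    {q0 q1 q2 q3 q4 : ℝ → X} (h0 : ∀ t, HasDerivAt q0 (q1 t) t)
    (h1 : ∀ t, HasDerivAt q1 (q2 t) t) (h2 : ∀ t, HasDerivAt q2 (q3 t) t)
    (h3 : ∀ t, HasDerivAt q3 (q4 t) t) {M s : ℝ} (hM : 0 ≤ M) (hb : ∀ r ≤ s, ‖q4 r‖ ≤ M) :
    (∀ r, 0 ≤ r → ‖q2 (s - r) - q2 s + r • q3 s‖ ≤ M * r ^ 2) ∧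
    (∀ r, 0 ≤ r → ‖q0 (s - r) - q0 s + r • q1 s - (r ^ 2 / 2) • q2 s + (r ^ 3 / 6) • q3 s‖
      ≤ M * r ^ 4) := by
  have hsub : ∀ r : ℝ, HasDerivAt (fun r => s - r) (-1) r := fun r => by
    simpa using (hasDerivAt_id r).const_sub s
  have hc : ∀ {g g' : ℝ → X}, (∀ t, HasDerivAt g (g' t) t) → ∀ r,
      HasDerivAt (fun r => g (s - r)) (-(g' (s - r))) r := by
    intro g g' hg r
    have := (hg (s - r)).scomp r (hsub r)
    rw [neg_one_smul] at this
    exact this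
  have R3 : ∀ T, ∀ r, 0 ≤ r → r ≤ T → ‖q3 (s - r) - q3 s‖ ≤ M * r ^ 1 := by
    intro T
    refine aux_growth (f := fun r => q3 (s - r) - q3 s) (f' := fun r => -(q4 (s - r)))
      (by simp) (fun r => (hc h3 r).sub_const _) 0 hM ?_
    intro r hr _
    simpa using hb (s - r) (by linarith)
  have R2 : ∀ T, ∀ r, 0 ≤ r → r ≤ T → ‖q2 (s - r) - q2 s + r • q3 s‖ ≤ M * r ^ 2 := by
    intro T
    refine aux_growth (f := fun r => q2 (s - r) - q2 s + r • q3 s)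
      (f' := fun r => -(q3 (s - r) - q3 s))
      (by simp) (fun r => ?_) 1 hM ?_
    · have := ((hc h2 r).sub_const (q2 s)).add ((hasDerivAt_id r).smul_const (q3 s))
      refine this.congr_deriv ?_
      module
    intro r hr hT
    rw [norm_neg]
    exact R3 T r hr hT
  have R1 : ∀ T, ∀ r, 0 ≤ r → r ≤ T →
      ‖q1 (s - r) - q1 s + r • q2 s - (r ^ 2 / 2) • q3 s‖ ≤ M * r ^ 3 := by
    intro T
    refine aux_growth (f := fun r => q1 (s - r) - q1 s + r • q2 s - (r ^ 2 / 2) • q3 s)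
      (f' := fun r => -(q2 (s - r) - q2 s + r • q3 s))
      (by simp) (fun r => ?_) 2 hM ?_
    · have := (((hc h1 r).sub_const (q1 s)).add ((hasDerivAt_id r).smul_const (q2 s))).sub
        ((((hasDerivAt_id r).pow 2).div_const 2).smul_const (q3 s))
      refine this.congr_deriv ?_
      simp
      module
    intro r hr hT
    rw [norm_neg]
    exact R2 T r hr hT
  have R0 : ∀ T, ∀ r, 0 ≤ r → r ≤ T →
      ‖q0 (s - r) - q0 s + r • q1 s - (r ^ 2 / 2) • q2 s + (r ^ 3 / 6) • q3 s‖ ≤ M * r ^ 4 := by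
    intro T
    refine aux_growth
      (f := fun r => q0 (s - r) - q0 s + r • q1 s - (r ^ 2 / 2) • q2 s + (r ^ 3 / 6) • q3 s)
      (f' := fun r => -(q1 (s - r) - q1 s + r • q2 s - (r ^ 2 / 2) • q3 s))
      (by simp) (fun r => ?_) 3 hM ?_
    · have := ((((hc h0 r).sub_const (q0 s)).add ((hasDerivAt_id r).smul_const (q1 s))).sub
        ((((hasDerivAt_id r).pow 2).div_const 2).smul_const (q2 s))).add
        ((((hasDerivAt_id r).pow 3).div_const 6).smul_const (q3 s))
      refine this.congr_deriv ?_
      simp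
      module
    intro r hr hT
    rw [norm_neg]
    exact R1 T r hr hT
  exact ⟨fun r hr => R2 r r hr le_rfl, fun r hr => R0 r r hr le_rfl⟩

theorem aux_chi_bound {X : Type*} [NormedAddCommGroup X] [NormedSpace ℝ X]
    {q0 q1 q2 q3 q4 : ℝ → X} (hc : Causal q0) (h0 : ∀ t, HasDerivAt q0 (q1 t) t)
    (h1 : ∀ t, HasDerivAt q1 (q2 t) t) (h2 : ∀ t, HasDerivAt q2 (q3 t) t)
    (h3 : ∀ t, HasDerivAt q3 (q4 t) t) {M t k : ℝ} (hM : 0 ≤ M) (hk : 0 < k)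
    (hb : ∀ r, 0 ≤ r → r ≤ t → ‖q4 r‖ ≤ M) :
    ∀ s ≤ t, ‖chi k q0 q2 s‖ ≤ 20 * M * k ^ 2 ∧
      (0 ≤ s → s ≤ k → ‖chi k q0 q2 s‖ ≤ 20 * M * s ^ 2) := by
  intro s hs
  have c1 := aux_causal_deriv hc h0
  have c2 := aux_causal_deriv c1 h1
  have c3 := aux_causal_deriv c2 h2
  have c4 := aux_causal_deriv c3 h3
  have hb' : ∀ r ≤ s, ‖q4 r‖ ≤ M := by
    intro r hr
    by_cases h : 0 ≤ r
    · exact hb r h (hr.trans hs)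
    · rw [c4 r (by linarith)]; simpa using hM
  obtain ⟨T2, T0⟩ := aux_taylor h0 h1 h2 h3 hM hb'
  constructor
  · rw [aux_chi_eq]
    have a1 := T0 k hk.le
    have a2 := T0 (2 * k) (by linarith)
    have b1 := T2 k hk.le
    have b2 := T2 (2 * k) (by linarith)
    set A1 := q0 (s - k) - q0 s + k • q1 s - (k ^ 2 / 2) • q2 s + (k ^ 3 / 6) • q3 s with hA1
    set A2 := q0 (s - 2 * k) - q0 s + (2 * k) • q1 s - ((2 * k) ^ 2 / 2) • q2 s
      + ((2 * k) ^ 3 / 6) • q3 s with hA2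
    set B1 := q2 (s - k) - q2 s + k • q3 s with hB1
    set B2 := q2 (s - 2 * k) - q2 s + (2 * k) • q3 s with hB2
    have e : (k⁻¹ * k⁻¹) • (q0 s - (2:ℝ) • q0 (s - k) + q0 (s - 2 * k))
      - (4⁻¹ : ℝ) • (q2 s + (2:ℝ) • q2 (s - k) + q2 (s - 2 * k))
      = (k⁻¹ * k⁻¹) • (A2 - (2:ℝ) • A1) - (4⁻¹ : ℝ) • ((2:ℝ) • B1 + B2) := by
      have e1 : q0 (s - k) = A1 - (- q0 s + k • q1 s - (k ^ 2 / 2) • q2 s + (k ^ 3 / 6) • q3 s) := by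
        rw [hA1]; abel
      have e2 : q0 (s - 2 * k) = A2 - (- q0 s + (2 * k) • q1 s - ((2 * k) ^ 2 / 2) • q2 s
        + ((2 * k) ^ 3 / 6) • q3 s) := by
        rw [hA2]; abel
      have e3 : q2 (s - k) = B1 - (- q2 s + k • q3 s) := by rw [hB1]; abel
      have e4 : q2 (s - 2 * k) = B2 - (- q2 s + (2 * k) • q3 s) := by rw [hB2]; abel
      clear_value A1 A2 B1 B2
      rw [e1, e2, e3, e4]
      match_scalars <;> field_simp <;> ring
    rw [e]
    have n1 : ‖(k⁻¹ * k⁻¹) • (A2 - (2:ℝ) • A1)‖ ≤ (k⁻¹ * k⁻¹) * (M * (2 * k) ^ 4 + 2 * (M * k ^ 4)) := by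
      rw [norm_smul, Real.norm_of_nonneg (by positivity)]
      refine mul_le_mul_of_nonneg_left ?_ (by positivity)
      refine (norm_sub_le _ _).trans (add_le_add a2 ?_)
      rw [norm_smul, Real.norm_of_nonneg (by positivity)]
      linarith
    have n2 : ‖(4⁻¹ : ℝ) • ((2:ℝ) • B1 + B2)‖ ≤ 4⁻¹ * (2 * (M * k ^ 2) + M * (2 * k) ^ 2) := by
      rw [norm_smul, Real.norm_of_nonneg (by positivity)]
      refine mul_le_mul_of_nonneg_left ?_ (by positivity)
      refine (norm_add_le _ _).trans (add_le_add ?_ b2)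
      rw [norm_smul, Real.norm_of_nonneg (by positivity)]
      linarith
    refine (norm_sub_le _ _).trans ((add_le_add n1 n2).trans ?_)
    have : (k⁻¹ * k⁻¹) * (M * (2 * k) ^ 4 + 2 * (M * k ^ 4)) = 18 * M * k ^ 2 := by
      field_simp; ring
    rw [this]
    nlinarith [mul_nonneg hM (sq_nonneg k)]
  · intro s0 sk
    rw [aux_chi_eq, hc (s - k) (by linarith), hc (s - 2 * k) (by linarith), c2 (s - k) (by linarith),
      c2 (s - 2 * k) (by linarith)]
    have g3 := aux_growth (c3 0 le_rfl) h3 (T := t) 0 hM (by simpa using hb)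
    have g2 := aux_growth (c2 0 le_rfl) h2 (T := t) 1 hM (by simpa using g3)
    have g1 := aux_growth (c1 0 le_rfl) h1 (T := t) 2 hM (by simpa using g2)
    have g0 := aux_growth (hc 0 le_rfl) h0 (T := t) 3 hM (by simpa using g1)
    have u0 := g0 s s0 hs
    have u2 := g2 s s0 hs
    simp only [smul_zero, sub_zero, add_zero]
    have n1 : ‖(k⁻¹ * k⁻¹) • q0 s‖ ≤ M * s ^ 2 := by
      rw [norm_smul, Real.norm_of_nonneg (by positivity)]
      have : k⁻¹ * s ≤ 1 := by
        rw [inv_mul_le_iff₀ hk]; linarith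
      have h4 : (k⁻¹ * s) ^ 2 ≤ 1 := by
        apply pow_le_one₀ (by positivity) this
      calc k⁻¹ * k⁻¹ * ‖q0 s‖ ≤ k⁻¹ * k⁻¹ * (M * s ^ (3 + 1)) := by gcongr
        _ = (k⁻¹ * s) ^ 2 * (M * s ^ 2) := by ring
        _ ≤ 1 * (M * s ^ 2) := by gcongr
        _ = _ := by ring
    have n2 : ‖(4⁻¹ : ℝ) • q2 s‖ ≤ 4⁻¹ * (M * s ^ 2) := by
      rw [norm_smul, Real.norm_of_nonneg (by positivity)]
      gcongr
    refine (norm_sub_le _ _).trans ((add_le_add n1 n2).trans ?_)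
    nlinarith [mul_nonneg hM (sq_nonneg s)]

theorem aux_discrete {V H G : Type*} [NormedAddCommGroup V] [NormedSpace ℝ V]
    [NormedAddCommGroup H] [InnerProductSpace ℝ H] [NormedAddCommGroup G] [InnerProductSpace ℝ G]
    (i : V →L[ℝ] H) (D : V →L[ℝ] G) {e : ℝ → V} (he : Causal e) {X : ℝ → H} {k B t : ℝ}
    (hk : 0 < k) (hB : 0 ≤ B)
    (heq : ∀ τ z, ⟪dquot k (dquot k (fun τ => i (e τ))) τ - X τ, i z⟫
      + ⟪D (amean k (amean k e) τ), D z⟫ = 0)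
    (hX1 : ∀ τ ≤ t, ‖X τ‖ ≤ B * k ^ 2)
    (hX2 : ∀ τ ≤ t, 0 ≤ τ → τ ≤ k → ‖X τ‖ ≤ B * τ ^ 2) (ht : 0 ≤ t) :
    ‖i (e t)‖ ≤ B * k ^ 2 * t ^ 2 := by
  set E : ℝ → ℝ := fun τ => ‖dquot k (fun τ => i (e τ)) τ‖ ^ 2 + ‖D (amean k e τ)‖ ^ 2 with hE
  set ε : ℝ → ℝ := fun τ => √(E τ) with hε
  have hE0 : ∀ τ, 0 ≤ E τ := fun τ => by simp only [hE]; positivity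
  have hεsq : ∀ τ, ε τ ^ 2 = E τ := fun τ => Real.sq_sqrt (hE0 τ)
  have hε0 : ∀ τ, 0 ≤ ε τ := fun τ => Real.sqrt_nonneg _
  have hpε : ∀ τ, ‖dquot k (fun τ => i (e τ)) τ‖ ≤ ε τ := by
    intro τ
    apply Real.le_sqrt_of_sq_le
    simp only [hE]
    nlinarith [sq_nonneg ‖D (amean k e τ)‖]
  have hstep : ∀ τ, ε τ ≤ ε (τ - k) + k * ‖X τ‖ := by
    intro τ
    set p := dquot k (fun τ => i (e τ)) τ with hp
    set p' := dquot k (fun τ => i (e τ)) (τ - k) with hp'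
    set r := D (amean k e τ) with hr
    set r' := D (amean k e (τ - k)) with hr'
    have h := heq τ ((2 * k)⁻¹ • (e τ - e (τ - k - k)))
    have q1 : dquot k (dquot k (fun τ => i (e τ))) τ = k⁻¹ • (p - p') := rfl
    have q2 : i ((2 * k)⁻¹ • (e τ - e (τ - k - k))) = (2⁻¹ : ℝ) • (p + p') := by
      simp only [hp, hp', dquot, map_smul, map_sub]
      match_scalars <;> field_simp
      ring
    have q3 : D (amean k (amean k e) τ) = (2⁻¹ : ℝ) • (r + r') := by
      rw [amean, map_smul, map_add]
    have q4 : D ((2 * k)⁻¹ • (e τ - e (τ - k - k))) = k⁻¹ • (r - r') := by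
      simp only [hr, hr', amean, map_smul, map_sub, map_add]
      match_scalars <;> field_simp
      ring
    rw [q1, q2, q3, q4] at h
    have h2 : ‖p‖ ^ 2 + ‖r‖ ^ 2 - (‖p'‖ ^ 2 + ‖r'‖ ^ 2) = k * ⟪X τ, p + p'⟫ := by
      simp only [inner_sub_left, inner_smul_left, inner_smul_right, inner_add_right, inner_add_left,
        inner_sub_right, real_inner_self_eq_norm_sq, conj_trivial] at h ⊢
      rw [real_inner_comm p p', real_inner_comm r r'] at h
      field_simp at h
      linarith
    have h3 : ⟪X τ, p + p'⟫ ≤ ‖X τ‖ * (ε τ + ε (τ - k)) :=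
      (real_inner_le_norm _ _).trans (mul_le_mul_of_nonneg_left
        ((norm_add_le _ _).trans (add_le_add (hpε τ) (hpε (τ - k)))) (norm_nonneg _))
    have h4 : ε τ ^ 2 - ε (τ - k) ^ 2 ≤ k * (‖X τ‖ * (ε τ + ε (τ - k))) := by
      rw [hεsq, hεsq]
      calc _ = _ := h2
        _ ≤ _ := mul_le_mul_of_nonneg_left h3 hk.le
    by_contra hcon
    push Not at hcon
    have := hε0 (τ - k)
    have := mul_nonneg hk.le (norm_nonneg (X τ))
    nlinarith
  have hneg : ∀ τ ≤ 0, ε τ = 0 := by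
    intro τ hτ
    simp [hε, hE, dquot, amean, he τ hτ, he (τ - k) (by linarith)]
  have hsmall : ∀ τ ≤ t, 0 ≤ τ → τ ≤ k → ε τ ≤ k * (B * τ ^ 2) := by
    intro τ ht h0 h1
    have := hstep τ
    rw [hneg (τ - k) (by linarith), zero_add] at this
    exact this.trans (mul_le_mul_of_nonneg_left (hX2 τ ht h0 h1) hk.le)
  have hid : ∀ τ, ‖i (e τ)‖ ≤ ‖i (e (τ - k))‖ + k * ε τ := by
    intro τ
    have : i (e τ) = i (e (τ - k)) + k • dquot k (fun τ => i (e τ)) τ := by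
      simp only [dquot]
      rw [smul_smul, mul_inv_cancel₀ hk.ne']; module
    calc ‖i (e τ)‖ = ‖i (e (τ - k)) + k • dquot k (fun τ => i (e τ)) τ‖ := by rw [← this]
      _ ≤ _ := norm_add_le _ _
      _ ≤ _ := by
        rw [norm_smul, Real.norm_of_nonneg hk.le]
        gcongr
        exact hpε τ
  have main : ∀ n : ℕ, ∀ τ, 0 ≤ τ → τ ≤ t → τ ≤ n * k →
      ε τ ≤ B * k ^ 2 * τ ∧ ‖i (e τ)‖ ≤ B * k ^ 2 * τ ^ 2 := by
    intro n
    induction n with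
    | zero =>
      intro τ h0 h1 h2
      have : τ = 0 := by
        apply le_antisymm _ h0
        simpa using h2
      subst this
      rw [hneg 0 le_rfl, he 0 le_rfl]
      simp
    | succ n ih =>
      intro τ h0 h1 h2
      by_cases hτ : τ ≤ k
      · have hs := hsmall τ h1 h0 hτ
        have a : k * (B * τ ^ 2) ≤ B * k ^ 2 * τ := by
          have : 0 ≤ k * B * τ * (k - τ) := mul_nonneg (by positivity) (by linarith)
          nlinarith
        refine ⟨hs.trans a, ?_⟩
        have := hid τ
        rw [he (τ - k) (by linarith), map_zero, norm_zero, zero_add] at this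
        calc _ ≤ _ := this
          _ ≤ k * (k * (B * τ ^ 2)) := by gcongr
          _ = _ := by ring
      · push Not at hτ
        obtain ⟨i1, i2⟩ := ih (τ - k) (by linarith) (by linarith) (by push_cast at h2; linarith)
        have a : ε τ ≤ B * k ^ 2 * τ := by
          have := hstep τ
          have := mul_le_mul_of_nonneg_left (hX1 τ h1) hk.le
          nlinarith
        refine ⟨a, ?_⟩
        have := hid τ
        have := mul_le_mul_of_nonneg_left a hk.le
        have : 0 ≤ B * k ^ 2 * (k * (τ - k)) := mul_nonneg (by positivity)
          (mul_nonneg hk.le (by linarith))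
        nlinarith
  obtain ⟨n, hn⟩ := exists_nat_ge (t / k)
  exact (main n t ht le_rfl (by rwa [div_le_iff₀ hk] at hn)).2

theorem aux_ftc_norm {G : Type*} [NormedAddCommGroup G] [NormedSpace ℝ G] [CompleteSpace G]
    {g g1 : ℝ → G} (hcg : Causal g) (hg : ∀ t, HasDerivAt g (g1 t) t) (cg1 : Continuous g1) {t : ℝ} :
    ∀ s, 0 ≤ s → s ≤ t → ‖g s‖ ≤ ∫ τ in (0:ℝ)..t, ‖g1 τ‖ := by
  intro s h0 h1
  have := intervalIntegral.integral_eq_sub_of_hasDerivAt (a := 0) (b := s)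
    (fun τ _ => hg τ) (cg1.intervalIntegrable _ _)
  rw [hcg 0 le_rfl, sub_zero] at this
  rw [← this]
  refine (intervalIntegral.norm_integral_le_integral_norm h0).trans ?_
  exact intervalIntegral.integral_mono_interval le_rfl h0 h1
    (Filter.Eventually.of_forall fun _ => norm_nonneg _) (cg1.norm.intervalIntegrable _ _)

theorem aux_energy {V H G : Type*} [NormedAddCommGroup V] [NormedSpace ℝ V]
    [NormedAddCommGroup H] [InnerProductSpace ℝ H] [NormedAddCommGroup G] [InnerProductSpace ℝ G]
    [CompleteSpace G]
    (i : V →L[ℝ] H) (D : V →L[ℝ] G) {x0 x1 x2 : ℝ → V} {f : ℝ → H} {g g1 : ℝ → G}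
    (hx0 : ∀ t, HasDerivAt x0 (x1 t) t) (hx1 : ∀ t, HasDerivAt x1 (x2 t) t)
    (hg : ∀ t, HasDerivAt g (g1 t) t) (cf : Continuous f) (cg1 : Continuous g1)
    (hcx : Causal x0) (hcg : Causal g)
    (heq : ∀ t z, ⟪i (x2 t), i z⟫ + ⟪D (x0 t), D z⟫ = ⟪f t, i z⟫ + ⟪g t, D z⟫) {t : ℝ} :
    ∀ s, 0 ≤ s → s ≤ t → ‖i (x1 s)‖ ≤
      2 * ((∫ τ in (0:ℝ)..t, ‖f τ‖) + 2 * ∫ τ in (0:ℝ)..t, ‖g1 τ‖) := by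
  intro s hs0 hst
  have ht : 0 ≤ t := hs0.trans hst
  have c0 : Continuous x0 := continuous_iff_continuousAt.2 fun t => (hx0 t).continuousAt
  have c1 : Continuous x1 := continuous_iff_continuousAt.2 fun t => (hx1 t).continuousAt
  have cg : Continuous g := continuous_iff_continuousAt.2 fun t => (hg t).continuousAt
  have hcx1 := aux_causal_deriv hcx hx0
  set E : ℝ → ℝ := fun τ => ‖i (x1 τ)‖ ^ 2 + ‖D (x0 τ)‖ ^ 2 with hE
  have hE0 : ∀ τ, 0 ≤ E τ := fun τ => by simp only [hE]; positivity
  have cE : Continuous fun τ => √(E τ) := by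
    simp only [hE]; fun_prop
  obtain ⟨s0, hs0m, hmax⟩ := isCompact_Icc.exists_isMaxOn (Set.nonempty_Icc.2 ht) cE.continuousOn
  set S := √(E s0) with hS
  have hS0 : 0 ≤ S := Real.sqrt_nonneg _
  have hle : ∀ τ, 0 ≤ τ → τ ≤ t → √(E τ) ≤ S := fun τ h1 h2 => hmax ⟨h1, h2⟩
  have hi : ∀ τ, ‖i (x1 τ)‖ ≤ √(E τ) := fun τ => by
    apply Real.le_sqrt_of_sq_le; simp only [hE]; nlinarith [sq_nonneg ‖D (x0 τ)‖]
  have hD : ∀ τ, ‖D (x0 τ)‖ ≤ √(E τ) := fun τ => by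
    apply Real.le_sqrt_of_sq_le; simp only [hE]; nlinarith [sq_nonneg ‖i (x1 τ)‖]
  have hder : ∀ τ, HasDerivAt (fun τ => ⟪i (x1 τ), i (x1 τ)⟫ / 2 + ⟪D (x0 τ), D (x0 τ)⟫ / 2
      - ⟪g τ, D (x0 τ)⟫) (⟪f τ, i (x1 τ)⟫ - ⟪g1 τ, D (x0 τ)⟫) τ := by
    intro τ
    have a1 : HasDerivAt (fun τ => i (x1 τ)) (i (x2 τ)) τ := i.hasFDerivAt.comp_hasDerivAt τ (hx1 τ)
    have a2 : HasDerivAt (fun τ => D (x0 τ)) (D (x1 τ)) τ := D.hasFDerivAt.comp_hasDerivAt τ (hx0 τ)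
    have := (((a1.inner ℝ a1).div_const 2).add ((a2.inner ℝ a2).div_const 2)).sub
      ((hg τ).inner ℝ a2)
    refine this.congr_deriv ?_
    have h := heq τ (x1 τ)
    rw [real_inner_comm (i (x2 τ)) (i (x1 τ)), real_inner_comm (D (x1 τ)) (D (x0 τ))]
    rw [real_inner_comm (D (x1 τ)) (D (x0 τ))] at h
    linarith
  have cint : Continuous fun τ => ⟪f τ, i (x1 τ)⟫ - ⟪g1 τ, D (x0 τ)⟫ := by fun_prop
  have hFTC := intervalIntegral.integral_eq_sub_of_hasDerivAt (a := 0) (b := s0)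
    (fun τ _ => hder τ) (cint.intervalIntegrable _ _)
  simp only [hcx 0 le_rfl, hcx1 0 le_rfl, map_zero, inner_zero_right, zero_div, sub_zero, add_zero,
    real_inner_self_eq_norm_sq] at hFTC
  have hnn : ∀ τ, 0 ≤ ‖f τ‖ + ‖g1 τ‖ := fun τ => by positivity
  have hI : (∫ τ in (0:ℝ)..s0, (⟪f τ, i (x1 τ)⟫ - ⟪g1 τ, D (x0 τ)⟫))
      ≤ S * ((∫ τ in (0:ℝ)..t, ‖f τ‖) + ∫ τ in (0:ℝ)..t, ‖g1 τ‖) := by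
    calc _ ≤ ∫ τ in (0:ℝ)..s0, S * (‖f τ‖ + ‖g1 τ‖) := by
          refine intervalIntegral.integral_mono_on hs0m.1 (cint.intervalIntegrable _ _)
            (by apply Continuous.intervalIntegrable; fun_prop) ?_
          intro τ hτ
          have k1 := real_inner_le_norm (f τ) (i (x1 τ))
          have k2 := neg_le_of_abs_le (abs_real_inner_le_norm (g1 τ) (D (x0 τ)))
          have l := hle τ hτ.1 (hτ.2.trans hs0m.2)
          have k3 := mul_le_mul_of_nonneg_left ((hi τ).trans l) (norm_nonneg (f τ))
          have k4 := mul_le_mul_of_nonneg_left ((hD τ).trans l) (norm_nonneg (g1 τ))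
          linarith
      _ = S * ∫ τ in (0:ℝ)..s0, (‖f τ‖ + ‖g1 τ‖) := intervalIntegral.integral_const_mul _ _
      _ ≤ S * ∫ τ in (0:ℝ)..t, (‖f τ‖ + ‖g1 τ‖) := by
          refine mul_le_mul_of_nonneg_left ?_ hS0
          refine intervalIntegral.integral_mono_interval le_rfl hs0m.1 hs0m.2
            (Filter.Eventually.of_forall hnn) (by apply Continuous.intervalIntegrable; fun_prop)
      _ = _ := by
          rw [intervalIntegral.integral_add (cf.norm.intervalIntegrable _ _)
            (cg1.norm.intervalIntegrable _ _)]
  have hgb : ‖g s0‖ ≤ ∫ τ in (0:ℝ)..t, ‖g1 τ‖ := by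
    exact aux_ftc_norm hcg hg cg1 s0 hs0m.1 hs0m.2
  have hin : ⟪g s0, D (x0 s0)⟫ ≤ S * ∫ τ in (0:ℝ)..t, ‖g1 τ‖ := by
    calc _ ≤ ‖g s0‖ * ‖D (x0 s0)‖ := real_inner_le_norm _ _
      _ ≤ (∫ τ in (0:ℝ)..t, ‖g1 τ‖) * S := mul_le_mul hgb (hD s0) (norm_nonneg _)
          ((norm_nonneg _).trans hgb)
      _ = _ := mul_comm _ _
  have hSS : S ^ 2 = ‖i (x1 s0)‖ ^ 2 + ‖D (x0 s0)‖ ^ 2 := Real.sq_sqrt (hE0 s0)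
  have fin : S ^ 2 ≤ S * (2 * ((∫ τ in (0:ℝ)..t, ‖f τ‖) + 2 * ∫ τ in (0:ℝ)..t, ‖g1 τ‖)) := by
    nlinarith
  have hpos : 0 ≤ ∫ τ in (0:ℝ)..t, ‖f τ‖ :=
    intervalIntegral.integral_nonneg ht fun _ _ => norm_nonneg _
  have hpos1 := (norm_nonneg _).trans hgb
  refine ((hi s).trans (hle s hs0 hst)).trans ?_
  by_contra hcon
  push Not at hcon
  have hS1 : 0 < S := by linarith
  nlinarith

/-- Steklov average -/
def stek {X : Type*} [NormedAddCommGroup X] [NormedSpace ℝ X] (h : ℝ) (f : ℝ → X) (t : ℝ) : X :=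
  h⁻¹ • ∫ τ in (t - h)..t, f τ

section steklov

set_option linter.unusedSectionVars false

variable {X Y : Type*} [NormedAddCommGroup X] [NormedSpace ℝ X] [CompleteSpace X]
  [NormedAddCommGroup Y] [NormedSpace ℝ Y] [CompleteSpace Y]

theorem stek_hasDerivAt (h : ℝ) {f : ℝ → X} (cf : Continuous f) (t : ℝ) :
    HasDerivAt (stek h f) (dquot h f t) t := by
  have hF : ∀ t, HasDerivAt (fun t => ∫ τ in (0:ℝ)..t, f τ) (f t) t := fun t =>
    intervalIntegral.integral_hasDerivAt_right (cf.intervalIntegrable _ _)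
      (cf.stronglyMeasurableAtFilter _ _) cf.continuousAt
  have hsub : HasDerivAt (fun r => r - h) 1 t := (hasDerivAt_id t).sub_const h
  have h2 := (hF (t - h)).scomp t hsub
  rw [one_smul] at h2
  have h3 := ((hF t).sub h2).const_smul h⁻¹
  refine h3.congr_of_eventuallyEq (Filter.Eventually.of_forall fun s => ?_)
  simp only [stek, Pi.smul_apply, Pi.sub_apply, Function.comp]
  rw [intervalIntegral.integral_interval_sub_left (cf.intervalIntegrable _ _)
    (cf.intervalIntegrable _ _)]

theorem stek_continuous (h : ℝ) {f : ℝ → X} (cf : Continuous f) : Continuous (stek h f) :=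
  continuous_iff_continuousAt.2 fun t => (stek_hasDerivAt h cf t).continuousAt

theorem stek_comm (h : ℝ) {f f' : ℝ → X} (hf : ∀ t, HasDerivAt f (f' t) t) (cf' : Continuous f')
    (t : ℝ) : HasDerivAt (stek h f) (stek h f' t) t := by
  have cf : Continuous f := continuous_iff_continuousAt.2 fun t => (hf t).continuousAt
  refine (stek_hasDerivAt h cf t).congr_deriv ?_
  rw [stek, intervalIntegral.integral_eq_sub_of_hasDerivAt (fun τ _ => hf τ)
    (cf'.intervalIntegrable _ _)]
  rfl

theorem stek_clm (h : ℝ) (T : X →L[ℝ] Y) {f : ℝ → X} (cf : Continuous f) (t : ℝ) :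
    T (stek h f t) = stek h (fun τ => T (f τ)) t := by
  rw [stek, stek, map_smul, T.intervalIntegral_comp_comm (cf.intervalIntegrable _ _)]

theorem stek_causal {h : ℝ} (hh : 0 < h) {f : ℝ → X} (hf : Causal f) : Causal (stek h f) := by
  intro t ht
  rw [stek, intervalIntegral.integral_zero_ae, smul_zero]
  refine Filter.Eventually.of_forall fun x hx => ?_
  rw [Set.uIoc_of_le (by linarith)] at hx
  exact hf x (hx.2.trans ht)

theorem stek_contDiff (h : ℝ) {f : ℝ → X} {n : ℕ} (hf : ContDiff ℝ n f) :
    ContDiff ℝ (n + 1 : ℕ) (stek h f) := by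
  have hd := stek_hasDerivAt h hf.continuous
  push_cast
  rw [contDiff_succ_iff_deriv]
  refine ⟨fun t => (hd t).differentiableAt, by simp, ?_⟩
  have : deriv (stek h f) = dquot h f := funext fun t => (hd t).deriv
  rw [this]
  unfold dquot
  fun_prop

theorem stek_norm_le {h : ℝ} (hh : 0 < h) {f : ℝ → X} {t M : ℝ}
    (hM : ∀ s, t - h ≤ s → s ≤ t → ‖f s‖ ≤ M) : ‖stek h f t‖ ≤ M := by
  have := intervalIntegral.norm_integral_le_of_norm_le_const (a := t - h) (b := t) (f := f) (C := M)
    (fun x hx => by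
      rw [Set.uIoc_of_le (by linarith)] at hx
      exact hM x hx.1.le hx.2)
  rw [stek, norm_smul, norm_inv, Real.norm_of_nonneg hh.le, inv_mul_le_iff₀ hh]
  rw [sub_sub_cancel, abs_of_pos hh] at this
  linarith

theorem stek_tendsto {f : ℝ → X} (cf : Continuous f) (t : ℝ) :
    Filter.Tendsto (fun h => stek h f t) (nhdsWithin 0 (Set.Ioi 0)) (nhds (f t)) := by
  rw [Metric.tendsto_nhds]
  intro ε hε
  obtain ⟨δ, hδ, hd⟩ := Metric.continuousAt_iff.1 (cf.continuousAt (x := t)) (ε / 2) (half_pos hε)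
  filter_upwards [Ioo_mem_nhdsGT hδ] with h hh
  have : stek h f t - f t = stek h (fun s => f s - f t) t := by
    rw [stek, stek, intervalIntegral.integral_sub (cf.intervalIntegrable _ _)
      (continuous_const.intervalIntegrable _ _), intervalIntegral.integral_const, smul_sub,
      smul_smul, sub_sub_cancel, inv_mul_cancel₀ hh.1.ne', one_smul]
  rw [dist_eq_norm, this]
  refine (stek_norm_le hh.1 (M := ε / 2) ?_).trans_lt (by linarith)
  intro s h1 h2
  rw [← dist_eq_norm]
  refine (hd ?_).le
  rw [Real.dist_eq, abs_lt]
  constructor <;> linarith [hh.1, hh.2]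

theorem stek_integral_tendsto {f : ℝ → X} (cf : Continuous f) (t : ℝ) (ht : 0 ≤ t) :
    Filter.Tendsto (fun h => ∫ τ in (0:ℝ)..t, ‖stek h f τ‖) (nhdsWithin 0 (Set.Ioi 0))
      (nhds (∫ τ in (0:ℝ)..t, ‖f τ‖)) := by
  obtain ⟨M, hM⟩ := (isCompact_Icc (a := (-1:ℝ)) (b := t)).exists_bound_of_continuousOn
    cf.continuousOn
  refine intervalIntegral.tendsto_integral_filter_of_dominated_convergence (fun _ => M) ?_ ?_ ?_ ?_
  · exact Filter.Eventually.of_forall fun h => (stek_continuous h cf).norm.aestronglyMeasurable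
  · filter_upwards [Ioo_mem_nhdsGT (zero_lt_one' ℝ)] with h hh
    refine Filter.Eventually.of_forall fun x hx => ?_
    rw [Set.uIoc_of_le ht] at hx
    rw [norm_norm]
    refine stek_norm_le hh.1 fun s h1 h2 => hM s ⟨?_, ?_⟩
    · linarith [hh.2, hx.1]
    · linarith [hx.2]
  · exact continuous_const.intervalIntegrable _ _
  · exact Filter.Eventually.of_forall fun x _ => (stek_tendsto cf x).norm

end steklov

/-- The abstract semidiscrete evolution problem together with derivative chains of the data. -/
structure EvProb {V H G : Type*} [NormedAddCommGroup V] [NormedSpace ℝ V]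
    [NormedAddCommGroup H] [InnerProductSpace ℝ H] [NormedAddCommGroup G] [InnerProductSpace ℝ G]
    (i : V →L[ℝ] H) (D : V →L[ℝ] G) (v : ℝ → V) (q1 q2 f0 f1 f2 f3 : ℝ → H)
    (g0 g1 g2 g3 g4 : ℝ → G) : Prop where
  cv : Continuous v
  hv : Causal v
  hq1 : ∀ t, HasDerivAt (fun τ => i (v τ)) (q1 t) t
  hq2 : ∀ t, HasDerivAt q1 (q2 t) t
  cq2 : Continuous q2
  hf0 : ∀ t, HasDerivAt f0 (f1 t) t
  hf1 : ∀ t, HasDerivAt f1 (f2 t) t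
  hf2 : ∀ t, HasDerivAt f2 (f3 t) t
  cf3 : Continuous f3
  hg : Causal g0
  hg0 : ∀ t, HasDerivAt g0 (g1 t) t
  hg1 : ∀ t, HasDerivAt g1 (g2 t) t
  hg2 : ∀ t, HasDerivAt g2 (g3 t) t
  hg3 : ∀ t, HasDerivAt g3 (g4 t) t
  cg4 : Continuous g4
  heq : ∀ t z, ⟪q2 t, i z⟫ + ⟪D (v t), D z⟫ = ⟪f0 t, i z⟫ + ⟪g0 t, D z⟫

section evolution

set_option linter.unusedSectionVars false

variable {V H G : Type*} [NormedAddCommGroup V] [NormedSpace ℝ V] [CompleteSpace V]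
    [NormedAddCommGroup H] [InnerProductSpace ℝ H] [CompleteSpace H]
    [NormedAddCommGroup G] [InnerProductSpace ℝ G] [CompleteSpace G]
    {i : V →L[ℝ] H} {D : V →L[ℝ] G}

theorem cont_of_chain {X : Type*} [NormedAddCommGroup X] [NormedSpace ℝ X] {f f' : ℝ → X}
    (h : ∀ t, HasDerivAt f (f' t) t) : Continuous f :=
  continuous_iff_continuousAt.2 fun t => (h t).continuousAt

theorem EvProb.stek {v : ℝ → V} {q1 q2 f0 f1 f2 f3 : ℝ → H}
    {g0 g1 g2 g3 g4 : ℝ → G} (P : EvProb i D v q1 q2 f0 f1 f2 f3 g0 g1 g2 g3 g4)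
    {h : ℝ} (hh : 0 < h) :
    EvProb i D (stek h v) (stek h q1) (stek h q2) (stek h f0) (stek h f1) (stek h f2) (stek h f3)
      (stek h g0) (stek h g1) (stek h g2) (stek h g3) (stek h g4) where
  cv := stek_continuous h P.cv
  hv := stek_causal hh P.hv
  hq1 := by
    have : (fun τ => i (_root_.stek h v τ)) = _root_.stek h (fun τ => i (v τ)) :=
      funext fun τ => stek_clm h i P.cv τ
    rw [this]
    exact stek_comm h P.hq1 (cont_of_chain P.hq2)
  hq2 := stek_comm h P.hq2 P.cq2
  cq2 := stek_continuous h P.cq2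
  hf0 := stek_comm h P.hf0 (cont_of_chain P.hf1)
  hf1 := stek_comm h P.hf1 (cont_of_chain P.hf2)
  hf2 := stek_comm h P.hf2 P.cf3
  cf3 := stek_continuous h P.cf3
  hg := stek_causal hh P.hg
  hg0 := stek_comm h P.hg0 (cont_of_chain P.hg1)
  hg1 := stek_comm h P.hg1 (cont_of_chain P.hg2)
  hg2 := stek_comm h P.hg2 (cont_of_chain P.hg3)
  hg3 := stek_comm h P.hg3 P.cg4
  cg4 := stek_continuous h P.cg4
  heq := by
    intro t z
    have cf := cont_of_chain P.hf0
    have cg := cont_of_chain P.hg0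
    have e1 : ∀ x : H, ⟪x, i z⟫ = innerSL ℝ (i z) x := fun x => by
      rw [innerSL_apply_apply, real_inner_comm]
    have e2 : ∀ x : G, ⟪x, D z⟫ = innerSL ℝ (D z) x := fun x => by
      rw [innerSL_apply_apply, real_inner_comm]
    rw [e1, e1, e2, e2, stek_clm h _ P.cq2, stek_clm h _ cf, stek_clm h _ cg, stek_clm h D P.cv,
      stek_clm h (innerSL ℝ (D z)) (show Continuous fun τ => D (v τ) from D.continuous.comp P.cv)]
    simp only [_root_.stek]
    have cV := P.cv
    have cq := P.cq2
    rw [← smul_add, ← smul_add, ← intervalIntegral.integral_add, ← intervalIntegral.integral_add]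
    · congr 1
      refine intervalIntegral.integral_congr fun τ _ => ?_
      have := P.heq τ z
      rw [e1, e1, e2, e2] at this
      exact this
    all_goals apply Continuous.intervalIntegrable; fun_prop

theorem aux_diff_eq {x2 x3 x0 x1 : ℝ → V} {f f' : ℝ → H} {g g' : ℝ → G}
    (h2 : ∀ t, HasDerivAt x2 (x3 t) t) (h0 : ∀ t, HasDerivAt x0 (x1 t) t)
    (hf : ∀ t, HasDerivAt f (f' t) t) (hg : ∀ t, HasDerivAt g (g' t) t)
    (heq : ∀ t z, ⟪i (x2 t), i z⟫ + ⟪D (x0 t), D z⟫ = ⟪f t, i z⟫ + ⟪g t, D z⟫) :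
    ∀ t z, ⟪i (x3 t), i z⟫ + ⟪D (x1 t), D z⟫ = ⟪f' t, i z⟫ + ⟪g' t, D z⟫ := by
  intro t z
  have a1 : HasDerivAt (fun τ => i (x2 τ)) (i (x3 t)) t := i.hasFDerivAt.comp_hasDerivAt t (h2 t)
  have a2 : HasDerivAt (fun τ => D (x0 τ)) (D (x1 t)) t := D.hasFDerivAt.comp_hasDerivAt t (h0 t)
  have L := (a1.inner ℝ (hasDerivAt_const t (i z))).add (a2.inner ℝ (hasDerivAt_const t (D z)))
  have R := ((hf t).inner ℝ (hasDerivAt_const t (i z))).add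
    ((hg t).inner ℝ (hasDerivAt_const t (D z)))
  have := L.unique (R.congr_of_eventuallyEq (Filter.Eventually.of_forall fun τ => heq τ z))
  simpa using this

theorem aux_chain {X : Type*} [NormedAddCommGroup X] [NormedSpace ℝ X] {f : ℝ → X} {n : ℕ}
    (hf : ContDiff ℝ n f) {m : ℕ} (hm : m < n) (t : ℝ) :
    HasDerivAt (iteratedDeriv m f) (iteratedDeriv (m + 1) f t) t := by
  rw [iteratedDeriv_succ]
  exact (hf.differentiable_iteratedDeriv m (by exact_mod_cast hm) t).hasDerivAt

theorem aux_est (m : ℕ) : ∀ n, n + m = 5 → ∀ {v : ℝ → V} {q1 q2 f0 f1 f2 f3 : ℝ → H}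
    {g0 g1 g2 g3 g4 : ℝ → G} (_ : EvProb i D v q1 q2 f0 f1 f2 f3 g0 g1 g2 g3 g4)
    (_ : ContDiff ℝ n v) {k t : ℝ} (_ : 0 < k) (_ : 0 ≤ t),
    ∀ s ≤ t, ‖chi k (fun τ => i (v τ)) q2 s‖ ≤
        20 * (2 * ((∫ τ in (0:ℝ)..t, ‖f3 τ‖) + 2 * ∫ τ in (0:ℝ)..t, ‖g4 τ‖)) * k ^ 2 ∧
      (0 ≤ s → s ≤ k → ‖chi k (fun τ => i (v τ)) q2 s‖ ≤
        20 * (2 * ((∫ τ in (0:ℝ)..t, ‖f3 τ‖) + 2 * ∫ τ in (0:ℝ)..t, ‖g4 τ‖)) * s ^ 2) := by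
  induction m with
  | zero =>
    intro n hn v q1 q2 f0 f1 f2 f3 g0 g1 g2 g3 g4 P hv k t hk ht
    obtain rfl : n = 5 := by omega
    have d : ∀ m < 5, ∀ t, HasDerivAt (iteratedDeriv m v) (iteratedDeriv (m + 1) v t) t :=
      fun m hm t => aux_chain hv hm t
    have d0 := d 0 (by norm_num)
    have d1 := d 1 (by norm_num)
    have d2 := d 2 (by norm_num)
    have d3 := d 3 (by norm_num)
    have d4 := d 4 (by norm_num)
    simp only [Nat.reduceAdd] at d1 d2 d3 d4
    rw [iteratedDeriv_zero, zero_add] at d0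
    have id : ∀ {x x' : ℝ → V}, (∀ t, HasDerivAt x (x' t) t) →
      ∀ t, HasDerivAt (fun τ => i (x τ)) (i (x' t)) t :=
      fun hx t => i.hasFDerivAt.comp_hasDerivAt t (hx t)
    have e1 : q1 = fun τ => i (iteratedDeriv 1 v τ) :=
      funext fun τ => (P.hq1 τ).unique (id d0 τ)
    have e2 : q2 = fun τ => i (iteratedDeriv 2 v τ) := by
      funext τ
      have := P.hq2 τ
      rw [e1] at this
      exact this.unique (id d1 τ)
    have E0 := P.heq
    rw [e2] at E0
    have E1 := aux_diff_eq d2 d0 P.hf0 P.hg0 E0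
    have E2 := aux_diff_eq d3 d1 P.hf1 P.hg1 E1
    have E3 := aux_diff_eq d4 d2 P.hf2 P.hg2 E2
    have c1 := aux_causal_deriv P.hv d0
    have c2 := aux_causal_deriv c1 d1
    have c3 := aux_causal_deriv c2 d2
    have cg1 := aux_causal_deriv P.hg P.hg0
    have cg2 := aux_causal_deriv cg1 P.hg1
    have cg3 := aux_causal_deriv cg2 P.hg2
    have en := aux_energy i D d3 d4 P.hg3 P.cf3 P.cg4 c3 cg3 E3 (t := t)
    rw [e2]
    refine aux_chi_bound (fun τ hτ => by simp [P.hv τ hτ]) (id d0) (id d1) (id d2) (id d3) ?_ hk en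
    exact (norm_nonneg _).trans (en 0 le_rfl ht)
  | succ m ih =>
    intro n hn v q1 q2 f0 f1 f2 f3 g0 g1 g2 g3 g4 P hv k t hk ht s hs
    have I := fun (h : ℝ) (hh : 0 < h) =>
      ih (n + 1) (by omega) (P.stek hh) (stek_contDiff h hv) hk ht s hs
    have lR : Filter.Tendsto (fun h =>
        20 * (2 * ((∫ τ in (0:ℝ)..t, ‖stek h f3 τ‖) + 2 * ∫ τ in (0:ℝ)..t, ‖stek h g4 τ‖)))
        (nhdsWithin 0 (Set.Ioi 0)) (nhds
        (20 * (2 * ((∫ τ in (0:ℝ)..t, ‖f3 τ‖) + 2 * ∫ τ in (0:ℝ)..t, ‖g4 τ‖)))) :=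
      (((stek_integral_tendsto P.cf3 t ht).add
        ((stek_integral_tendsto P.cg4 t ht).const_mul 2)).const_mul 2).const_mul 20
    have tv : ∀ τ, Filter.Tendsto (fun h => i (stek h v τ)) (nhdsWithin 0 (Set.Ioi 0))
        (nhds (i (v τ))) := fun τ => (i.continuous.tendsto _).comp (stek_tendsto P.cv τ)
    have tq : ∀ τ, Filter.Tendsto (fun h => stek h q2 τ) (nhdsWithin 0 (Set.Ioi 0))
        (nhds (q2 τ)) := fun τ => stek_tendsto P.cq2 τ
    have lL : Filter.Tendsto (fun h => ‖chi k (fun τ => i (stek h v τ)) (stek h q2) s‖)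
        (nhdsWithin 0 (Set.Ioi 0)) (nhds ‖chi k (fun τ => i (v τ)) q2 s‖) := by
      simp only [aux_chi_eq]
      exact (((((tv s).sub ((tv _).const_smul 2)).add (tv _)).const_smul _).sub
        ((((tq s).add ((tq _).const_smul 2)).add (tq _)).const_smul _)).norm
    constructor
    · refine le_of_tendsto_of_tendsto lL (lR.mul_const _) ?_
      filter_upwards [self_mem_nhdsWithin] with h hh
      exact (I h hh).1
    · intro h0 h1
      refine le_of_tendsto_of_tendsto lL (lR.mul_const _) ?_
      filter_upwards [self_mem_nhdsWithin] with h hh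
      exact (I h hh).2 h0 h1

end evolution

/-- Riesz representation through a map bounded below. -/
theorem aux_riesz {X Y : Type*} [NormedAddCommGroup X] [NormedSpace ℝ X] [CompleteSpace X]
    [NormedAddCommGroup Y] [InnerProductSpace ℝ Y] [CompleteSpace Y] (J : X →L[ℝ] Y)
    {c : ℝ} (hJ : ∀ x, ‖x‖ ≤ c * ‖J x‖) :
    ∃ R : (X →L[ℝ] ℝ) →L[ℝ] Y, ∀ ℓ x, ⟪R ℓ, J x⟫ = ℓ x := by
  have hal : AntilipschitzWith c.toNNReal J := by
    apply AddMonoidHomClass.antilipschitz_of_bound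
    intro x
    refine (hJ x).trans (mul_le_mul_of_nonneg_right (Real.le_coe_toNNReal c) (norm_nonneg _))
  have hcl : IsClosed (Set.range J) := hal.isClosed_range J.uniformContinuous
  let e := J.equivRange hal.injective hcl
  have hcl' : IsClosed ((J.range : Submodule ℝ Y) : Set Y) := hcl
  have : CompleteSpace (J.range) := hcl'.completeSpace_coe
  let K := J.range
  let A : (X →L[ℝ] ℝ) →L[ℝ] (K →L[ℝ] ℝ) :=
    (ContinuousLinearMap.compL ℝ K X ℝ).flip (e.symm : K →L[ℝ] X)
  let T : (K →L[ℝ] ℝ) →L[ℝ] K :=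
    { toFun := fun a => (InnerProductSpace.toDual ℝ K).symm a
      map_add' := fun a b => by simp
      map_smul' := fun a b => by simp
      cont := (InnerProductSpace.toDual ℝ K).symm.continuous }
  refine ⟨K.subtypeL.comp (T.comp A), fun ℓ x => ?_⟩
  have h1 : J x = ((e x : K) : Y) := rfl
  rw [h1]
  have h2 : ⟪T (A ℓ), e x⟫ = A ℓ (e x) := InnerProductSpace.toDual_symm_apply
  calc _ = ⟪T (A ℓ), e x⟫ := rfl
    _ = _ := h2
    _ = _ := by simp [A]

theorem aux_right_inverse {X Y F : Type*} [NormedAddCommGroup X] [NormedSpace ℝ X] [CompleteSpace X]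
    [NormedAddCommGroup Y] [InnerProductSpace ℝ Y] [CompleteSpace Y]
    [NormedAddCommGroup F] [NormedSpace ℝ F] [CompleteSpace F] (J : X →L[ℝ] Y)
    {c : ℝ} (hJ : ∀ x, ‖x‖ ≤ c * ‖J x‖) (S : X →L[ℝ] F) (hS : Function.Surjective S) :
    ∃ R : F →L[ℝ] X, ∀ y, S (R y) = y := by
  have hal : AntilipschitzWith c.toNNReal J := by
    apply AddMonoidHomClass.antilipschitz_of_bound
    intro x
    refine (hJ x).trans (mul_le_mul_of_nonneg_right (Real.le_coe_toNNReal c) (norm_nonneg _))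
  have hcl : IsClosed (Set.range J) := hal.isClosed_range J.uniformContinuous
  let e := J.equivRange hal.injective hcl
  have hcl' : IsClosed ((J.range : Submodule ℝ Y) : Set Y) := hcl
  have : CompleteSpace (J.range) := hcl'.completeSpace_coe
  let K := J.range
  let S' : K →L[ℝ] F := S.comp (e.symm : K →L[ℝ] X)
  let N : Submodule ℝ K := S'.ker
  have : CompleteSpace N := S'.isClosed_ker.completeSpace_coe
  let Q : Nᗮ →L[ℝ] F := S'.comp Nᗮ.subtypeL
  have hinj : Q.ker = ⊥ := by
    rw [LinearMap.ker_eq_bot']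
    intro x hx
    have h1 : (x : K) ∈ N := hx
    have h2 := x.2 (x : K) h1
    rw [inner_self_eq_zero] at h2
    exact Subtype.ext h2
  have hsur : Q.range = ⊤ := by
    rw [LinearMap.range_eq_top]
    intro y
    obtain ⟨x, hx⟩ := hS y
    obtain ⟨a, ha, b, hb, hab⟩ := N.exists_add_mem_mem_orthogonal (e x)
    refine ⟨⟨b, hb⟩, ?_⟩
    have h3 : S' (e x) = y := by simp [S', hx]
    rw [hab, map_add, show S' a = 0 from ha, zero_add] at h3
    exact h3
  let E := ContinuousLinearEquiv.ofBijective Q hinj hsur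
  refine ⟨((e.symm : K →L[ℝ] X).comp Nᗮ.subtypeL).comp (E.symm : F →L[ℝ] Nᗮ), fun y => ?_⟩
  exact ContinuousLinearEquiv.ofBijective_apply_symm_apply Q hinj hsur y

theorem aux_core {W H G Hp Hm : Type*} [NormedAddCommGroup W] [NormedSpace ℝ W] [CompleteSpace W]
    [NormedAddCommGroup H] [InnerProductSpace ℝ H] [CompleteSpace H]
    [NormedAddCommGroup G] [InnerProductSpace ℝ G] [CompleteSpace G]
    [NormedAddCommGroup Hp] [NormedSpace ℝ Hp] [CompleteSpace Hp]
    [NormedAddCommGroup Hm] [NormedSpace ℝ Hm] [CompleteSpace Hm]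
    (i : W →L[ℝ] H) (D : W →L[ℝ] G) (P : Hm →L[ℝ] H) (Q : Hm →L[ℝ] G) (L : Hp →L[ℝ] W)
    (V : Submodule ℝ W) (hV : IsClosed (V : Set W)) {β0 : ℝ → Hp} {β1 : ℝ → Hm}
    (hβ0 : ContDiff ℝ (5 : ℕ) β0) (hβ1 : ContDiff ℝ (4 : ℕ) β1) (cβ0 : Causal β0) (cβ1 : Causal β1)
    {y yk : ℝ → W} {q1 q2 : ℝ → H} (cy : Continuous y) (hy : Causal y) (hyk : Causal yk)
    (hq1 : ∀ t, HasDerivAt (fun τ => i (y τ)) (q1 t) t) (hq2 : ∀ t, HasDerivAt q1 (q2 t) t)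
    (cq2 : Continuous q2) (myV : ∀ t, y t - L (β0 t) ∈ V) (mykV : ∀ t, yk t - L (β0 t) ∈ V)
    (heq : ∀ t, ∀ z ∈ V, ⟪q2 t, i z⟫ + ⟪D (y t), D z⟫ = ⟪P (β1 t), i z⟫ + ⟪Q (β1 t), D z⟫)
    {k : ℝ} (hk : 0 < k)
    (heqk : ∀ t, ∀ z ∈ V, ⟪dquot k (dquot k (fun τ => i (yk τ))) t, i z⟫
      + ⟪D (amean k (amean k yk) t), D z⟫
      = ⟪P (amean k (amean k β1) t), i z⟫ + ⟪Q (amean k (amean k β1) t), D z⟫)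
    {t : ℝ} (ht : 0 ≤ t) :
    ‖i (y t) - i (yk t)‖ ≤
      20 * (2 * ‖P‖ + 3 * ‖i.comp L‖ + 4 * ‖Q‖ + 4 * ‖D.comp L‖) *
        ((∫ τ in (0:ℝ)..t, ‖iteratedDeriv 4 β0 τ‖) + (∫ τ in (0:ℝ)..t, ‖iteratedDeriv 5 β0 τ‖)
        + (∫ τ in (0:ℝ)..t, ‖iteratedDeriv 3 β1 τ‖) + (∫ τ in (0:ℝ)..t, ‖iteratedDeriv 4 β1 τ‖))
        * k ^ 2 * t ^ 2 := by
  have : CompleteSpace V := hV.completeSpace_coe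
  have cd0 : ∀ m ≤ 5, Continuous (iteratedDeriv m β0) := fun m hm =>
    hβ0.continuous_iteratedDeriv m (by exact_mod_cast hm)
  have cd1 : ∀ m ≤ 4, Continuous (iteratedDeriv m β1) := fun m hm =>
    hβ1.continuous_iteratedDeriv m (by exact_mod_cast hm)
  have d0 : ∀ m < 5, ∀ t, HasDerivAt (iteratedDeriv m β0) (iteratedDeriv (m + 1) β0 t) t :=
    fun m hm t => aux_chain hβ0 hm t
  have d1 : ∀ m < 4, ∀ t, HasDerivAt (iteratedDeriv m β1) (iteratedDeriv (m + 1) β1 t) t :=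
    fun m hm t => aux_chain hβ1 hm t
  let iL := i.comp L
  let DL := D.comp L
  have dL : ∀ m < 5, ∀ t, HasDerivAt (fun τ => iL (iteratedDeriv m β0 τ))
      (iL (iteratedDeriv (m + 1) β0 t)) t :=
    fun m hm t => iL.hasFDerivAt.comp_hasDerivAt t (d0 m hm t)
  have dDL : ∀ m < 5, ∀ t, HasDerivAt (fun τ => DL (iteratedDeriv m β0 τ))
      (DL (iteratedDeriv (m + 1) β0 t)) t :=
    fun m hm t => DL.hasFDerivAt.comp_hasDerivAt t (d0 m hm t)
  have dP : ∀ m < 4, ∀ t, HasDerivAt (fun τ => P (iteratedDeriv m β1 τ))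
      (P (iteratedDeriv (m + 1) β1 t)) t :=
    fun m hm t => P.hasFDerivAt.comp_hasDerivAt t (d1 m hm t)
  have dQ : ∀ m < 4, ∀ t, HasDerivAt (fun τ => Q (iteratedDeriv m β1 τ))
      (Q (iteratedDeriv (m + 1) β1 t)) t :=
    fun m hm t => Q.hasFDerivAt.comp_hasDerivAt t (d1 m hm t)
  let v : ℝ → V := fun τ => ⟨y τ - L (β0 τ), myV τ⟩
  let iV : V →L[ℝ] H := i.comp V.subtypeL
  let DV : V →L[ℝ] G := D.comp V.subtypeL
  let f : ℕ → ℝ → H := fun j τ => P (iteratedDeriv j β1 τ) - iL (iteratedDeriv (j + 2) β0 τ)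
  let g : ℕ → ℝ → G := fun j τ => Q (iteratedDeriv j β1 τ) - DL (iteratedDeriv j β0 τ)
  have hf : ∀ j < 3, ∀ t, HasDerivAt (f j) (f (j + 1) t) t := fun j hj t =>
    (dP j (by omega) t).sub (dL (j + 2) (by omega) t)
  have hg : ∀ j < 4, ∀ t, HasDerivAt (g j) (g (j + 1) t) t := fun j hj t =>
    (dQ j (by omega) t).sub (dDL j (by omega) t)
  have z0 : iteratedDeriv 0 β0 = β0 := iteratedDeriv_zero
  have z1 : iteratedDeriv 0 β1 = β1 := iteratedDeriv_zero
  have prob : EvProb iV DV v (fun τ => q1 τ - iL (iteratedDeriv 1 β0 τ))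
      (fun τ => q2 τ - iL (iteratedDeriv 2 β0 τ)) (f 0) (f 1) (f 2) (f 3)
      (g 0) (g 1) (g 2) (g 3) (g 4) :=
    { cv := (cy.sub (L.continuous.comp hβ0.continuous)).subtype_mk _
      hv := fun τ hτ => Subtype.ext (by simp [v, hy τ hτ, cβ0 τ hτ])
      hq1 := fun τ => by
        have := (hq1 τ).sub (dL 0 (by norm_num) τ)
        simp only [z0] at this
        refine this.congr_of_eventuallyEq (Filter.Eventually.of_forall fun s => ?_)
        simp [iV, v, iL]
      hq2 := fun τ => (hq2 τ).sub (dL 1 (by norm_num) τ)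
      cq2 := cq2.sub (iL.continuous.comp (cd0 2 (by norm_num)))
      hf0 := hf 0 (by norm_num)
      hf1 := hf 1 (by norm_num)
      hf2 := hf 2 (by norm_num)
      cf3 := (P.continuous.comp (cd1 3 (by norm_num))).sub (iL.continuous.comp (cd0 5 (by norm_num)))
      hg := fun τ hτ => by simp [g, cβ0 τ hτ, cβ1 τ hτ]
      hg0 := hg 0 (by norm_num)
      hg1 := hg 1 (by norm_num)
      hg2 := hg 2 (by norm_num)
      hg3 := hg 3 (by norm_num)
      cg4 := (Q.continuous.comp (cd1 4 (by norm_num))).sub (DL.continuous.comp (cd0 4 (by norm_num)))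
      heq := by
        intro τ z
        have h := heq τ z.1 z.2
        simp only [f, g, z0, z1, iV, DV, v, iL, DL, ContinuousLinearMap.comp_apply,
          Submodule.subtypeL_apply, map_sub, inner_sub_left, zero_add] at h ⊢
        linarith }
  have est := aux_est 5 0 (by norm_num) prob (contDiff_zero.2 prob.cv) hk ht
  set I4 := ∫ τ in (0:ℝ)..t, ‖iteratedDeriv 4 β0 τ‖ with hI4
  set I5 := ∫ τ in (0:ℝ)..t, ‖iteratedDeriv 5 β0 τ‖ with hI5
  set J3 := ∫ τ in (0:ℝ)..t, ‖iteratedDeriv 3 β1 τ‖ with hJ3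
  set J4 := ∫ τ in (0:ℝ)..t, ‖iteratedDeriv 4 β1 τ‖ with hJ4
  have nI4 : 0 ≤ I4 := intervalIntegral.integral_nonneg ht fun _ _ => norm_nonneg _
  have nI5 : 0 ≤ I5 := intervalIntegral.integral_nonneg ht fun _ _ => norm_nonneg _
  have nJ3 : 0 ≤ J3 := intervalIntegral.integral_nonneg ht fun _ _ => norm_nonneg _
  have nJ4 : 0 ≤ J4 := intervalIntegral.integral_nonneg ht fun _ _ => norm_nonneg _
  have c04 := cd0 4 (by norm_num)
  have c05 := cd0 5 (by norm_num)
  have c13 := cd1 3 (by norm_num)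
  have c14 := cd1 4 (by norm_num)
  have bf : (∫ τ in (0:ℝ)..t, ‖f 3 τ‖) ≤ ‖P‖ * J3 + ‖iL‖ * I5 := by
    rw [hJ3, hI5, ← intervalIntegral.integral_const_mul, ← intervalIntegral.integral_const_mul,
      ← intervalIntegral.integral_add (by apply Continuous.intervalIntegrable; fun_prop)
        (by apply Continuous.intervalIntegrable; fun_prop)]
    refine intervalIntegral.integral_mono_on ht (prob.cf3.norm.intervalIntegrable _ _)
      (by apply Continuous.intervalIntegrable; fun_prop) fun τ _ => ?_
    exact (norm_sub_le _ _).trans (add_le_add (P.le_opNorm _) (iL.le_opNorm _))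
  have bg : (∫ τ in (0:ℝ)..t, ‖g 4 τ‖) ≤ ‖Q‖ * J4 + ‖DL‖ * I4 := by
    rw [hJ4, hI4, ← intervalIntegral.integral_const_mul, ← intervalIntegral.integral_const_mul,
      ← intervalIntegral.integral_add (by apply Continuous.intervalIntegrable; fun_prop)
        (by apply Continuous.intervalIntegrable; fun_prop)]
    refine intervalIntegral.integral_mono_on ht (prob.cg4.norm.intervalIntegrable _ _)
      (by apply Continuous.intervalIntegrable; fun_prop) fun τ _ => ?_
    exact (norm_sub_le _ _).trans (add_le_add (Q.le_opNorm _) (DL.le_opNorm _))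
  -- the lifting part
  have k0 := aux_causal_deriv cβ0 (z0 ▸ d0 0 (by norm_num))
  have k1 := aux_causal_deriv k0 (d0 1 (by norm_num))
  have k2 := aux_causal_deriv k1 (d0 2 (by norm_num))
  have k3 := aux_causal_deriv k2 (d0 3 (by norm_num))
  have bL : ∀ r, 0 ≤ r → r ≤ t → ‖iL (iteratedDeriv 4 β0 r)‖ ≤ ‖iL‖ * I5 := fun r h0 h1 =>
    (iL.le_opNorm _).trans (mul_le_mul_of_nonneg_left
      (aux_ftc_norm k3 (d0 4 (by norm_num)) c05 r h0 h1) (norm_nonneg _))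
  have dL0 := dL 0 (by norm_num)
  simp only [z0, zero_add] at dL0
  have chiL := aux_chi_bound (fun τ hτ => by simp [cβ0 τ hτ]) dL0 (dL 1 (by norm_num))
    (dL 2 (by norm_num)) (dL 3 (by norm_num)) (by positivity) hk bL
  -- total
  set B0 := 20 * (2 * ‖P‖ + 3 * ‖i.comp L‖ + 4 * ‖Q‖ + 4 * ‖D.comp L‖) * (I4 + I5 + J3 + J4) with hB0
  have hB : 20 * (2 * ((∫ τ in (0:ℝ)..t, ‖f 3 τ‖) + 2 * ∫ τ in (0:ℝ)..t, ‖g 4 τ‖))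
      + 20 * (‖iL‖ * I5) ≤ B0 := by
    have hP := norm_nonneg P
    have hQ := norm_nonneg Q
    have hiL := norm_nonneg iL
    have hDL := norm_nonneg DL
    change _ ≤ 20 * (2 * ‖P‖ + 3 * ‖iL‖ + 4 * ‖Q‖ + 4 * ‖DL‖) * (I4 + I5 + J3 + J4)
    have : 20 * (2 * ((‖P‖ * J3 + ‖iL‖ * I5) + 2 * (‖Q‖ * J4 + ‖DL‖ * I4))) + 20 * (‖iL‖ * I5)
      ≤ 20 * (2 * ‖P‖ + 3 * ‖iL‖ + 4 * ‖Q‖ + 4 * ‖DL‖) * (I4 + I5 + J3 + J4) := by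
      rw [← sub_nonneg]
      ring_nf
      positivity
    linarith
  have hsplit : ∀ τ, chi k (fun τ => i (y τ)) q2 τ
      = chi k (fun τ => iV (v τ)) (fun τ => q2 τ - iL (iteratedDeriv 2 β0 τ)) τ
        + chi k (fun τ => iL (β0 τ)) (fun τ => iL (iteratedDeriv 2 β0 τ)) τ := by
    intro τ
    have : ∀ τ, iV (v τ) = i (y τ) - iL (β0 τ) := fun τ => by simp [iV, v, iL]
    simp only [aux_chi_eq, this]
    module
  let e : ℝ → V := fun τ => ⟨y τ - yk τ, by
    have := V.sub_mem (myV τ) (mykV τ)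
    rwa [sub_sub_sub_cancel_right] at this⟩
  have he : Causal e := fun τ hτ => Subtype.ext (by simp [e, hy τ hτ, hyk τ hτ])
  have hB00 : 0 ≤ B0 := by rw [hB0]; positivity
  have fin := aux_discrete iV DV he (X := chi k (fun τ => i (y τ)) q2) hk hB00 (t := t) ?_ ?_ ?_ ht
  · simpa [iV, e] using fin
  · intro τ z
    have h0 := heq τ z.1 z.2
    have h1 := heq (τ - k) z.1 z.2
    have h2 := heq (τ - k - k) z.1 z.2
    have h3 := heqk τ z.1 z.2
    simp only [chi, e, iV, DV, dquot, amean, ContinuousLinearMap.comp_apply,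
      Submodule.subtypeL_apply,
      map_sub, map_add, map_smul, inner_sub_left,
      inner_add_left, real_inner_smul_left] at h0 h1 h2 h3 ⊢
    linarith
  · intro τ hτ
    rw [hsplit]
    refine (norm_add_le _ _).trans ((add_le_add (est τ hτ).1 (chiL τ hτ).1).trans ?_)
    rw [← add_mul]
    gcongr
  · intro τ hτ h0 h1
    rw [hsplit]
    refine (norm_add_le _ _).trans
      ((add_le_add ((est τ hτ).2 h0 h1) ((chiL τ hτ).2 h0 h1)).trans ?_)
    rw [← add_mul]
    gcongr

/-- pairing of two operators into the Hilbert sum -/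
def prOp {X A B : Type*} [NormedAddCommGroup X] [NormedSpace ℝ X]
    [NormedAddCommGroup A] [InnerProductSpace ℝ A] [NormedAddCommGroup B] [InnerProductSpace ℝ B]
    (S : X →L[ℝ] A) (T : X →L[ℝ] B) : X →L[ℝ] WithLp 2 (A × B) :=
  ((WithLp.prodContinuousLinearEquiv 2 ℝ A B).symm : (A × B) →L[ℝ] WithLp 2 (A × B)).comp (S.prod T)

theorem prOp_apply {X A B : Type*} [NormedAddCommGroup X] [NormedSpace ℝ X]
    [NormedAddCommGroup A] [InnerProductSpace ℝ A] [NormedAddCommGroup B] [InnerProductSpace ℝ B]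
    (S : X →L[ℝ] A) (T : X →L[ℝ] B) (x : X) : prOp S T x = WithLp.toLp 2 (S x, T x) := rfl

theorem toLp_inner {A B : Type*}
    [NormedAddCommGroup A] [InnerProductSpace ℝ A] [NormedAddCommGroup B] [InnerProductSpace ℝ B]
    (a a' : A) (b b' : B) :
    ⟪(WithLp.toLp 2 (a, b) : WithLp 2 (A × B)), WithLp.toLp 2 (a', b')⟫ = ⟪a, a'⟫ + ⟪b, b'⟫ := by
  simp [WithLp.prod_inner_apply]

theorem toLp_norm_sq {A B : Type*}
    [NormedAddCommGroup A] [InnerProductSpace ℝ A] [NormedAddCommGroup B] [InnerProductSpace ℝ B]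
    (a : A) (b : B) :
    ‖(WithLp.toLp 2 (a, b) : WithLp 2 (A × B))‖ ^ 2 = ‖a‖ ^ 2 + ‖b‖ ^ 2 := by
  simp [WithLp.prod_norm_sq_eq_of_L2]

theorem toLp_hasDerivAt {A B : Type*}
    [NormedAddCommGroup A] [InnerProductSpace ℝ A] [NormedAddCommGroup B] [InnerProductSpace ℝ B]
    {a a' : ℝ → A} {b b' : ℝ → B} (ha : ∀ t, HasDerivAt a (a' t) t)
    (hb : ∀ t, HasDerivAt b (b' t) t) (t : ℝ) :
    HasDerivAt (fun τ => (WithLp.toLp 2 (a τ, b τ) : WithLp 2 (A × B)))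
      (WithLp.toLp 2 (a' t, b' t)) t :=
  ((WithLp.prodContinuousLinearEquiv 2 ℝ A B).symm :
    (A × B) →L[ℝ] WithLp 2 (A × B)).hasFDerivAt.comp_hasDerivAt t ((ha t).prodMk (hb t))

theorem aux_iter {X : Type*} [NormedAddCommGroup X] [NormedSpace ℝ X] (f : ℝ → X) (m n : ℕ) :
    iteratedDeriv m (iteratedDeriv n f) = iteratedDeriv (m + n) f := by
  simp only [iteratedDeriv_eq_iterate, Function.iterate_add_apply]

theorem aux_bound_below {X : Type*} [NormedAddCommGroup X]
    {x : X} {c n a b : ℝ} (hc : 0 < c) (h : ‖x‖ ^ 2 = a ^ 2 + b ^ 2)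
    (hn : c * (a ^ 2 + b ^ 2) ≤ n ^ 2) (hn0 : 0 ≤ n) : ‖x‖ ≤ √(c⁻¹) * n := by
  have : ‖x‖ ^ 2 ≤ (√(c⁻¹) * n) ^ 2 := by
    rw [mul_pow, Real.sq_sqrt (by positivity), h, ← div_eq_inv_mul, le_div_iff₀ hc]
    linarith
  exact (sq_le_sq₀ (by positivity) (by positivity)).1 this

set_option maxHeartbeats 4000000 in
/-- Fully discrete $L^2$ estimate (Theorem 4.2, estimate (4.6)) for trapezoidal-rule time
discretization of the semidiscrete problem (2.10). -/
theorem fully_discrete_L2_estimate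
    {L2Ω L2Ωv L2s L2sv Hp Hm H1Ω H1s Hdiv : Type*}
    [NormedAddCommGroup L2Ω] [InnerProductSpace ℝ L2Ω] [CompleteSpace L2Ω]
    [NormedAddCommGroup L2Ωv] [InnerProductSpace ℝ L2Ωv] [CompleteSpace L2Ωv]
    [NormedAddCommGroup L2s] [InnerProductSpace ℝ L2s] [CompleteSpace L2s]
    [NormedAddCommGroup L2sv] [InnerProductSpace ℝ L2sv] [CompleteSpace L2sv]
    [NormedAddCommGroup Hp] [InnerProductSpace ℝ Hp] [CompleteSpace Hp]
    [NormedAddCommGroup Hm] [InnerProductSpace ℝ Hm] [CompleteSpace Hm]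
    [NormedAddCommGroup H1Ω] [NormedSpace ℝ H1Ω] [CompleteSpace H1Ω]
    [NormedAddCommGroup H1s] [NormedSpace ℝ H1s] [CompleteSpace H1s]
    [NormedAddCommGroup Hdiv] [NormedSpace ℝ Hdiv] [CompleteSpace Hdiv]
    (ι : H1Ω →L[ℝ] L2Ω) (grad : H1Ω →L[ℝ] L2Ωv) (γ : H1Ω →L[ℝ] Hp)
    (ιs : H1s →L[ℝ] L2s) (grads : H1s →L[ℝ] L2sv) (γm γp : H1s →L[ℝ] Hp)
    (ιdiv : Hdiv →L[ℝ] L2sv) (divs : Hdiv →L[ℝ] L2s) (γνm γνp : Hdiv →L[ℝ] Hm)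
    (dpair : Hm →L[ℝ] Hp →L[ℝ] ℝ)
    (cinv cinv2 : L2Ω →L[ℝ] L2Ω) (kap khalf : L2Ωv →L[ℝ] L2Ωv)
    (hGreen : ∀ (v : Hdiv) (w : H1s),
      ⟪divs v, ιs w⟫ + ⟪ιdiv v, grads w⟫
        = dpair (γνm v) (γm w) - dpair (γνp v) (γp w))
    (htrace_surj : ∀ a b : Hp, ∃ w : H1s, γm w = a ∧ γp w = b)
    (hH1Ωnorm : ∀ u : H1Ω, ‖u‖ ^ 2 = ‖ι u‖ ^ 2 + ‖grad u‖ ^ 2)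
    (hH1snorm : ∀ u : H1s, ‖u‖ ^ 2 = ‖ιs u‖ ^ 2 + ‖grads u‖ ^ 2)
    (hHdivnorm : ∀ v : Hdiv, ‖v‖ ^ 2 = ‖ιdiv v‖ ^ 2 + ‖divs v‖ ^ 2)
    (hcinv : ∀ x y : L2Ω, ⟪cinv2 x, y⟫ = ⟪cinv x, cinv y⟫)
    (hκhalf : ∀ x y : L2Ωv, ⟪kap x, y⟫ = ⟪khalf x, khalf y⟫)
    (c0 κ0 : ℝ) (hc0 : 0 < c0) (hκ0 : 0 < κ0)
    (hc2pos : ∀ x : L2Ω, c0 * ‖x‖ ^ 2 ≤ ⟪cinv2 x, x⟫)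
    (hκpos : ∀ x : L2Ωv, κ0 * ‖x‖ ^ 2 ≤ ⟪kap x, x⟫) :
    ∃ C : ℝ, 0 < C ∧
      ∀ (Uh : Submodule ℝ H1Ω) (Xh : Submodule ℝ Hm) (Yh : Submodule ℝ Hp),
        FiniteDimensional ℝ Uh → FiniteDimensional ℝ Xh → FiniteDimensional ℝ Yh →
        ∀ k : ℝ, 0 < k →
        ∀ (β0 : ℝ → Hp) (β1 : ℝ → Hm), WP 6 β0 → WP 5 β1 →
        ∀ (uh : ℝ → H1Ω) (us : ℝ → H1s) (wst : ℝ → Hdiv),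
          Solves210 ι grad γ ιs grads γm γp ιdiv divs γνm γνp dpair cinv2 kap
            Uh Xh Yh β0 β1 uh us wst →
        ∀ (ukh : ℝ → H1Ω) (uks : ℝ → H1s) (wkst : ℝ → Hdiv),
          Solves43 ι grad γ ιs grads γm γp ιdiv divs γνm γνp dpair cinv2 kap
            Uh Xh Yh k β0 β1 ukh uks wkst →
        ∀ t : ℝ, 0 ≤ t →
          ‖ι (uh t) - ι (ukh t)‖ + ‖ιs (us t) - ιs (uks t)‖
          ≤ C * k ^ 2 * t ^ 2 * (Hfun 3 (iteratedDeriv 3 β0) t + Hfun 2 (iteratedDeriv 3 β1) t) := by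
  -- operators
  let i : (H1Ω × H1s) →L[ℝ] WithLp 2 (L2Ω × L2s) :=
    prOp ((cinv.comp ι).comp (ContinuousLinearMap.fst ℝ H1Ω H1s))
      (ιs.comp (ContinuousLinearMap.snd ℝ H1Ω H1s))
  let D : (H1Ω × H1s) →L[ℝ] WithLp 2 (L2Ωv × L2sv) :=
    prOp ((khalf.comp grad).comp (ContinuousLinearMap.fst ℝ H1Ω H1s))
      (grads.comp (ContinuousLinearMap.snd ℝ H1Ω H1s))
  have hi : ∀ w, i w = WithLp.toLp 2 (cinv (ι w.1), ιs w.2) := fun w => rfl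
  have hD : ∀ w, D w = WithLp.toLp 2 (khalf (grad w.1), grads w.2) := fun w => rfl
  let Jm : (H1Ω × H1s) →L[ℝ] WithLp 2 (WithLp 2 (L2Ω × L2s) × WithLp 2 (L2Ωv × L2sv)) := prOp i D
  have hJm : ∀ w, Jm w = WithLp.toLp 2 (i w, D w) := fun w => rfl
  have hcn : ∀ x, c0 * ‖x‖ ^ 2 ≤ ‖cinv x‖ ^ 2 := fun x => by
    have := hc2pos x
    rwa [hcinv, real_inner_self_eq_norm_sq] at this
  have hkn : ∀ x, κ0 * ‖x‖ ^ 2 ≤ ‖khalf x‖ ^ 2 := fun x => by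
    have := hκpos x
    rwa [hκhalf, real_inner_self_eq_norm_sq] at this
  obtain ⟨m, hm, hm1, hmc, hmκ⟩ : ∃ m : ℝ, 0 < m ∧ m ≤ 1 ∧ m ≤ c0 ∧ m ≤ κ0 :=
    ⟨min 1 (min c0 κ0), by positivity, min_le_left _ _,
      (min_le_right _ _).trans (min_le_left _ _), (min_le_right _ _).trans (min_le_right _ _)⟩
  have hbelow : ∀ w, ‖w‖ ≤ √(m⁻¹) * ‖Jm w‖ := by
    intro w
    have hsq : ‖Jm w‖ ^ 2 = ‖cinv (ι w.1)‖ ^ 2 + ‖ιs w.2‖ ^ 2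
        + (‖khalf (grad w.1)‖ ^ 2 + ‖grads w.2‖ ^ 2) := by
      rw [hJm, toLp_norm_sq, hi, hD, toLp_norm_sq, toLp_norm_sq]
    have a1 := hcn (ι w.1)
    have a2 := hkn (grad w.1)
    have b1 := mul_le_mul_of_nonneg_right hmc (sq_nonneg ‖ι w.1‖)
    have b2 := mul_le_mul_of_nonneg_right hmκ (sq_nonneg ‖grad w.1‖)
    have b3 := mul_le_mul_of_nonneg_right hm1 (sq_nonneg ‖ιs w.2‖)
    have b4 := mul_le_mul_of_nonneg_right hm1 (sq_nonneg ‖grads w.2‖)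
    have p1 := sq_nonneg ‖ι w.1‖
    have p2 := sq_nonneg ‖grad w.1‖
    have p3 := sq_nonneg ‖ιs w.2‖
    have p4 := sq_nonneg ‖grads w.2‖
    have p5 := sq_nonneg ‖cinv (ι w.1)‖
    have p6 := sq_nonneg ‖khalf (grad w.1)‖
    refine max_le ?_ ?_
    · refine aux_bound_below hm (hH1Ωnorm w.1) ?_ (norm_nonneg _)
      rw [hsq]; linarith
    · refine aux_bound_below hm (hH1snorm w.2) ?_ (norm_nonneg _)
      rw [hsq]; linarith
  obtain ⟨R, hR⟩ := aux_riesz Jm hbelow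
  obtain ⟨L', hL'⟩ := aux_right_inverse Jm hbelow
    ((γm.comp (ContinuousLinearMap.snd ℝ H1Ω H1s)).prod
      (γp.comp (ContinuousLinearMap.snd ℝ H1Ω H1s))) (by
      rintro ⟨a, b⟩
      obtain ⟨w, h1, h2⟩ := htrace_surj a b
      exact ⟨(0, w), by simp [h1, h2]⟩)
  -- the data functional
  let F : Hm →L[ℝ] ((H1Ω × H1s) →L[ℝ] ℝ) :=
    ((ContinuousLinearMap.compL ℝ (H1Ω × H1s) Hp ℝ).flip
      (γ.comp (ContinuousLinearMap.fst ℝ H1Ω H1s))).comp dpair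
  have hF : ∀ b w, F b w = dpair b (γ w.1) := fun b w => rfl
  let e2 := WithLp.prodContinuousLinearEquiv 2 ℝ (WithLp 2 (L2Ω × L2s)) (WithLp 2 (L2Ωv × L2sv))
  let PQ : Hm →L[ℝ] (WithLp 2 (L2Ω × L2s) × WithLp 2 (L2Ωv × L2sv)) :=
    (e2 : _ →L[ℝ] (WithLp 2 (L2Ω × L2s) × WithLp 2 (L2Ωv × L2sv))).comp (R.comp F)
  let P : Hm →L[ℝ] WithLp 2 (L2Ω × L2s) := (ContinuousLinearMap.fst ℝ _ _).comp PQ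
  let Q : Hm →L[ℝ] WithLp 2 (L2Ωv × L2sv) := (ContinuousLinearMap.snd ℝ _ _).comp PQ
  have hPQ : ∀ b w, ⟪P b, i w⟫ + ⟪Q b, D w⟫ = dpair b (γ w.1) := by
    intro b w
    have := hR (F b) w
    rw [hF, hJm, WithLp.prod_inner_apply] at this
    exact this
  -- the lifting
  let L : Hp →L[ℝ] (H1Ω × H1s) :=
    (ContinuousLinearMap.inr ℝ H1Ω H1s).comp ((ContinuousLinearMap.snd ℝ H1Ω H1s).comp
      (L'.comp ((-ContinuousLinearMap.id ℝ Hp).prod (-ContinuousLinearMap.id ℝ Hp))))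
  have hL1 : ∀ b, (L b).1 = 0 := fun b => rfl
  have hL2 : ∀ b, γm (L b).2 = -b := fun b => congrArg Prod.fst (hL' (-b, -b))
  have hL3 : ∀ b, γp (L b).2 = -b := fun b => congrArg Prod.snd (hL' (-b, -b))
  set K := 20 * (2 * ‖P‖ + 3 * ‖i.comp L‖ + 4 * ‖Q‖ + 4 * ‖D.comp L‖) with hK
  have hK0 : 0 ≤ K := by rw [hK]; positivity
  refine ⟨(√(c0⁻¹) + 1) * (K + 1), by positivity, ?_⟩
  intro Uh Xh Yh fU fX fY k hk β0 β1 hβ0 hβ1 uh us wst S1 ukh uks wkst S2 t ht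
  obtain ⟨s1, s2, s3, s4, s5, s6, s7, s8, s9, s10, s11, s12, s13, s14, s15⟩ := S1
  obtain ⟨r1, r2, r3, r4, r9, r10, r11, r12, r13, r14, r15⟩ := S2
  let V : Submodule ℝ (H1Ω × H1s) :=
    { carrier := {w | w.1 ∈ Uh ∧ γm w.2 - γp w.2 ∈ Yh ∧ ∀ μ ∈ Xh, dpair μ (γ w.1 - γp w.2) = 0}
      zero_mem' := by simp
      add_mem' := by
        rintro a b ⟨a1, a2, a3⟩ ⟨b1, b2, b3⟩
        refine ⟨Uh.add_mem a1 b1, ?_, fun μ hμ => ?_⟩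
        · have := Yh.add_mem a2 b2
          simp only [Prod.snd_add, map_add]
          convert this using 1
          abel
        · have h1 := a3 μ hμ
          have h2 := b3 μ hμ
          simp only [Prod.fst_add, Prod.snd_add, map_add, map_sub] at h1 h2 ⊢
          linarith
      smul_mem' := by
        rintro c a ⟨a1, a2, a3⟩
        refine ⟨Uh.smul_mem c a1, ?_, fun μ hμ => ?_⟩
        · have := Yh.smul_mem c a2
          rwa [smul_sub, ← map_smul, ← map_smul] at this
        · have h1 := a3 μ hμ
          simp only [Prod.smul_fst, Prod.smul_snd, map_smul, ← smul_sub, h1, smul_zero] }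
  have memV : ∀ w, w ∈ V ↔ (w.1 ∈ Uh ∧ γm w.2 - γp w.2 ∈ Yh ∧
      ∀ μ ∈ Xh, dpair μ (γ w.1 - γp w.2) = 0) := fun w => Iff.rfl
  have hV : IsClosed (V : Set (H1Ω × H1s)) := by
    have c1 : IsClosed {w : H1Ω × H1s | w.1 ∈ Uh} :=
      (Uh.closed_of_finiteDimensional).preimage continuous_fst
    have c2 : IsClosed {w : H1Ω × H1s | γm w.2 - γp w.2 ∈ Yh} :=
      (Yh.closed_of_finiteDimensional).preimage
        (f := fun w : H1Ω × H1s => γm w.2 - γp w.2) (by fun_prop)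
    have c3 : IsClosed {w : H1Ω × H1s | ∀ μ ∈ Xh, dpair μ (γ w.1 - γp w.2) = 0} := by
      simp only [Set.setOf_forall]
      refine isClosed_iInter fun μ => isClosed_iInter fun _ => ?_
      exact isClosed_eq (by fun_prop) continuous_const
    exact c1.inter (c2.inter c3)
  have lift_mem : ∀ (a : H1Ω) (b : H1s) (c : Hp), a ∈ Uh → γm b - γp b ∈ Yh →
      (∀ μ ∈ Xh, dpair μ (γ a - γp b - c) = 0) → (a, b) - L c ∈ V := by
    intro a b c h1 h2 h3
    rw [memV]
    simp only [Prod.fst_sub, Prod.snd_sub, hL1, sub_zero, map_sub, hL2, hL3]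
    refine ⟨h1, by simpa using h2, fun μ hμ => ?_⟩
    have := h3 μ hμ
    simp only [map_sub, map_neg] at this ⊢
    linarith
  -- coupling through Green's identity
  have coupling : ∀ (v : Hdiv) (z : H1Ω × H1s), z ∈ V → (∀ ψ ∈ Yh, dpair (γνm v) ψ = 0) →
      γνm v - γνp v ∈ Xh →
      ⟪divs v, ιs z.2⟫ + ⟪ιdiv v, grads z.2⟫ = dpair (γνm v - γνp v) (γ z.1) := by
    intro v z hz h1 h2
    obtain ⟨z1, z2, z3⟩ := (memV z).1 hz
    rw [hGreen]
    have e1 := h1 _ z2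
    have e3 := z3 _ h2
    simp only [map_sub, ContinuousLinearMap.sub_apply] at e1 e3 ⊢
    linarith
  have hdu : ∀ t, HasDerivAt (fun τ => ι (uh τ)) (iteratedDeriv 1 (fun τ => ι (uh τ)) t) t := by
    have := aux_chain (n := 2) (f := fun τ => ι (uh τ)) (by exact_mod_cast s5) (m := 0) (by norm_num)
    rwa [iteratedDeriv_zero] at this
  have hdu2 := aux_chain (n := 2) (f := fun τ => ι (uh τ)) (by exact_mod_cast s5) (m := 1)
    (by norm_num)
  have hds : ∀ t, HasDerivAt (fun τ => ιs (us τ)) (iteratedDeriv 1 (fun τ => ιs (us τ)) t) t := by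
    have := aux_chain (n := 2) (f := fun τ => ιs (us τ)) (by exact_mod_cast s6) (m := 0) (by norm_num)
    rwa [iteratedDeriv_zero] at this
  have hds2 := aux_chain (n := 2) (f := fun τ => ιs (us τ)) (by exact_mod_cast s6) (m := 1)
    (by norm_num)
  have hcd : ∀ {x x' : ℝ → L2Ω}, (∀ t, HasDerivAt x (x' t) t) →
      ∀ t, HasDerivAt (fun τ => cinv (x τ)) (cinv (x' t)) t :=
    fun hx t => cinv.hasFDerivAt.comp_hasDerivAt t (hx t)
  have core := aux_core i D P Q L V hV hβ0.1 hβ1.1 hβ0.2.1 hβ1.2.1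
    (y := fun τ => (uh τ, us τ)) (yk := fun τ => (ukh τ, uks τ))
    (q1 := fun τ => WithLp.toLp 2 (cinv (iteratedDeriv 1 (fun τ => ι (uh τ)) τ),
      iteratedDeriv 1 (fun τ => ιs (us τ)) τ))
    (q2 := fun τ => WithLp.toLp 2 (cinv (iteratedDeriv 2 (fun τ => ι (uh τ)) τ),
      iteratedDeriv 2 (fun τ => ιs (us τ)) τ))
    (s7.prodMk s8) (fun τ hτ => by simp [s2 τ hτ, s3 τ hτ])
    (fun τ hτ => by simp [r2 τ hτ, r3 τ hτ])
    (toLp_hasDerivAt (hcd hdu) hds) (toLp_hasDerivAt (hcd hdu2) hds2)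
    (by
      have c1 := s5.continuous_iteratedDeriv 2 (by norm_num)
      have c2 := s6.continuous_iteratedDeriv 2 (by norm_num)
      exact (WithLp.prodContinuousLinearEquiv 2 ℝ L2Ω L2s).symm.continuous.comp
        ((cinv.continuous.comp c1).prodMk c2))
    (fun τ => lift_mem _ _ _ (s1 τ) (s12 τ) (s15 τ))
    (fun τ => lift_mem _ _ _ (r1 τ) (r12 τ) (r15 τ))
    (by
      intro τ z hz
      rw [hPQ]
      have h1 := s10 τ z.1 hz.1
      have h2 := coupling (wst τ) z hz (s14 τ) (s13 τ)
      rw [s9 τ, ← s11 τ] at h2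
      rw [hi, hD, hD, toLp_inner, toLp_inner, ← hcinv, ← hκhalf]
      linarith)
    hk
    (by
      intro τ z hz
      rw [hPQ]
      have h1 := r10 τ z.1 hz.1
      have h2 := coupling (amean k (amean k wkst) τ) z hz
        (fun ψ hψ => by
          simp only [amean, map_add, map_smul, ContinuousLinearMap.add_apply,
            ContinuousLinearMap.smul_apply, r14 _ ψ hψ]
          simp)
        (by
          have := Xh.smul_mem 2⁻¹ (Xh.add_mem
            (Xh.smul_mem 2⁻¹ (Xh.add_mem (r13 τ) (r13 (τ - k))))
            (Xh.smul_mem 2⁻¹ (Xh.add_mem (r13 (τ - k)) (r13 (τ - k - k)))))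
          convert this using 1
          simp only [amean, map_add, map_smul]
          module)
      have m1 : divs (amean k (amean k wkst) τ) = amean k (amean k (fun τ => divs (wkst τ))) τ := by
        simp only [amean, map_add, map_smul]
      have m2 : ιdiv (amean k (amean k wkst) τ) = grads (amean k (amean k uks) τ) := by
        simp only [amean, map_add, map_smul, r9]
      have m3 : γνm (amean k (amean k wkst) τ) - γνp (amean k (amean k wkst) τ)
          = amean k (amean k (fun τ => γνm (wkst τ) - γνp (wkst τ))) τ := by
        simp only [amean, map_add, map_smul]
        module
      rw [m1, m2, m3, ← r11 τ] at h2
      have n1 : dquot k (dquot k (fun τ => i (ukh τ, uks τ))) τ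
          = WithLp.toLp 2 (cinv (dquot k (dquot k (fun τ => ι (ukh τ))) τ),
            dquot k (dquot k (fun τ => ιs (uks τ))) τ) := by
        simp only [hi, dquot, map_sub, map_smul]
        rfl
      have n2 : amean k (amean k (fun τ => (ukh τ, uks τ))) τ
          = (amean k (amean k ukh) τ, amean k (amean k uks) τ) := rfl
      rw [n1, n2, hi, hD, hD, toLp_inner, toLp_inner, ← hcinv, ← hκhalf]
      linarith)
    ht
  -- conclusion
  have hnn0 : ∀ j, 0 ≤ ∫ τ in (0:ℝ)..t, ‖iteratedDeriv j (iteratedDeriv 3 β0) τ‖ := fun j =>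
    intervalIntegral.integral_nonneg ht fun _ _ => norm_nonneg _
  have hnn1 : ∀ j, 0 ≤ ∫ τ in (0:ℝ)..t, ‖iteratedDeriv j (iteratedDeriv 3 β1) τ‖ := fun j =>
    intervalIntegral.integral_nonneg ht fun _ _ => norm_nonneg _
  have hH : (∫ τ in (0:ℝ)..t, ‖iteratedDeriv 4 β0 τ‖) + (∫ τ in (0:ℝ)..t, ‖iteratedDeriv 5 β0 τ‖)
        + (∫ τ in (0:ℝ)..t, ‖iteratedDeriv 3 β1 τ‖) + (∫ τ in (0:ℝ)..t, ‖iteratedDeriv 4 β1 τ‖)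
      ≤ Hfun 3 (iteratedDeriv 3 β0) t + Hfun 2 (iteratedDeriv 3 β1) t := by
    have a0 := hnn0 0
    have a3 := hnn0 3
    have b2 := hnn1 2
    simp only [Hfun, Finset.sum_range_succ, Finset.sum_range_zero, aux_iter, Nat.reduceAdd]
      at a0 a3 b2 ⊢
    linarith
  set N := Hfun 3 (iteratedDeriv 3 β0) t + Hfun 2 (iteratedDeriv 3 β1) t with hN
  have core2 : ‖i (uh t, us t) - i (ukh t, uks t)‖ ≤ K * N * k ^ 2 * t ^ 2 := by
    refine core.trans ?_
    gcongr
  have hN0 : 0 ≤ N := by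
    refine le_trans ?_ hH
    have h : ∀ (X : Type _) [NormedAddCommGroup X] (f : ℝ → X), 0 ≤ ∫ τ in (0:ℝ)..t, ‖f τ‖ :=
      fun X _ f => intervalIntegral.integral_nonneg ht fun _ _ => norm_nonneg _
    have := h _ (iteratedDeriv 4 β0)
    have := h _ (iteratedDeriv 5 β0)
    have := intervalIntegral.integral_nonneg (μ := MeasureTheory.volume) ht
      fun τ _ => norm_nonneg (iteratedDeriv 3 β1 τ)
    have := intervalIntegral.integral_nonneg (μ := MeasureTheory.volume) ht
      fun τ _ => norm_nonneg (iteratedDeriv 4 β1 τ)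
    linarith
  set Z := ‖i (uh t, us t) - i (ukh t, uks t)‖ with hZ
  have hZ0 : 0 ≤ Z := norm_nonneg _
  have hZsq : Z ^ 2 = ‖cinv (ι (uh t) - ι (ukh t))‖ ^ 2 + ‖ιs (us t) - ιs (uks t)‖ ^ 2 := by
    rw [hZ, ← map_sub, hi, toLp_norm_sq]
    simp only [Prod.fst_sub, Prod.snd_sub, map_sub]
  have f1 : ‖ι (uh t) - ι (ukh t)‖ ≤ √(c0⁻¹) * Z := by
    have h := hcn (ι (uh t) - ι (ukh t))
    have : ‖ι (uh t) - ι (ukh t)‖ ^ 2 ≤ (√(c0⁻¹) * Z) ^ 2 := by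
      rw [mul_pow, Real.sq_sqrt (by positivity), ← div_eq_inv_mul, le_div_iff₀ hc0, hZsq]
      nlinarith [sq_nonneg ‖ιs (us t) - ιs (uks t)‖]
    exact (sq_le_sq₀ (by positivity) (by positivity)).1 this
  have f2 : ‖ιs (us t) - ιs (uks t)‖ ≤ Z := by
    have : ‖ιs (us t) - ιs (uks t)‖ ^ 2 ≤ Z ^ 2 := by
      rw [hZsq]
      nlinarith [sq_nonneg ‖cinv (ι (uh t) - ι (ukh t))‖]
    exact (sq_le_sq₀ (by positivity) (by positivity)).1 this
  calc _ ≤ (√(c0⁻¹) + 1) * Z := by linarith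
    _ ≤ (√(c0⁻¹) + 1) * (K * N * k ^ 2 * t ^ 2) := by gcongr
    _ ≤ (√(c0⁻¹) + 1) * ((K + 1) * N * k ^ 2 * t ^ 2) := by
      gcongr
      linarith
    _ = _ := by ring
end
end

section
/- (Fully discrete boundary trace estimate.) Under the hypotheses β₀ ∈ W_+^6(H^{1/2}(Γ)) and β₁ ∈ W_+^5(H^{-1/2}(Γ)), the error e_k^⋆ := u^⋆ − u_k^⋆ of the trapezoidal-rule time discretization of the semidiscrete problem satisfies, for all t ≥ 0, ‖α_k²⟦γe_k^⋆(t)⟧‖_{1/2,Γ} ≤ C k² max{t,t²}(H₃(β₀⁽³⁾,t|H^{1/2}(Γ)) + H₂(β₁⁽³⁾,t|H^{-1/2}(Γ))), with C independent of t, k, and the discrete spaces. Note that ⟦γe_k^⋆⟧ = φ_k^h − φ^h is the error in the boundary unknown φ. -/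
open scoped RealInnerProductSpace

noncomputable section

section CoreCalc

variable {E : Type*} [NormedAddCommGroup E] [NormedSpace ℝ E]

lemma aux_mv {f f' : ℝ → E} (hf : ∀ x, HasDerivAt f (f' x) x) {c x C : ℝ}
    (h : ∀ y ∈ Set.uIcc c x, ‖f' y‖ ≤ C) : ‖f x - f c‖ ≤ C * |x - c| := by
  have := (convex_uIcc c x).norm_image_sub_le_of_norm_hasDerivWithin_le
    (f := f) (f' := f') (C := C) (x := c) (y := x)
    (fun y _ => (hf y).hasDerivWithinAt) h Set.left_mem_uIcc Set.right_mem_uIcc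
  simpa [Real.norm_eq_abs] using this

lemma aux_mv0 {f f' : ℝ → E} (hf : ∀ x, HasDerivAt f (f' x) x) {c x C : ℝ} (hc : f c = 0)
    (h : ∀ y ∈ Set.uIcc c x, ‖f' y‖ ≤ C) : ‖f x‖ ≤ C * |x - c| := by
  have := aux_mv hf h
  rwa [hc, sub_zero] at this

lemma aux_abs {c x y : ℝ} (hy : y ∈ Set.uIcc c x) : |y - c| ≤ |x - c| :=
  Set.abs_sub_left_of_mem_uIcc hy

lemma aux_t3 {g g1 g2 g3 : ℝ → E} (h0 : ∀ x, HasDerivAt g (g1 x) x)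
    (h1 : ∀ x, HasDerivAt g1 (g2 x) x) (h2 : ∀ x, HasDerivAt g2 (g3 x) x)
    {c x ω : ℝ} (hω : 0 ≤ ω) (z0 : g c = 0) (z1 : g1 c = 0) (z2 : g2 c = 0)
    (h : ∀ y ∈ Set.uIcc c x, ‖g3 y‖ ≤ ω) :
    ‖g2 x‖ ≤ ω * |x - c| ∧ ‖g x‖ ≤ ω * |x - c| ^ 3 := by
  have sub : ∀ y ∈ Set.uIcc c x, Set.uIcc c y ⊆ Set.uIcc c x := fun y hy =>
    Set.uIcc_subset_uIcc Set.left_mem_uIcc hy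
  have b2 : ∀ y ∈ Set.uIcc c x, ‖g2 y‖ ≤ ω * |x - c| := fun y hy => by
    refine (aux_mv0 h2 z2 (fun w hw => h w (sub y hy hw))).trans ?_
    exact mul_le_mul_of_nonneg_left (aux_abs hy) hω
  have b1 : ∀ y ∈ Set.uIcc c x, ‖g1 y‖ ≤ ω * |x - c| * |x - c| := fun y hy => by
    refine (aux_mv0 h1 z1 (fun w hw => b2 w (sub y hy hw))).trans ?_
    exact mul_le_mul_of_nonneg_left (aux_abs hy) (by positivity)
  refine ⟨b2 x Set.right_mem_uIcc, (aux_mv0 h0 z0 b1).trans (le_of_eq (by ring))⟩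

/-- The consistency operator. -/
def Lop (k : ℝ) (g g2 : ℝ → E) (s : ℝ) : E :=
  dquot k (dquot k g) s - amean k (amean k g2) s

lemma dquot2_eq (k : ℝ) (g : ℝ → E) (s : ℝ) :
    dquot k (dquot k g) s = (k⁻¹ ^ 2) • (g s - (2:ℝ) • g (s - k) + g (s - 2 * k)) := by
  have : s - k - k = s - 2 * k := by ring
  simp only [dquot, this]; module

lemma amean2_eq (k : ℝ) (g : ℝ → E) (s : ℝ) :
    amean k (amean k g) s = (4⁻¹ : ℝ) • (g s + (2:ℝ) • g (s - k) + g (s - 2 * k)) := by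
  have : s - k - k = s - 2 * k := by ring
  simp only [amean, this]; module

lemma Lop_bound {g g1 g2 g3 : ℝ → E} (h0 : ∀ x, HasDerivAt g (g1 x) x)
    (h1 : ∀ x, HasDerivAt g1 (g2 x) x) (h2 : ∀ x, HasDerivAt g2 (g3 x) x)
    {k s ω : ℝ} (hk : 0 < k) (hω : 0 ≤ ω)
    (h : ∀ y ∈ Set.Icc (s - 2 * k) s, ‖g3 y - g3 (s - k)‖ ≤ ω) :
    ‖Lop k g g2 s‖ ≤ 3 * k * ω := by
  set c := s - k with hc
  let f : ℝ → E := fun x => g x - g c - (x - c) • g1 c - ((x - c) ^ 2 / 2) • g2 c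
    - ((x - c) ^ 3 / 6) • g3 c
  let f1 : ℝ → E := fun x => g1 x - g1 c - (x - c) • g2 c - ((x - c) ^ 2 / 2) • g3 c
  let f2 : ℝ → E := fun x => g2 x - g2 c - (x - c) • g3 c
  let f3 : ℝ → E := fun x => g3 x - g3 c
  have l1 : ∀ x, HasDerivAt (fun x : ℝ => x - c) 1 x := fun x => (hasDerivAt_id x).sub_const c
  have l2 : ∀ x, HasDerivAt (fun x : ℝ => (x - c) ^ 2 / 2) (x - c) x := fun x => by
    have := ((l1 x).pow 2).div_const 2
    exact this.congr_deriv (by simp)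
  have l3 : ∀ x, HasDerivAt (fun x : ℝ => (x - c) ^ 3 / 6) ((x - c) ^ 2 / 2) x := fun x => by
    have := ((l1 x).pow 3).div_const 6
    exact this.congr_deriv (by simp; ring)
  have d0 : ∀ x, HasDerivAt f (f1 x) x := fun x => by
    have := ((((h0 x).sub_const (g c)).sub ((l1 x).smul_const (g1 c))).sub
      ((l2 x).smul_const (g2 c))).sub ((l3 x).smul_const (g3 c))
    exact this.congr_deriv (by simp [f1])
  have d1 : ∀ x, HasDerivAt f1 (f2 x) x := fun x => by
    have := (((h1 x).sub_const (g1 c)).sub ((l1 x).smul_const (g2 c))).sub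
      ((l2 x).smul_const (g3 c))
    exact this.congr_deriv (by simp [f2])
  have d2 : ∀ x, HasDerivAt f2 (f3 x) x := fun x => by
    have := ((h2 x).sub_const (g2 c)).sub ((l1 x).smul_const (g3 c))
    exact this.congr_deriv (by simp [f3])
  have key : ∀ x ∈ Set.Icc (s - 2 * k) s, |x - c| = k → ‖f2 x‖ ≤ ω * k ∧ ‖f x‖ ≤ ω * k ^ 3 := by
    intro x hx hxc
    have := aux_t3 d0 d1 d2 (c := c) (x := x) hω (by simp [f]) (by simp [f1]) (by simp [f2])
      (fun y hy => h y (by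
        have : Set.uIcc c x ⊆ Set.Icc (s - 2 * k) s :=
          Set.ordConnected_Icc.uIcc_subset ⟨by linarith, by linarith⟩ hx
        exact this hy))
    rwa [hxc] at this
  have ks := key s ⟨by linarith, le_rfl⟩ (by rw [hc]; simp [abs_of_pos hk])
  have kl := key (s - 2 * k) ⟨le_rfl, by linarith⟩ (by
    rw [hc, show s - 2 * k - (s - k) = -k by ring, abs_neg, abs_of_pos hk])
  have e1 : Lop k g g2 s = (k⁻¹ ^ 2) • (f s + f (s - 2 * k))
      - (4⁻¹ : ℝ) • (f2 s + f2 (s - 2 * k)) := by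
    have a1 : s - c = k := by rw [hc]; ring
    have a2 : s - 2 * k - c = -k := by rw [hc]; ring
    rw [Lop, dquot2_eq, amean2_eq]
    simp only [f, f2, a1, a2, ← hc]
    have : k⁻¹ ^ 2 * k ^ 2 = 1 := by field_simp
    match_scalars <;> field_simp <;> ring
  have hkk : k⁻¹ ^ 2 * k ^ 3 = k := by field_simp
  rw [e1]
  calc _ ≤ k⁻¹ ^ 2 * (ω * k ^ 3 + ω * k ^ 3) + 4⁻¹ * (ω * k + ω * k) := by
        refine (norm_sub_le _ _).trans (add_le_add ?_ ?_)
        · rw [norm_smul, Real.norm_of_nonneg (by positivity)]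
          exact mul_le_mul_of_nonneg_left ((norm_add_le _ _).trans (add_le_add ks.2 kl.2))
            (by positivity)
        · rw [norm_smul, Real.norm_of_nonneg (by positivity)]
          exact mul_le_mul_of_nonneg_left ((norm_add_le _ _).trans (add_le_add ks.1 kl.1))
            (by positivity)
    _ = 2 * (k⁻¹ ^ 2 * k ^ 3) * ω + 2⁻¹ * k * ω := by ring
    _ ≤ 3 * k * ω := by rw [hkk]; nlinarith [mul_nonneg hk.le hω]

lemma Lop_bound_causal {g g1 g2 g3 : ℝ → E} (h0 : ∀ x, HasDerivAt g (g1 x) x)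
    (h1 : ∀ x, HasDerivAt g1 (g2 x) x) (h2 : ∀ x, HasDerivAt g2 (g3 x) x)
    (c0 : Causal g) (c1 : Causal g1) (c2 : Causal g2)
    {k s ω : ℝ} (hk : 0 < k) (hω : 0 ≤ ω) (hs : 0 ≤ s) (hsk : s ≤ k)
    (h : ∀ y ∈ Set.Icc 0 s, ‖g3 y‖ ≤ ω) :
    ‖Lop k g g2 s‖ ≤ 3 * s * ω := by
  have := aux_t3 h0 h1 h2 (c := 0) (x := s) hω (c0 0 le_rfl) (c1 0 le_rfl) (c2 0 le_rfl)
    (by rwa [Set.uIcc_of_le hs])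
  rw [sub_zero, abs_of_nonneg hs] at this
  have e1 : Lop k g g2 s = (k⁻¹ ^ 2) • (g s) - (4⁻¹ : ℝ) • (g2 s) := by
    rw [Lop, dquot2_eq, amean2_eq, c0 (s - k) (by linarith), c0 (s - 2 * k) (by linarith),
      c2 (s - k) (by linarith), c2 (s - 2 * k) (by linarith)]
    simp
  have hkk : k⁻¹ ^ 2 * s ^ 3 ≤ s := by
    rw [inv_pow, inv_mul_le_iff₀ (by positivity)]
    nlinarith [mul_le_mul hsk hsk hs hk.le]
  rw [e1]
  calc _ ≤ k⁻¹ ^ 2 * (ω * s ^ 3) + 4⁻¹ * (ω * s) := by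
        refine (norm_sub_le _ _).trans (add_le_add ?_ ?_)
        · rw [norm_smul, Real.norm_of_nonneg (by positivity)]
          exact mul_le_mul_of_nonneg_left this.2 (by positivity)
        · rw [norm_smul, Real.norm_of_nonneg (by positivity)]
          exact mul_le_mul_of_nonneg_left this.1 (by positivity)
    _ = (k⁻¹ ^ 2 * s ^ 3) * ω + 4⁻¹ * (ω * s) := by ring
    _ ≤ 3 * s * ω := by nlinarith [mul_nonneg hs hω, mul_le_mul_of_nonneg_right hkk hω]

lemma dquot_sub_le {f f' : ℝ → E} (hf : ∀ x, HasDerivAt f (f' x) x) {h s ω : ℝ} (hh : 0 < h)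
    (v : E) (H : ∀ y ∈ Set.Icc (s - h) s, ‖f' y - v‖ ≤ ω) : ‖dquot h f s - v‖ ≤ ω := by
  have := aux_mv (f := fun x => f x - x • v) (f' := fun x => f' x - v) (c := s - h) (x := s)
    (C := ω) (fun x => by
      have := (hf x).sub ((hasDerivAt_id x).smul_const v)
      exact this.congr_deriv (by simp)) (by rwa [Set.uIcc_of_le (by linarith)])
  rw [show s - (s - h) = h by ring, abs_of_pos hh] at this
  have e : dquot h f s - v = h⁻¹ • ((f s - s • v) - (f (s - h) - (s - h) • v)) := by
    have : h ≠ 0 := hh.ne'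
    simp only [dquot]
    match_scalars <;> field_simp <;> ring
  rw [e, norm_smul, Real.norm_of_nonneg (by positivity), inv_mul_le_iff₀ hh, mul_comm]
  exact this

lemma hasDerivAt_dquot {f f' : ℝ → E} (hf : ∀ x, HasDerivAt f (f' x) x) (h x : ℝ) :
    HasDerivAt (dquot h f) (dquot h f' x) x := by
  have := ((hf x).sub ((hf (x - h)).comp_sub_const x h)).const_smul h⁻¹
  exact this

lemma hasDerivAt_amean {f f' : ℝ → E} (hf : ∀ x, HasDerivAt f (f' x) x) (h x : ℝ) :
    HasDerivAt (amean h f) (amean h f' x) x := by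
  have := ((hf x).add ((hf (x - h)).comp_sub_const x h)).const_smul (2⁻¹ : ℝ)
  exact this

lemma dquot2_sub_le {g g1 g2 : ℝ → E} (h0 : ∀ x, HasDerivAt g (g1 x) x)
    (h1 : ∀ x, HasDerivAt g1 (g2 x) x) {h s ω : ℝ} (hh : 0 < h)
    (v : E) (H : ∀ y ∈ Set.Icc (s - 2 * h) s, ‖g2 y - v‖ ≤ ω) :
    ‖dquot h (dquot h g) s - v‖ ≤ ω := by
  refine dquot_sub_le (hasDerivAt_dquot h0 h) hh v (fun y hy => ?_)
  refine dquot_sub_le h1 hh v (fun z hz => H z ⟨?_, ?_⟩)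
  · linarith [hy.1, hz.1]
  · linarith [hy.2, hz.2]

lemma amean_norm_le {f : ℝ → E} {k s C : ℝ} (h1 : ‖f s‖ ≤ C) (h2 : ‖f (s - k)‖ ≤ C) :
    ‖amean k f s‖ ≤ C := by
  rw [amean, norm_smul, Real.norm_of_nonneg (by positivity)]
  linarith [norm_add_le (f s) (f (s - k))]

lemma Causal.dquot {f : ℝ → E} (hf : Causal f) {k : ℝ} (hk : 0 ≤ k) : Causal (dquot k f) :=
  fun t ht => by simp [_root_.dquot, hf t ht, hf (t - k) (by linarith)]

lemma Causal.amean {f : ℝ → E} (hf : Causal f) {k : ℝ} (hk : 0 ≤ k) : Causal (amean k f) :=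
  fun t ht => by simp [_root_.amean, hf t ht, hf (t - k) (by linarith)]

lemma cont_dquot {f : ℝ → E} (hf : Continuous f) (k : ℝ) : Continuous (dquot k f) := by
  unfold dquot; fun_prop

lemma cont_amean {f : ℝ → E} (hf : Continuous f) (k : ℝ) : Continuous (amean k f) := by
  unfold amean; fun_prop

end CoreCalc

section CoreEnergy

variable {H K : Type*} [NormedAddCommGroup H] [InnerProductSpace ℝ H]
  [NormedAddCommGroup K] [InnerProductSpace ℝ K]

/-- Abstract second-order evolution problem after subtraction of a lifting. -/
structure Sol (S : Submodule ℝ (H × K)) (m m1 m2 : ℝ → H) (b : ℝ → K) (P p p1 : ℝ → H) :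
    Prop where
  hm : ∀ x, HasDerivAt m (m1 x) x
  hm1 : ∀ x, HasDerivAt m1 (m2 x) x
  hP : ∀ x, HasDerivAt P (p x) x
  hp : ∀ x, HasDerivAt p (p1 x) x
  cp1 : Continuous p1
  cb : Continuous b
  mem : ∀ t, (m t - p t, b t) ∈ S
  eqn : ∀ t, ∀ w ∈ S, ⟪m2 t - p t, w.1⟫ + ⟪b t, w.2⟫ = 0
  zm : Causal m
  zm1 : Causal m1
  zP : Causal P
  zp : Causal p

variable {S : Submodule ℝ (H × K)} {m m1 m2 : ℝ → H} {b : ℝ → K} {P p p1 : ℝ → H}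

lemma Sol.dq (h : Sol S m m1 m2 b P p p1) {k : ℝ} (hk : 0 ≤ k) :
    Sol S (dquot k m) (dquot k m1) (dquot k m2) (dquot k b) (dquot k P) (dquot k p)
      (dquot k p1) where
  hm := hasDerivAt_dquot h.hm k
  hm1 := hasDerivAt_dquot h.hm1 k
  hP := hasDerivAt_dquot h.hP k
  hp := hasDerivAt_dquot h.hp k
  cp1 := cont_dquot h.cp1 k
  cb := cont_dquot h.cb k
  mem t := by
    have := S.smul_mem k⁻¹ (S.sub_mem (h.mem t) (h.mem (t - k)))
    convert this using 1
    ext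
    · simp only [_root_.dquot, Prod.smul_fst, Prod.fst_sub]; module
    · simp only [_root_.dquot, Prod.smul_snd, Prod.snd_sub]
  eqn t w hw := by
    have h1 := h.eqn t w hw
    have h2 := h.eqn (t - k) w hw
    simp only [_root_.dquot, inner_sub_left, inner_smul_left, conj_trivial] at *
    linear_combination k⁻¹ * (h1 - h2)
  zm := h.zm.dquot hk
  zm1 := h.zm1.dquot hk
  zP := h.zP.dquot hk
  zp := h.zp.dquot hk

lemma Sol.am (h : Sol S m m1 m2 b P p p1) {k : ℝ} (hk : 0 ≤ k) :
    Sol S (amean k m) (amean k m1) (amean k m2) (amean k b) (amean k P) (amean k p)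
      (amean k p1) where
  hm := hasDerivAt_amean h.hm k
  hm1 := hasDerivAt_amean h.hm1 k
  hP := hasDerivAt_amean h.hP k
  hp := hasDerivAt_amean h.hp k
  cp1 := cont_amean h.cp1 k
  cb := cont_amean h.cb k
  mem t := by
    have := S.smul_mem (2⁻¹ : ℝ) (S.add_mem (h.mem t) (h.mem (t - k)))
    convert this using 1
    ext
    · simp only [_root_.amean, Prod.smul_fst, Prod.fst_add]; module
    · simp only [_root_.amean, Prod.smul_snd, Prod.snd_add]
  eqn t w hw := by
    have h1 := h.eqn t w hw
    have h2 := h.eqn (t - k) w hw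
    simp only [_root_.amean, inner_sub_left, inner_add_left, inner_smul_left,
      conj_trivial] at *
    linear_combination 2⁻¹ * (h1 + h2)
  zm := h.zm.amean hk
  zm1 := h.zm1.amean hk
  zP := h.zP.amean hk
  zp := h.zp.amean hk

lemma Sol.sub (h : Sol S m m1 m2 b P p p1) {m' m1' m2' : ℝ → H} {b' : ℝ → K}
    {P' p' p1' : ℝ → H} (h' : Sol S m' m1' m2' b' P' p' p1') :
    Sol S (fun t => m t - m' t) (fun t => m1 t - m1' t) (fun t => m2 t - m2' t)
      (fun t => b t - b' t) (fun t => P t - P' t) (fun t => p t - p' t)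
      (fun t => p1 t - p1' t) where
  hm x := (h.hm x).sub (h'.hm x)
  hm1 x := (h.hm1 x).sub (h'.hm1 x)
  hP x := (h.hP x).sub (h'.hP x)
  hp x := (h.hp x).sub (h'.hp x)
  cp1 := h.cp1.sub h'.cp1
  cb := h.cb.sub h'.cb
  mem t := by
    have := S.sub_mem (h.mem t) (h'.mem t)
    convert this using 1
    ext
    · simp only [Prod.fst_sub]; module
    · simp only [Prod.snd_sub]
  eqn t w hw := by
    have h1 := h.eqn t w hw
    have h2 := h'.eqn t w hw
    simp only [inner_sub_left] at *
    linear_combination h1 - h2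
  zm t ht := by simp [h.zm t ht, h'.zm t ht]
  zm1 t ht := by simp [h.zm1 t ht, h'.zm1 t ht]
  zP t ht := by simp [h.zP t ht, h'.zP t ht]
  zp t ht := by simp [h.zp t ht, h'.zp t ht]

lemma Sol.energy [CompleteSpace K] (h : Sol S m m1 m2 b P p p1) {t : ℝ} (ht : 0 ≤ t) :
    ‖m t - p t‖ ≤ ∫ τ in (0:ℝ)..t, ‖P τ - p1 τ‖ := by
  let bh : ℝ → K := fun t => ∫ τ in (0:ℝ)..t, b τ
  have hbh : ∀ x, HasDerivAt bh (b x) x := fun x =>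
    intervalIntegral.integral_hasDerivAt_right (h.cb.intervalIntegrable _ _)
      (h.cb.stronglyMeasurableAtFilter _ _) h.cb.continuousAt
  have cP : Continuous P := continuous_iff_continuousAt.2 fun x => (h.hP x).continuousAt
  have cG : Continuous fun τ => ‖P τ - p1 τ‖ := (cP.sub h.cp1).norm
  have key : ∀ t, ∀ w ∈ S, ⟪m1 t - P t, w.1⟫ + ⟪bh t, w.2⟫ = 0 := by
    intro t w hw
    have hd : ∀ x, HasDerivAt (fun t => ⟪m1 t - P t, w.1⟫ + ⟪bh t, w.2⟫) 0 x := fun x => by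
      have a1 := ((h.hm1 x).sub (h.hP x)).inner ℝ (hasDerivAt_const x w.1)
      have a2 := (hbh x).inner ℝ (hasDerivAt_const x w.2)
      refine (a1.add a2).congr_deriv ?_
      simpa using h.eqn x w hw
    have := is_const_of_deriv_eq_zero (fun x => (hd x).differentiableAt)
      (fun x => (hd x).deriv) t 0
    rw [this]
    simp [bh, h.zm1 0 le_rfl, h.zP 0 le_rfl]
  let n : ℝ → H := fun t => m t - p t
  have hn : ∀ x, HasDerivAt n (m1 x - p1 x) x := fun x => (h.hm x).sub (h.hp x)
  let Ψ : ℝ → ℝ := fun t => ‖n t‖ ^ 2 + ‖bh t‖ ^ 2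
  have hΨ : ∀ x, HasDerivAt Ψ (2 * ⟪P x - p1 x, n x⟫) x := fun x => by
    refine ((hn x).norm_sq.add (hbh x).norm_sq).congr_deriv ?_
    have := key x _ (h.mem x)
    have e : ⟪n x, m1 x - p1 x⟫ = ⟪m1 x - P x, n x⟫ + ⟪P x - p1 x, n x⟫ := by
      rw [real_inner_comm, ← inner_add_left]; congr 1; abel
    rw [e]
    simp only at this
    change ⟪m1 x - P x, n x⟫ + ⟪bh x, b x⟫ = 0 at this
    linear_combination 2 * this
  refine le_of_forall_pos_le_add fun ε hε => ?_
  let F : ℝ → ℝ := fun t => (∫ τ in (0:ℝ)..t, ‖P τ - p1 τ‖) - √(Ψ t + ε ^ 2)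
  have hpos : ∀ x, 0 < Ψ x + ε ^ 2 := fun x => by positivity
  have hF : ∀ x, HasDerivAt F (‖P x - p1 x‖ - (2 * ⟪P x - p1 x, n x⟫) / (2 * √(Ψ x + ε ^ 2))) x :=
    fun x => (intervalIntegral.integral_hasDerivAt_right (cG.intervalIntegrable _ _)
      (cG.stronglyMeasurableAtFilter _ _) cG.continuousAt).sub
      (((hΨ x).add_const (ε ^ 2)).sqrt (hpos x).ne')
  have mono : Monotone F := monotone_of_hasDerivAt_nonneg hF (fun x => by
    have hs : 0 < √(Ψ x + ε ^ 2) := Real.sqrt_pos.2 (hpos x)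
    have hns : ‖n x‖ ≤ √(Ψ x + ε ^ 2) := by
      apply Real.le_sqrt_of_sq_le
      simp only [Ψ]; nlinarith [sq_nonneg ‖bh x‖, sq_nonneg ε]
    simp only [Pi.zero_apply]
    rw [sub_nonneg, div_le_iff₀ (by positivity)]
    have := real_inner_le_norm (P x - p1 x) (n x)
    nlinarith [mul_le_mul_of_nonneg_left hns (norm_nonneg (P x - p1 x))])
  have h0 := mono ht
  have hF0 : F 0 = -ε := by
    simp only [F, Ψ, n, bh, h.zm 0 le_rfl, h.zp 0 le_rfl]
    simp [Real.sqrt_sq hε.le]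
  rw [hF0] at h0
  have hns : ‖n t‖ ≤ √(Ψ t + ε ^ 2) := by
    apply Real.le_sqrt_of_sq_le
    simp only [Ψ]; nlinarith [sq_nonneg ‖bh t‖, sq_nonneg ε]
  simp only [F] at h0
  change ‖n t‖ ≤ _
  linarith

lemma dquot2_tendsto {g g1 g2 : ℝ → H} (h0 : ∀ x, HasDerivAt g (g1 x) x)
    (h1 : ∀ x, HasDerivAt g1 (g2 x) x) (c : Continuous g2) (s : ℝ) :
    Filter.Tendsto (fun h => dquot h (dquot h g) s) (nhdsWithin 0 (Set.Ioi 0)) (nhds (g2 s)) := by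
  rw [Metric.tendsto_nhds]
  intro ε hε
  obtain ⟨δ, hδ, H⟩ := Metric.continuousAt_iff.1 (c.continuousAt (x := s)) (ε / 2) (by positivity)
  have : Set.Ioo (0:ℝ) (δ / 2) ∈ nhdsWithin (0:ℝ) (Set.Ioi 0) := Ioo_mem_nhdsGT (by positivity)
  filter_upwards [this] with h hh
  rw [dist_eq_norm]
  refine (dquot2_sub_le h0 h1 hh.1 (g2 s) (ω := ε / 2) fun y hy => ?_).trans_lt (by linarith)
  rw [← dist_eq_norm]
  refine (H ?_).le
  rw [Real.dist_eq, abs_lt]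
  constructor <;> linarith [hy.1, hy.2, hh.1, hh.2]

lemma Sol.r_step [CompleteSpace K] (sol : Sol S m m1 m2 b P p p1) (cm2 : Continuous m2)
    {p2 p3 p4 : ℝ → H}
    (hp1 : ∀ x, HasDerivAt p1 (p2 x) x) (hp2 : ∀ x, HasDerivAt p2 (p3 x) x)
    (hp3 : ∀ x, HasDerivAt p3 (p4 x) x)
    {k s M : ℝ} (hk : 0 < k) (hs : 0 ≤ s)
    (hM : ∀ y ≤ s, ‖p2 y - p4 y‖ ≤ M) :
    ‖Lop k m m2 s‖ ≤ ‖Lop k p p2 s‖ +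
      ∫ τ in (0:ℝ)..s, ‖Lop k (fun t => P t - p1 t) (fun t => p1 t - p3 t) τ‖ := by
  set G : ℝ → H := fun t => P t - p1 t with hG
  set G2 : ℝ → H := fun t => p1 t - p3 t with hG2
  have dG : ∀ x, HasDerivAt G (p x - p2 x) x := fun x => (sol.hP x).sub (hp1 x)
  have dG1 : ∀ x, HasDerivAt (fun t => p t - p2 t) (G2 x) x := fun x => (sol.hp x).sub (hp2 x)
  have dG2 : ∀ x, HasDerivAt G2 (p2 x - p4 x) x := fun x => (hp1 x).sub (hp3 x)
  have cG : Continuous G := continuous_iff_continuousAt.2 fun x => (dG x).continuousAt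
  have cG2 : Continuous G2 := continuous_iff_continuousAt.2 fun x => (dG2 x).continuousAt
  have cp2 : Continuous p2 := continuous_iff_continuousAt.2 fun x => (hp2 x).continuousAt
  have cL : Continuous fun τ => ‖Lop k G G2 τ‖ :=
    ((cont_dquot (cont_dquot cG k) k).sub (cont_amean (cont_amean cG2 k) k)).norm
  have hM0 : 0 ≤ M := (norm_nonneg _).trans (hM s le_rfl)
  have main : ∀ h > 0, ‖(dquot k (dquot k m) s - amean k (amean k (dquot h (dquot h m))) s)
      - (dquot k (dquot k p) s - amean k (amean k (dquot h (dquot h p))) s)‖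
      ≤ (∫ τ in (0:ℝ)..s, ‖Lop k G G2 τ‖) + s * (M * (2 * h)) := by
    intro h hh
    have E := (((sol.dq hk.le).dq hk.le).sub
      ((((sol.dq hh.le).dq hh.le).am hk.le).am hk.le)).energy hs
    refine E.trans ?_
    have : (∫ τ in (0:ℝ)..s, ‖Lop k G G2 τ‖) + s * (M * (2 * h))
        = ∫ τ in (0:ℝ)..s, (‖Lop k G G2 τ‖ + M * (2 * h)) := by
      rw [intervalIntegral.integral_add (cL.intervalIntegrable _ _)
        (intervalIntegrable_const), intervalIntegral.integral_const]
      simp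
    rw [this]
    have cD : Continuous (dquot h (dquot h G)) := cont_dquot (cont_dquot cG h) h
    have rw1 : ∀ τ, (dquot k (dquot k P) τ - amean k (amean k (dquot h (dquot h P))) τ)
        - (dquot k (dquot k p1) τ - amean k (amean k (dquot h (dquot h p1))) τ)
        = Lop k G G2 τ - amean k (amean k (fun y => dquot h (dquot h G) y - G2 y)) τ := by
      intro τ
      simp only [Lop, dquot, amean, hG]
      module
    simp only [rw1]
    refine intervalIntegral.integral_mono_on hs ?_ ?_ ?_
    · refine Continuous.intervalIntegrable ?_ _ _
      exact (((cont_dquot (cont_dquot cG k) k).sub (cont_amean (cont_amean cG2 k) k)).sub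
        (cont_amean (cont_amean (cD.sub cG2) k) k)).norm
    · exact (cL.add continuous_const).intervalIntegrable _ _
    · intro τ hτ
      refine (norm_sub_le _ _).trans (add_le_add le_rfl ?_)
      have bd : ∀ y ≤ s, ‖dquot h (dquot h G) y - G2 y‖ ≤ M * (2 * h) := by
        intro y hy
        refine dquot2_sub_le dG dG1 hh _ fun z hz => ?_
        have := aux_mv dG2 (c := y) (x := z) (C := M) (fun u hu => hM u (by
          rw [Set.uIcc_of_ge hz.2] at hu; exact hu.2.trans hy))
        refine this.trans (mul_le_mul_of_nonneg_left ?_ hM0)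
        rw [abs_le]; constructor <;> linarith [hz.1, hz.2]
      have := hτ.2
      refine amean_norm_le (amean_norm_le (bd _ ?_) (bd _ ?_)) (amean_norm_le (bd _ ?_) (bd _ ?_))
        <;> linarith
  have t1 : ∀ {g g1 g2 : ℝ → H}, (∀ x, HasDerivAt g (g1 x) x) → (∀ x, HasDerivAt g1 (g2 x) x) →
      Continuous g2 → Filter.Tendsto
        (fun h => dquot k (dquot k g) s - amean k (amean k (dquot h (dquot h g))) s)
        (nhdsWithin 0 (Set.Ioi 0)) (nhds (Lop k g g2 s)) := by
    intro g g1 g2 a0 a1 c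
    refine Filter.Tendsto.sub tendsto_const_nhds ?_
    have T := fun τ => dquot2_tendsto a0 a1 c τ
    exact (((((T s).add (T (s - k))).const_smul (2⁻¹:ℝ)).add
      (((T (s - k)).add (T (s - k - k))).const_smul (2⁻¹:ℝ))).const_smul (2⁻¹:ℝ))
  have lim1 := ((t1 sol.hm sol.hm1 cm2).sub (t1 sol.hp hp1 cp2)).norm
  have lim2 : Filter.Tendsto (fun h => (∫ τ in (0:ℝ)..s, ‖Lop k G G2 τ‖) + s * (M * (2 * h)))
      (nhdsWithin 0 (Set.Ioi 0)) (nhds ((∫ τ in (0:ℝ)..s, ‖Lop k G G2 τ‖) + s * (M * (2 * 0)))) :=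
    Filter.Tendsto.mono_left (Continuous.tendsto (by fun_prop) 0) nhdsWithin_le_nhds
  have fin := le_of_tendsto_of_tendsto lim1 lim2 (by
    filter_upwards [self_mem_nhdsWithin] with h hh using main h hh)
  have := norm_le_norm_add_norm_sub (Lop k p p2 s) (Lop k m m2 s)
  rw [norm_sub_rev] at fin
  simp only [mul_zero, add_zero] at fin
  linarith

lemma Sol.r_bound [CompleteSpace K] (sol : Sol S m m1 m2 b P p p1) (cm2 : Continuous m2)
    {p2 p3 p4 : ℝ → H}
    (hp1 : ∀ x, HasDerivAt p1 (p2 x) x) (hp2 : ∀ x, HasDerivAt p2 (p3 x) x)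
    (hp3 : ∀ x, HasDerivAt p3 (p4 x) x)
    (z1 : Causal p1) (z2 : Causal p2) (z3 : Causal p3) (z4 : Causal p4)
    {Φ : ℝ → ℝ} (mono : Monotone Φ) (Φ0 : ∀ t ≤ 0, Φ t = 0)
    (hΦ2 : ∀ s t, s ≤ t → ‖p2 t - p2 s‖ ≤ Φ t - Φ s)
    (hΦ4 : ∀ s t, s ≤ t → ‖p4 t - p4 s‖ ≤ Φ t - Φ s)
    {k s : ℝ} (hk : 0 < k) (hs : 0 ≤ s) :
    ‖Lop k m m2 s‖ ≤ 15 * (min k s) ^ 2 * Φ s := by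
  have Φnn : ∀ t, 0 ≤ Φ t := fun t => by
    rw [← Φ0 (min t 0) (min_le_right _ _)]; exact mono (min_le_left _ _)
  have b2 : ∀ y, ‖p2 y‖ ≤ Φ y := fun y => by
    have := hΦ2 (min y 0) y (min_le_left _ _)
    rwa [z2 _ (min_le_right _ _), Φ0 _ (min_le_right _ _), sub_zero, sub_zero] at this
  have b4 : ∀ y, ‖p4 y‖ ≤ Φ y := fun y => by
    have := hΦ4 (min y 0) y (min_le_left _ _)
    rwa [z4 _ (min_le_right _ _), Φ0 _ (min_le_right _ _), sub_zero, sub_zero] at this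
  have bG : ∀ y, ‖p2 y - p4 y‖ ≤ 2 * Φ y := fun y =>
    (norm_sub_le _ _).trans (by linarith [b2 y, b4 y])
  have step := sol.r_step cm2 hp1 hp2 hp3 hk hs (M := 2 * Φ s) (fun y hy =>
    (bG y).trans (by linarith [mono hy]))
  refine step.trans ?_
  have dG : ∀ x, HasDerivAt (fun t => P t - p1 t) (p x - p2 x) x := fun x => (sol.hP x).sub (hp1 x)
  have dG1 : ∀ x, HasDerivAt (fun t => p t - p2 t) (p1 x - p3 x) x :=
    fun x => (sol.hp x).sub (hp2 x)
  have dG2 : ∀ x, HasDerivAt (fun t => p1 t - p3 t) (p2 x - p4 x) x :=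
    fun x => (hp1 x).sub (hp3 x)
  have cG : Continuous (fun t => P t - p1 t) :=
    continuous_iff_continuousAt.2 fun x => (dG x).continuousAt
  have cG2 : Continuous (fun t => p1 t - p3 t) :=
    continuous_iff_continuousAt.2 fun x => (dG2 x).continuousAt
  have cL : Continuous fun τ => ‖Lop k (fun t => P t - p1 t) (fun t => p1 t - p3 t) τ‖ :=
    ((cont_dquot (cont_dquot cG k) k).sub (cont_amean (cont_amean cG2 k) k)).norm
  rcases le_total s k with hsk | hks
  · rw [min_eq_right hsk]
    have a1 : ‖Lop k p p2 s‖ ≤ 3 * s * (Φ s * s) := by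
      refine Lop_bound_causal sol.hp hp1 hp2 sol.zp z1 z2 hk (mul_nonneg (Φnn s) hs) hs hsk ?_
      intro y hy
      have := aux_mv0 hp3 (c := 0) (x := y) (C := Φ s) (z3 0 le_rfl) (fun u hu => by
        rw [Set.uIcc_of_le hy.1] at hu
        exact (b4 u).trans (mono (hu.2.trans hy.2)))
      refine this.trans (mul_le_mul_of_nonneg_left ?_ (Φnn s))
      rw [sub_zero, abs_of_nonneg hy.1]; exact hy.2
    have a2 : (∫ τ in (0:ℝ)..s, ‖Lop k (fun t => P t - p1 t) (fun t => p1 t - p3 t) τ‖)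
        ≤ ∫ τ in (0:ℝ)..s, 3 * s * (2 * Φ s) := by
      refine intervalIntegral.integral_mono_on hs (cL.intervalIntegrable _ _)
        intervalIntegrable_const ?_
      intro τ hτ
      have := Lop_bound_causal dG dG1 dG2 (fun t ht => by simp [sol.zP t ht, z1 t ht])
        (fun t ht => by simp [sol.zp t ht, z2 t ht]) (fun t ht => by simp [z1 t ht, z3 t ht])
        (k := k) (s := τ) (ω := 2 * Φ s) hk (by linarith [Φnn s]) hτ.1 (hτ.2.trans hsk)
        (fun y hy => (bG y).trans (by linarith [mono (hy.2.trans hτ.2)]))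
      refine this.trans ?_
      have := Φnn s
      have := hτ.2
      gcongr
    rw [intervalIntegral.integral_const, sub_zero, smul_eq_mul] at a2
    nlinarith [mul_nonneg (mul_nonneg hs hs) (Φnn s)]
  · rw [min_eq_left hks]
    have a1 : ‖Lop k p p2 s‖ ≤ 3 * k * (Φ s * k) := by
      refine Lop_bound sol.hp hp1 hp2 hk (mul_nonneg (Φnn s) hk.le) ?_
      intro y hy
      have := aux_mv hp3 (c := s - k) (x := y) (C := Φ s) (fun u hu => by
        have h' : Set.uIcc (s - k) y ⊆ Set.Icc (s - 2 * k) s :=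
          Set.ordConnected_Icc.uIcc_subset ⟨by linarith, by linarith⟩ hy
        exact (b4 u).trans (mono (h' hu).2))
      refine this.trans (mul_le_mul_of_nonneg_left ?_ (Φnn s))
      rw [abs_le]; constructor <;> linarith [hy.1, hy.2]
    have iΦ : ∀ a b : ℝ, IntervalIntegrable Φ MeasureTheory.volume a b := fun a b =>
      mono.intervalIntegrable
    have iΦ' : IntervalIntegrable (fun τ => Φ (τ - 2 * k)) MeasureTheory.volume 0 s :=
      Monotone.intervalIntegrable (fun x y h => mono (by linarith))
    have a2 : (∫ τ in (0:ℝ)..s, ‖Lop k (fun t => P t - p1 t) (fun t => p1 t - p3 t) τ‖)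
        ≤ ∫ τ in (0:ℝ)..s, 3 * k * (2 * (Φ τ - Φ (τ - 2 * k))) := by
      refine intervalIntegral.integral_mono_on hs (cL.intervalIntegrable _ _)
        ((((iΦ 0 s).sub iΦ').const_mul 2).const_mul (3 * k)) ?_
      intro τ hτ
      refine Lop_bound dG dG1 dG2 hk (by linarith [mono (show τ - 2 * k ≤ τ by linarith)]) ?_
      intro y hy
      have hh : ∀ u v, u ≤ v → u ∈ Set.Icc (τ - 2 * k) τ → v ∈ Set.Icc (τ - 2 * k) τ →
          ‖(p2 v - p4 v) - (p2 u - p4 u)‖ ≤ 2 * (Φ τ - Φ (τ - 2 * k)) := by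
        intro u v huv hu hv
        rw [show (p2 v - p4 v) - (p2 u - p4 u) = (p2 v - p2 u) - (p4 v - p4 u) by abel]
        refine (norm_sub_le _ _).trans ?_
        linarith [hΦ2 u v huv, hΦ4 u v huv, mono hu.1, mono hv.2]
      have hc : τ - k ∈ Set.Icc (τ - 2 * k) τ := ⟨by linarith, by linarith⟩
      rcases le_total y (τ - k) with h1 | h1
      · rw [norm_sub_rev]; exact hh _ _ h1 hy hc
      · exact hh _ _ h1 hc hy
    rw [intervalIntegral.integral_const_mul, intervalIntegral.integral_const_mul,
      intervalIntegral.integral_sub (iΦ 0 s) iΦ',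
      intervalIntegral.integral_comp_sub_right (fun x => Φ x) (2 * k)] at a2
    have e1 := intervalIntegral.integral_add_adjacent_intervals (iΦ (0 - 2 * k) 0)
      (iΦ 0 (s - 2 * k))
    have e2 := intervalIntegral.integral_add_adjacent_intervals (iΦ 0 (s - 2 * k))
      (iΦ (s - 2 * k) s)
    have e3 : 0 ≤ ∫ τ in (0 - 2 * k)..0, Φ τ :=
      intervalIntegral.integral_nonneg (by linarith) (fun u _ => Φnn u)
    have e4 : (∫ τ in (s - 2 * k)..s, Φ τ) ≤ ∫ τ in (s - 2 * k)..s, Φ s :=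
      intervalIntegral.integral_mono_on (by linarith) (iΦ _ _) intervalIntegrable_const
        (fun x hx => mono hx.2)
    rw [intervalIntegral.integral_const, smul_eq_mul] at e4
    have e5 : ((∫ x in (0:ℝ)..s, Φ x) - ∫ x in (0 - 2 * k)..(s - 2 * k), Φ x) ≤ 2 * k * Φ s := by
      linarith
    have e6 := mul_le_mul_of_nonneg_left e5 (show 0 ≤ 6 * k by positivity)
    nlinarith

end CoreEnergy

section CoreDiscrete

variable {H K : Type*} [NormedAddCommGroup H] [InnerProductSpace ℝ H]
  [NormedAddCommGroup K] [InnerProductSpace ℝ K]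

set_option maxHeartbeats 1000000 in
lemma discrete_energy {S : Submodule ℝ (H × K)} {ε r : ℝ → H} {η : ℝ → K} {k R t : ℝ}
    (hk : 0 < k) (zε : Causal ε) (zη : Causal η)
    (mem : ∀ t, (ε t, η t) ∈ S)
    (eqn : ∀ t, ∀ w ∈ S, ⟪dquot k (dquot k ε) t - r t, w.1⟫
      + ⟪amean k (amean k η) t, w.2⟫ = 0)
    (hR : 0 ≤ R) (hr : ∀ s ≤ t, ‖r s‖ ≤ R) (n : ℕ) :
    ∀ s ≤ t, s ≤ n * k →
      √(‖dquot k ε s‖ ^ 2 + ‖amean k η s‖ ^ 2) ≤ n * k * R ∧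
      ‖amean k ε s‖ ≤ (n * k) * (n * k) * R := by
  induction n with
  | zero =>
    intro s hst hs
    simp only [Nat.cast_zero, zero_mul] at hs ⊢
    rw [zε.dquot hk.le s hs, zη.amean hk.le s hs, zε.amean hk.le s hs]
    simp
  | succ n ih =>
    intro s hst hs
    push_cast at hs ⊢
    obtain ⟨i1, i2⟩ := ih (s - k) (by linarith) (by linarith)
    set d := dquot k ε s with hd
    set d' := dquot k ε (s - k) with hd'
    set a := amean k η s with ha
    set a' := amean k η (s - k) with ha'
    set D := √(‖d‖ ^ 2 + ‖a‖ ^ 2) with hD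
    set D' := √(‖d'‖ ^ 2 + ‖a'‖ ^ 2) with hD'
    have sD : D ^ 2 = ‖d‖ ^ 2 + ‖a‖ ^ 2 := Real.sq_sqrt (by positivity)
    have sD' : D' ^ 2 = ‖d'‖ ^ 2 + ‖a'‖ ^ 2 := Real.sq_sqrt (by positivity)
    have nD : 0 ≤ D := Real.sqrt_nonneg _
    have nD' : 0 ≤ D' := Real.sqrt_nonneg _
    have dD : ‖d‖ ≤ D := Real.le_sqrt_of_sq_le (by nlinarith [sq_nonneg ‖a‖])
    have dD' : ‖d'‖ ≤ D' := Real.le_sqrt_of_sq_le (by nlinarith [sq_nonneg ‖a'‖])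
    have hmem : ((2⁻¹ : ℝ) • (d + d'), k⁻¹ • (a - a')) ∈ S := by
      have m1 : ((2⁻¹ : ℝ) * k⁻¹) • (((ε s, η s) : H × K) - (ε (s - k - k), η (s - k - k))) ∈ S :=
        S.smul_mem _ (S.sub_mem (mem _) (mem _))
      convert m1 using 1
      ext
      · simp only [hd, hd', dquot, Prod.smul_fst, Prod.fst_sub]; module
      · simp only [ha, ha', amean, Prod.smul_snd, Prod.snd_sub]; module
    have E := eqn s _ hmem
    have x1 : dquot k (dquot k ε) s = k⁻¹ • (d - d') := rfl
    have x2 : amean k (amean k η) s = (2⁻¹ : ℝ) • (a + a') := rfl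
    rw [x1, x2] at E
    simp only at E
    have y1 : ⟪k⁻¹ • (d - d') - r s, (2⁻¹ : ℝ) • (d + d')⟫
        = 2⁻¹ * k⁻¹ * (‖d‖ ^ 2 - ‖d'‖ ^ 2) - 2⁻¹ * ⟪r s, d + d'⟫ := by
      rw [← real_inner_self_eq_norm_sq, ← real_inner_self_eq_norm_sq]
      simp only [inner_sub_left, inner_add_right, inner_smul_left, inner_smul_right, conj_trivial]
      rw [real_inner_comm d d']; ring
    have y2 : ⟪(2⁻¹ : ℝ) • (a + a'), k⁻¹ • (a - a')⟫
        = 2⁻¹ * k⁻¹ * (‖a‖ ^ 2 - ‖a'‖ ^ 2) := by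
      rw [← real_inner_self_eq_norm_sq, ← real_inner_self_eq_norm_sq]
      simp only [inner_sub_right, inner_add_left, inner_smul_left, inner_smul_right, conj_trivial]
      rw [real_inner_comm a a']; ring
    rw [y1, y2] at E
    have E2 : D ^ 2 - D' ^ 2 = k * ⟪r s, d + d'⟫ := by
      rw [sD, sD']
      have : k * k⁻¹ = 1 := mul_inv_cancel₀ hk.ne'
      linear_combination 2 * k * E - ((‖d‖ ^ 2 - ‖d'‖ ^ 2) + (‖a‖ ^ 2 - ‖a'‖ ^ 2)) * this
    have E3 : ⟪r s, d + d'⟫ ≤ R * (D + D') := by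
      refine (real_inner_le_norm _ _).trans ?_
      refine mul_le_mul (hr s hst) ((norm_add_le _ _).trans (by linarith)) (norm_nonneg _) hR
    have E4 : D ≤ D' + k * R := by
      by_contra hcon
      push Not at hcon
      have hkR : 0 ≤ k * R := by positivity
      have hpos : 0 < D + D' := by linarith
      have := mul_lt_mul_of_pos_right (show k * R < D - D' by linarith) hpos
      nlinarith [mul_le_mul_of_nonneg_left E3 hk.le]
    have E5 : D ≤ (n + 1) * k * R := by
      have : ((n:ℝ) + 1) * k * R = n * k * R + k * R := by ring
      linarith
    refine ⟨E5, ?_⟩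
    have F1 : amean k ε s = amean k ε (s - k) + (k * 2⁻¹) • (d + d') := by
      have : k ≠ 0 := hk.ne'
      simp only [hd, hd', dquot, amean]
      match_scalars <;> field_simp <;> ring
    have F2 : ‖(k * 2⁻¹) • (d + d')‖ ≤ k * ((n + 1) * k * R) := by
      rw [norm_smul, Real.norm_of_nonneg (by positivity)]
      have : ‖d + d'‖ ≤ 2 * ((n + 1) * k * R) := by
        refine (norm_add_le _ _).trans ?_
        have h1 : (0:ℝ) ≤ k * R := by positivity
        have h2 : ((n:ℝ) + 1) * k * R = n * k * R + k * R := by ring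
        linarith
      have h3 := mul_le_mul_of_nonneg_left this (show 0 ≤ k * 2⁻¹ by positivity)
      linarith
    rw [F1]
    refine (norm_add_le _ _).trans ((add_le_add i2 F2).trans ?_)
    have h1 : (0:ℝ) ≤ n * (k * k * R) := by positivity
    have h2 : ((n : ℝ) + 1) * k * ((n + 1) * k) * R
        - (n * k * (n * k) * R + k * ((n + 1) * k * R)) = n * (k * k * R) := by ring
    linarith

lemma core_estimate [CompleteSpace K] {S : Submodule ℝ (H × K)} {m m1 m2 : ℝ → H} {b : ℝ → K}
    {P p p1 : ℝ → H} (sol : Sol S m m1 m2 b P p p1) (cm2 : Continuous m2)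
    {p2 p3 p4 : ℝ → H}
    (hp1 : ∀ x, HasDerivAt p1 (p2 x) x) (hp2 : ∀ x, HasDerivAt p2 (p3 x) x)
    (hp3 : ∀ x, HasDerivAt p3 (p4 x) x)
    (z1 : Causal p1) (z2 : Causal p2) (z3 : Causal p3) (z4 : Causal p4) (zm2 : Causal m2)
    {Φ : ℝ → ℝ} (mono : Monotone Φ) (Φ0 : ∀ t ≤ 0, Φ t = 0)
    (hΦ2 : ∀ s t, s ≤ t → ‖p2 t - p2 s‖ ≤ Φ t - Φ s)
    (hΦ4 : ∀ s t, s ≤ t → ‖p4 t - p4 s‖ ≤ Φ t - Φ s)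
    {k t : ℝ} (hk : 0 < k) (ht : 0 ≤ t)
    {mk : ℝ → H} {bk : ℝ → K} (zmk : Causal mk) (zbk : Causal fun t => b t - bk t)
    (memk : ∀ t, (m t - mk t, b t - bk t) ∈ S)
    (eqk : ∀ t, ∀ w ∈ S, ⟪dquot k (dquot k mk) t - amean k (amean k p) t, w.1⟫
      + ⟪amean k (amean k bk) t, w.2⟫ = 0) :
    ∀ s ≤ t, ‖amean k (fun t => m t - mk t) s‖ ≤ 90 * k ^ 2 * max t (t ^ 2) * Φ t ∧
      ‖amean k (fun t => b t - bk t) s‖ ≤ 90 * k ^ 2 * max t (t ^ 2) * Φ t := by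
  intro s hs
  have Φnn : ∀ t, 0 ≤ Φ t := fun t => by
    rw [← Φ0 (min t 0) (min_le_right _ _)]; exact mono (min_le_left _ _)
  have hmin : 0 ≤ min k t := le_min hk.le ht
  have hr : ∀ s ≤ t, ‖Lop k m m2 s‖ ≤ 15 * (min k t) ^ 2 * Φ t := by
    intro s hs
    rcases le_total s 0 with h0 | h0
    · rw [Lop, (sol.zm.dquot hk.le).dquot hk.le s h0, (zm2.amean hk.le).amean hk.le s h0]
      have := Φnn t
      simp only [sub_zero, norm_zero]; positivity
    · refine (sol.r_bound cm2 hp1 hp2 hp3 z1 z2 z3 z4 mono Φ0 hΦ2 hΦ4 hk h0).trans ?_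
      have h1 := Φnn s
      have h2 := mono hs
      have h3 : 0 ≤ min k s := le_min hk.le h0
      gcongr
  have D := discrete_energy (S := S) (ε := fun t => m t - mk t) (η := fun t => b t - bk t)
    (r := Lop k m m2) (R := 15 * (min k t) ^ 2 * Φ t) (t := t) hk
    (fun t ht => by simp [sol.zm t ht, zmk t ht]) zbk memk (fun t w hw => by
      have h1 := eqk t w hw
      have h2 := ((sol.am hk.le).am hk.le).eqn t w hw
      have e1 : dquot k (dquot k fun t => m t - mk t) t - Lop k m m2 t
          = (amean k (amean k m2) t - amean k (amean k p) t)
            - (dquot k (dquot k mk) t - amean k (amean k p) t) := by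
        simp only [Lop, dquot, amean]; module
      have e2 : amean k (amean k fun t => b t - bk t) t
          = amean k (amean k b) t - amean k (amean k bk) t := by
        simp only [amean]; module
      rw [e1, e2, inner_sub_left, inner_sub_left (amean k (amean k b) t)]
      linarith) (by have := Φnn t; positivity) hr ⌈t / k⌉₊ s hs
      (hs.trans (by
        have := Nat.le_ceil (t / k)
        rwa [div_le_iff₀ hk] at this))
  set T : ℝ := (⌈t / k⌉₊ : ℝ) * k with hT
  have hT0 : 0 ≤ T := by positivity
  have key : (T + T * T) * (15 * (min k t) ^ 2) ≤ 90 * k ^ 2 * max t (t ^ 2) := by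
    rcases le_total t k with h | h
    · have hc : (⌈t / k⌉₊ : ℝ) ≤ 1 := by
        have : ⌈t / k⌉₊ ≤ 1 := Nat.ceil_le.2 (by
          rw [div_le_iff₀ hk]; simpa using h)
        exact_mod_cast this
      have hTk : T ≤ k := by rw [hT]; nlinarith
      rw [min_eq_right h]
      have a1 : T + T * T ≤ k + k * k := by nlinarith
      have a2 := mul_le_mul_of_nonneg_right a1 (show 0 ≤ 15 * t ^ 2 by positivity)
      have a3 : k * t ^ 2 ≤ k ^ 2 * t := by
        nlinarith [mul_le_mul_of_nonneg_left h (mul_nonneg hk.le ht)]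
      have a4 := mul_le_mul_of_nonneg_left (le_max_left t (t ^ 2)) (sq_nonneg k)
      have a5 := mul_le_mul_of_nonneg_left (le_max_right t (t ^ 2)) (sq_nonneg k)
      have a6 : 0 ≤ k ^ 2 * t := by positivity
      nlinarith
    · have hTk : T ≤ 2 * t := by
        have := (Nat.ceil_lt_add_one (show 0 ≤ t / k by positivity)).le
        have := mul_le_mul_of_nonneg_right this hk.le
        rw [add_mul, div_mul_cancel₀ _ hk.ne', one_mul] at this
        rw [hT]; linarith
      rw [min_eq_left h]
      have a1 : T + T * T ≤ 2 * t + 4 * t ^ 2 := by nlinarith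
      have a2 := mul_le_mul_of_nonneg_right a1 (show 0 ≤ 15 * k ^ 2 by positivity)
      have a4 := mul_le_mul_of_nonneg_left (le_max_left t (t ^ 2)) (sq_nonneg k)
      have a5 := mul_le_mul_of_nonneg_left (le_max_right t (t ^ 2)) (sq_nonneg k)
      nlinarith
  have key2 := mul_le_mul_of_nonneg_right key (Φnn t)
  have hq : 0 ≤ 15 * (min k t) ^ 2 * Φ t := by have := Φnn t; positivity
  constructor
  · refine D.2.trans ?_
    nlinarith [mul_nonneg hT0 hq]
  · refine (Real.le_sqrt_of_sq_le (y := ‖dquot k (fun t => m t - mk t) s‖ ^ 2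
      + ‖amean k (fun t => b t - bk t) s‖ ^ 2) ?_).trans (D.1.trans ?_)
    · linarith [sq_nonneg ‖dquot k (fun t => m t - mk t) s‖]
    · nlinarith [mul_nonneg (mul_nonneg hT0 hT0) hq]

end CoreDiscrete

section Elliptic

lemma riesz_lift {V G : Type*} [NormedAddCommGroup V] [NormedSpace ℝ V] [CompleteSpace V]
    [NormedAddCommGroup G] [InnerProductSpace ℝ G] [CompleteSpace G]
    (J : V →L[ℝ] G) (c : ℝ) (hc : 0 ≤ c) (hJ : ∀ v, ‖v‖ ≤ c * ‖J v‖) (f : V →L[ℝ] ℝ) (g : G) :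
    ∃ v, ∀ w, ⟪g + J v, J w⟫ = f w := by
  have anti : AntilipschitzWith ⟨c, hc⟩ J :=
    AddMonoidHomClass.antilipschitz_of_bound J hJ
  have hcl : IsClosed (Set.range J) := anti.isClosed_range J.uniformContinuous
  let e := J.equivRange anti.injective hcl
  let R : Submodule ℝ G := LinearMap.range (J : V →ₗ[ℝ] G)
  have : CompleteSpace R := by
    have : IsClosed (R : Set G) := hcl
    exact this.completeSpace_coe
  let e : V ≃L[ℝ] R := J.equivRange anti.injective hcl
  have he : ∀ v, ((e v : R) : G) = J v := fun v => rfl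
  let F : R := (InnerProductSpace.toDual ℝ R).symm (f.comp (e.symm : R →L[ℝ] V))
  refine ⟨e.symm (F - R.orthogonalProjectionOnto g), fun w => ?_⟩
  rw [← he, ← he w, ContinuousLinearEquiv.apply_symm_apply, inner_add_left]
  have h1 : ⟪((F - R.orthogonalProjectionOnto g : R) : G), (e w : G)⟫
      = ⟪F, e w⟫ - ⟪R.orthogonalProjectionOnto g, e w⟫ := by
    rw [← inner_sub_left, Submodule.coe_inner]
  have h2 : ⟪F, e w⟫ = f w := by
    simp [F, InnerProductSpace.toDual_symm_apply]
  have h3 : ⟪R.orthogonalProjectionOnto g, e w⟫ = ⟪g, (e w : G)⟫ :=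
    Submodule.inner_orthogonalProjectionOnto_eq_of_mem_right (e w) g
  rw [h1, h2, h3]; ring

lemma elliptic {Z G Hp Hm : Type*} [NormedAddCommGroup Z] [NormedSpace ℝ Z] [CompleteSpace Z]
    [NormedAddCommGroup G] [InnerProductSpace ℝ G] [CompleteSpace G]
    [NormedAddCommGroup Hp] [NormedSpace ℝ Hp] [NormedAddCommGroup Hm] [NormedSpace ℝ Hm]
    (J : Z →L[ℝ] G) (c : ℝ) (hc : 0 ≤ c) (hJ : ∀ v, ‖v‖ ≤ c * ‖J v‖)
    (f : Hm →L[ℝ] Z →L[ℝ] ℝ) (l : Hp → Z) (Cl : ℝ) (hCl : 0 ≤ Cl)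
    (hl : ∀ a, ‖l a‖ ≤ Cl * ‖a‖)
    (V0 : Submodule ℝ Z) (hV0 : IsClosed (V0 : Set Z))
    (ladd : ∀ a b, l (a + b) - l a - l b ∈ V0) (lsmul : ∀ (x : ℝ) a, l (x • a) - x • l a ∈ V0) :
    ∃ Zop : Hp × Hm →L[ℝ] Z, (∀ β, Zop β - l β.1 ∈ V0) ∧
      (∀ β, ∀ w ∈ V0, ⟪J (Zop β), J w⟫ = f β.2 w) ∧
      ‖Zop‖ ≤ c * (2 * (‖J‖ * Cl + c * ‖f‖)) := by
  have : CompleteSpace V0 := hV0.completeSpace_coe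
  have ex : ∀ β : Hp × Hm, ∃ z : Z, z - l β.1 ∈ V0 ∧ ∀ w ∈ V0, ⟪J z, J w⟫ = f β.2 w := by
    intro β
    obtain ⟨v, hv⟩ := riesz_lift (J.comp V0.subtypeL) c hc (fun v => hJ v)
      ((f β.2).comp V0.subtypeL) (J (l β.1))
    refine ⟨l β.1 + v, by simp, fun w hw => ?_⟩
    have := hv ⟨w, hw⟩
    rw [map_add]
    exact this
  have uniq : ∀ z, z ∈ V0 → (∀ w ∈ V0, ⟪J z, J w⟫ = 0) → z = 0 := by
    intro z hz h
    have h1 := h z hz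
    rw [inner_self_eq_zero] at h1
    have := hJ z
    rw [h1, norm_zero, mul_zero] at this
    exact norm_le_zero_iff.1 this
  choose Z0 hZ1 hZ2 using ex
  have add : ∀ x y, Z0 (x + y) = Z0 x + Z0 y := by
    intro x y
    rw [← sub_eq_zero]
    refine uniq _ ?_ ?_
    · have := V0.sub_mem (V0.add_mem (hZ1 (x + y)) (ladd x.1 y.1)) (V0.add_mem (hZ1 x) (hZ1 y))
      convert this using 1
      rw [Prod.fst_add]; abel
    · intro w hw
      rw [map_sub, map_add, inner_sub_left, inner_add_left, hZ2 _ w hw, hZ2 _ w hw, hZ2 _ w hw]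
      simp
  have smul : ∀ (r : ℝ) x, Z0 (r • x) = r • Z0 x := by
    intro r x
    rw [← sub_eq_zero]
    refine uniq _ ?_ ?_
    · have := V0.sub_mem (V0.add_mem (hZ1 (r • x)) (lsmul r x.1)) (V0.smul_mem r (hZ1 x))
      convert this using 1
      rw [Prod.smul_fst]; module
    · intro w hw
      rw [map_sub, map_smul, inner_sub_left, inner_smul_left, hZ2 _ w hw, hZ2 _ w hw]
      simp
  have bound : ∀ β, ‖Z0 β‖ ≤ c * (2 * (‖J‖ * Cl + c * ‖f‖)) * ‖β‖ := by
    intro β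
    set B := J (Z0 β) with hB
    set g := J (l β.1) with hg
    set v := Z0 β - l β.1 with hv
    have hJv : J v = B - g := by rw [hv, map_sub]
    have h1 : ⟪B, J v⟫ = f β.2 v := hZ2 β v (hZ1 β)
    have h2 : ‖B‖ ^ 2 = ⟪B, g⟫ + f β.2 v := by
      rw [← h1, hJv, inner_sub_right, real_inner_self_eq_norm_sq]; ring
    have h3 : ⟪B, g⟫ ≤ ‖B‖ * ‖g‖ := real_inner_le_norm _ _
    set X := c * (‖f‖ * ‖β.2‖) with hX
    have hX0 : 0 ≤ X := by positivity
    have h4 : f β.2 v ≤ X * (‖B‖ + ‖g‖) := by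
      have a1 : f β.2 v ≤ ‖f‖ * ‖β.2‖ * ‖v‖ := (le_abs_self _).trans (f.le_opNorm₂ β.2 v)
      have a2 : ‖v‖ ≤ c * (‖B‖ + ‖g‖) := (hJ v).trans
        (mul_le_mul_of_nonneg_left (by rw [hJv]; exact norm_sub_le _ _) hc)
      have a3 := mul_le_mul_of_nonneg_left a2 (show 0 ≤ ‖f‖ * ‖β.2‖ by positivity)
      rw [hX]; linarith
    have h5 : ‖B‖ ≤ 2 * (‖g‖ + X) := by
      by_contra hcon
      push Not at hcon
      have := norm_nonneg B
      have := norm_nonneg g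
      nlinarith
    have h6 : ‖g‖ ≤ ‖J‖ * Cl * ‖β‖ := by
      refine (J.le_opNorm _).trans ?_
      rw [mul_assoc]
      refine mul_le_mul_of_nonneg_left ((hl _).trans ?_) (norm_nonneg _)
      exact mul_le_mul_of_nonneg_left (norm_fst_le β) hCl
    have h7 : X ≤ c * ‖f‖ * ‖β‖ := by
      rw [hX, mul_assoc]
      exact mul_le_mul_of_nonneg_left
        (mul_le_mul_of_nonneg_left (norm_snd_le β) f.opNorm_nonneg) hc
    refine (hJ _).trans ?_
    rw [mul_assoc]
    refine mul_le_mul_of_nonneg_left ?_ hc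
    linarith
  refine ⟨LinearMap.mkContinuous ⟨⟨Z0, add⟩, smul⟩ _ bound, hZ1, hZ2, ?_⟩
  exact LinearMap.mkContinuous_norm_le _ (by positivity) _

end Elliptic

section Data

variable {E : Type*} [NormedAddCommGroup E] [NormedSpace ℝ E]

lemma Causal.of_hasDerivAt {f f' : ℝ → E} (hf : ∀ x, HasDerivAt f (f' x) x) (h : Causal f) :
    Causal f' := by
  intro t ht
  have h1 := (hf t).hasDerivWithinAt (s := Set.Iic t)
  have h2 : HasDerivWithinAt f 0 (Set.Iic t) t :=
    (hasDerivWithinAt_const t (Set.Iic t) (0:E)).congr (fun x hx => h x (le_trans hx ht)) (h t ht)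
  exact (uniqueDiffWithinAt_Iic t).eq_deriv _ h1 h2

lemma hasDerivAt_iter {f : ℝ → E} {n : ℕ} (hf : ContDiff ℝ n f) {j : ℕ} (hj : j < n) (x : ℝ) :
    HasDerivAt (iteratedDeriv j f) (iteratedDeriv (j + 1) f x) x := by
  rw [iteratedDeriv_succ]
  exact (hf.differentiable_iteratedDeriv j (by exact_mod_cast hj) x).hasDerivAt

lemma causal_iter {f : ℝ → E} {n : ℕ} (hf : ContDiff ℝ n f) (hc : Causal f) {j : ℕ}
    (hj : j ≤ n) : Causal (iteratedDeriv j f) := by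
  induction j with
  | zero => simpa using hc
  | succ j ih => exact Causal.of_hasDerivAt (hasDerivAt_iter hf (by omega)) (ih (by omega))

/-- cumulative variation -/
def cumv (g : ℝ → E) (t : ℝ) : ℝ := ∫ τ in (0:ℝ)..(max t 0), ‖g τ‖

lemma cumv_sub {g : ℝ → E} (hg : ∀ a b, IntervalIntegrable g MeasureTheory.volume a b) (s t : ℝ) :
    cumv g t - cumv g s = ∫ τ in (max s 0)..(max t 0), ‖g τ‖ :=
  intervalIntegral.integral_interval_sub_left (hg _ _).norm (hg _ _).norm

lemma cumv_mono {g : ℝ → E} (hg : ∀ a b, IntervalIntegrable g MeasureTheory.volume a b) :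
    Monotone (cumv g) := by
  intro s t hst
  have := cumv_sub hg s t
  have h2 : 0 ≤ ∫ τ in (max s 0)..(max t 0), ‖g τ‖ :=
    intervalIntegral.integral_nonneg (max_le_max_right 0 hst) (fun _ _ => norm_nonneg _)
  linarith

lemma cumv_zero {g : ℝ → E} {t : ℝ} (ht : t ≤ 0) : cumv g t = 0 := by
  simp [cumv, max_eq_right ht]

lemma cumv_pos {g : ℝ → E} {t : ℝ} (ht : 0 ≤ t) : cumv g t = ∫ τ in (0:ℝ)..t, ‖g τ‖ := by
  simp [cumv, max_eq_left ht]

lemma cumv_bound {f g : ℝ → E} (hg : ∀ a b, IntervalIntegrable g MeasureTheory.volume a b)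
    (hf : Causal f) (hfg : ∀ s t, f t - f s = ∫ τ in s..t, g τ) {s t : ℝ} (hst : s ≤ t) :
    ‖f t - f s‖ ≤ cumv g t - cumv g s := by
  have e : ∀ s, f s = f (max s 0) := fun s => by
    rcases le_total s 0 with h | h
    · rw [max_eq_right h, hf s h, hf 0 le_rfl]
    · rw [max_eq_left h]
  rw [cumv_sub hg, e t, e s, hfg]
  exact intervalIntegral.norm_integral_le_integral_norm (max_le_max_right 0 hst)

lemma ftc_iter [CompleteSpace E] {f : ℝ → E} {n : ℕ} (hf : ContDiff ℝ n f) {j : ℕ} (hj : j < n) :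
    (∀ a b, IntervalIntegrable (iteratedDeriv (j + 1) f) MeasureTheory.volume a b) ∧
    ∀ s t, iteratedDeriv j f t - iteratedDeriv j f s = ∫ τ in s..t, iteratedDeriv (j + 1) f τ := by
  have c : Continuous (iteratedDeriv (j + 1) f) :=
    hf.continuous_iteratedDeriv (j + 1) (by exact_mod_cast hj)
  refine ⟨fun a b => c.intervalIntegrable a b, fun s t => ?_⟩
  exact (intervalIntegral.integral_eq_sub_of_hasDerivAt
    (fun x _ => hasDerivAt_iter hf hj x) (c.intervalIntegrable _ _)).symm

lemma iter_iter (j i : ℕ) (f : ℝ → E) :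
    iteratedDeriv j (iteratedDeriv i f) = iteratedDeriv (j + i) f := by
  simp only [iteratedDeriv_eq_iterate, Function.iterate_add_apply]

lemma Hfun_ge {k : ℕ} (hk : 2 ≤ k) (f : ℝ → E) {t : ℝ} (ht : 0 ≤ t) :
    cumv (iteratedDeriv 3 f) t + cumv (iteratedDeriv 5 f) t ≤ Hfun k (iteratedDeriv 3 f) t := by
  have nn : ∀ j, 0 ≤ ∫ τ in (0:ℝ)..t, ‖iteratedDeriv (j + 3) f τ‖ := fun j =>
    intervalIntegral.integral_nonneg ht (fun _ _ => norm_nonneg _)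
  rw [cumv_pos ht, cumv_pos ht, Hfun]
  simp only [iter_iter]
  have := Finset.sum_le_sum_of_subset_of_nonneg (s := ({0, 2} : Finset ℕ))
    (t := Finset.range (k + 1))
    (f := fun j => ∫ τ in (0:ℝ)..t, ‖iteratedDeriv (j + 3) f τ‖)
    (by intro x hx; simp at hx ⊢; omega) (fun j _ _ => nn j)
  simpa using this

end Data

section AbstractMain

/-- combine two continuous linear maps into the Hilbert product -/
def mk2 {V X Y : Type*} [NormedAddCommGroup V] [NormedSpace ℝ V]
    [NormedAddCommGroup X] [InnerProductSpace ℝ X] [NormedAddCommGroup Y] [InnerProductSpace ℝ Y]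
    (f : V →L[ℝ] X) (g : V →L[ℝ] Y) : V →L[ℝ] WithLp 2 (X × Y) :=
  ((WithLp.prodContinuousLinearEquiv 2 ℝ X Y).symm : (X × Y) →L[ℝ] WithLp 2 (X × Y)).comp
    (f.prod g)

lemma mk2_inner {V V' X Y : Type*} [NormedAddCommGroup V] [NormedSpace ℝ V]
    [NormedAddCommGroup V'] [NormedSpace ℝ V']
    [NormedAddCommGroup X] [InnerProductSpace ℝ X] [NormedAddCommGroup Y] [InnerProductSpace ℝ Y]
    (f : V →L[ℝ] X) (g : V →L[ℝ] Y) (f' : V' →L[ℝ] X) (g' : V' →L[ℝ] Y) (v : V) (w : V') :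
    ⟪mk2 f g v, mk2 f' g' w⟫ = ⟪f v, f' w⟫ + ⟪g v, g' w⟫ := by
  simp [mk2, WithLp.prod_inner_apply]

lemma mk2_norm_sq {V X Y : Type*} [NormedAddCommGroup V] [NormedSpace ℝ V]
    [NormedAddCommGroup X] [InnerProductSpace ℝ X] [NormedAddCommGroup Y] [InnerProductSpace ℝ Y]
    (f : V →L[ℝ] X) (g : V →L[ℝ] Y) (v : V) :
    ‖mk2 f g v‖ ^ 2 = ‖f v‖ ^ 2 + ‖g v‖ ^ 2 := by
  rw [← real_inner_self_eq_norm_sq, mk2_inner, real_inner_self_eq_norm_sq,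
    real_inner_self_eq_norm_sq]

variable {H K Z Hp Hm : Type*} [NormedAddCommGroup H] [InnerProductSpace ℝ H] [CompleteSpace H]
  [NormedAddCommGroup K] [InnerProductSpace ℝ K] [CompleteSpace K]
  [NormedAddCommGroup Z] [NormedSpace ℝ Z] [CompleteSpace Z]
  [NormedAddCommGroup Hp] [NormedSpace ℝ Hp] [CompleteSpace Hp]
  [NormedAddCommGroup Hm] [NormedSpace ℝ Hm] [CompleteSpace Hm]

lemma map_amean {X Y : Type*} [NormedAddCommGroup X] [NormedSpace ℝ X]
    [NormedAddCommGroup Y] [NormedSpace ℝ Y] (T : X →L[ℝ] Y) (k : ℝ) (f : ℝ → X) (t : ℝ) :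
    T (amean k f t) = amean k (fun s => T (f s)) t := by
  simp [amean]

set_option maxHeartbeats 1000000 in
lemma abstract_main (mop : Z →L[ℝ] H) (aop : Z →L[ℝ] K) (c : ℝ) (hc : 0 ≤ c)
    (hJ : ∀ v, ‖v‖ ≤ c * ‖mk2 mop aop v‖)
    (f : Hm →L[ℝ] Z →L[ℝ] ℝ) (l : Hp → Z) (Cl : ℝ) (hCl : 0 ≤ Cl)
    (hl : ∀ a, ‖l a‖ ≤ Cl * ‖a‖) :
    ∃ C : ℝ, 0 ≤ C ∧ ∀ V0 : Submodule ℝ Z, IsClosed (V0 : Set Z) →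
      (∀ a b, l (a + b) - l a - l b ∈ V0) → (∀ (x : ℝ) a, l (x • a) - x • l a ∈ V0) →
      ∀ k : ℝ, 0 < k → ∀ (β0 : ℝ → Hp) (β1 : ℝ → Hm), WP 6 β0 → WP 5 β1 →
      ∀ (z : ℝ → Z) (m1 m2 : ℝ → H), Causal z → Continuous z →
        (∀ x, HasDerivAt (fun t => mop (z t)) (m1 x) x) → (∀ x, HasDerivAt m1 (m2 x) x) →
        Continuous m2 → (∀ t, z t - l (β0 t) ∈ V0) →
        (∀ t, ∀ w ∈ V0, ⟪m2 t, mop w⟫ + ⟪aop (z t), aop w⟫ = f (β1 t) w) →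
      ∀ zk : ℝ → Z, Causal zk → (∀ t, zk t - l (β0 t) ∈ V0) →
        (∀ t, ∀ w ∈ V0, ⟪dquot k (dquot k (fun τ => mop (zk τ))) t, mop w⟫
          + ⟪aop (amean k (amean k zk) t), aop w⟫ = f (amean k (amean k β1) t) w) →
      ∀ t, 0 ≤ t → ∀ s ≤ t,
        ‖mop (amean k (fun t => z t - zk t) s)‖ ≤ C * k ^ 2 * max t (t ^ 2)
          * (Hfun 3 (iteratedDeriv 3 β0) t + Hfun 2 (iteratedDeriv 3 β1) t) ∧
        ‖aop (amean k (fun t => z t - zk t) s)‖ ≤ C * k ^ 2 * max t (t ^ 2)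
          * (Hfun 3 (iteratedDeriv 3 β0) t + Hfun 2 (iteratedDeriv 3 β1) t) := by
  set Cz := c * (2 * (‖mk2 mop aop‖ * Cl + c * ‖f‖)) with hCz
  have hCz0 : 0 ≤ Cz := by positivity
  set Cb := ‖mop‖ * Cz with hCb
  have hCb0 : 0 ≤ Cb := by positivity
  refine ⟨90 * Cb, by positivity, ?_⟩
  intro V0 hV0 ladd lsmul k hk β0 β1 hβ0 hβ1 z m1 m2 zz cz hm hm1 cm2 hz heq zk zzk hzk heqk
    t ht s hs
  obtain ⟨Zop, Z1, Z2, Z3⟩ := elliptic (mk2 mop aop) c hc hJ f l Cl hCl hl V0 hV0 ladd lsmul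
  obtain ⟨C0, z0, i0, F0⟩ := hβ0
  obtain ⟨C1, z1, i1, F1⟩ := hβ1
  simp only [show 6 - 1 = 5 from rfl, show 5 - 1 = 4 from rfl] at C0 C1 F0 F1
  have C0' : ContDiff ℝ ((4 : ℕ) : WithTop ℕ∞) β0 := C0.of_le (by norm_cast)
  let Bp : Hp × Hm →L[ℝ] H := mop.comp Zop
  have hBp : ‖Bp‖ ≤ Cb := (ContinuousLinearMap.opNorm_comp_le _ _).trans
    (mul_le_mul_of_nonneg_left Z3 (norm_nonneg _))
  let pj : ℕ → ℝ → H := fun j t => Bp (iteratedDeriv j β0 t, iteratedDeriv j β1 t)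
  have dpj : ∀ j < 4, ∀ x, HasDerivAt (pj j) (pj (j + 1) x) x := fun j hj x =>
    Bp.hasFDerivAt.comp_hasDerivAt x
      ((hasDerivAt_iter C0' hj x).prodMk (hasDerivAt_iter C1 hj x))
  have zpj : ∀ j ≤ 4, Causal (pj j) := fun j hj t ht => by
    simp only [pj, causal_iter C0' z0 hj t ht, causal_iter C1 z1 hj t ht]
    exact map_zero Bp
  have cpj : ∀ j < 4, Continuous (pj j) := fun j hj =>
    continuous_iff_continuousAt.2 fun x => (dpj j hj x).continuousAt
  have pj0 : ∀ t, pj 0 t = mop (Zop (β0 t, β1 t)) := fun t => by simp [pj, Bp]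
  let S : Submodule ℝ (H × K) := V0.map ((mop.prod aop : Z →L[ℝ] H × K) : Z →ₗ[ℝ] H × K)
  have hS : ∀ v ∈ V0, (mop v, aop v) ∈ S := fun v hv => ⟨v, hv, rfl⟩
  let b : ℝ → K := fun t => aop (z t) - aop (Zop (β0 t, β1 t))
  let bk : ℝ → K := fun t => aop (zk t) - aop (Zop (β0 t, β1 t))
  have weak : ∀ β : Hp × Hm, ∀ w ∈ V0,
      ⟪mop (Zop β), mop w⟫ + ⟪aop (Zop β), aop w⟫ = f β.2 w := fun β w hw => by
    rw [← Z2 β w hw, mk2_inner]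
  have sol : Sol S (fun t => mop (z t)) m1 m2 b (fun t => ∫ τ in (0:ℝ)..t, pj 0 τ) (pj 0)
      (pj 1) :=
    { hm := hm
      hm1 := hm1
      hP := fun x => intervalIntegral.integral_hasDerivAt_right
        ((cpj 0 (by norm_num)).intervalIntegrable _ _)
        ((cpj 0 (by norm_num)).stronglyMeasurableAtFilter _ _) (cpj 0 (by norm_num)).continuousAt
      hp := dpj 0 (by norm_num)
      cp1 := cpj 1 (by norm_num)
      cb := by
        have := C0.continuous
        have := C1.continuous
        fun_prop
      mem := fun t => by
        have := hS _ (V0.sub_mem (hz t) (Z1 (β0 t, β1 t)))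
        convert this using 1
        rw [pj0]
        simp [b]
      eqn := by
        rintro t _ ⟨w, hw, rfl⟩
        have h1 := heq t w hw
        have h2 := weak (β0 t, β1 t) w hw
        simp only [b, pj0]
        change ⟪m2 t - mop (Zop (β0 t, β1 t)), mop w⟫
          + ⟪aop (z t) - aop (Zop (β0 t, β1 t)), aop w⟫ = 0
        rw [inner_sub_left, inner_sub_left]
        simp only at h2
        linarith
      zm := fun t ht => by simp [zz t ht]
      zm1 := Causal.of_hasDerivAt hm (fun t ht => by simp [zz t ht])
      zP := fun t ht => by
        refine intervalIntegral.integral_zero_ae (Filter.Eventually.of_forall fun x hx => ?_)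
        rw [Set.uIoc_of_ge ht] at hx
        exact zpj 0 (by norm_num) x hx.2
      zp := zpj 0 (by norm_num) }
  have zm2 : Causal m2 := Causal.of_hasDerivAt hm1 sol.zm1
  have A02 := ftc_iter C0 (j := 2) (by norm_num)
  have A04 := ftc_iter C0 (j := 4) (by norm_num)
  have A12 := ftc_iter C1 (j := 2) (by norm_num)
  have A14 : ∀ a b, IntervalIntegrable (iteratedDeriv 5 β1) MeasureTheory.volume a b :=
    fun a b => i1.intervalIntegrable
  norm_num at A02 A04 A12
  let Φ : ℝ → ℝ := fun t => Cb * ((cumv (iteratedDeriv 3 β0) t + cumv (iteratedDeriv 5 β0) t)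
    + (cumv (iteratedDeriv 3 β1) t + cumv (iteratedDeriv 5 β1) t))
  have mono : Monotone Φ := by
    intro x y hxy
    have h1 := cumv_mono A02.1 hxy
    have h2 := cumv_mono A04.1 hxy
    have h3 := cumv_mono A12.1 hxy
    have h4 := cumv_mono A14 hxy
    exact mul_le_mul_of_nonneg_left (by linarith) hCb0
  have Φ0 : ∀ t ≤ 0, Φ t = 0 := fun t ht => by simp [Φ, cumv_zero ht]
  have hpj : ∀ j s t, ‖pj j t - pj j s‖ ≤ Cb * (‖iteratedDeriv j β0 t - iteratedDeriv j β0 s‖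
      + ‖iteratedDeriv j β1 t - iteratedDeriv j β1 s‖) := by
    intro j s t
    simp only [pj]
    rw [← map_sub, Prod.mk_sub_mk]
    refine (Bp.le_opNorm _).trans ?_
    refine mul_le_mul hBp ?_ (norm_nonneg _) hCb0
    rw [Prod.norm_mk]
    exact max_le (by linarith [norm_nonneg (iteratedDeriv j β1 t - iteratedDeriv j β1 s)])
      (by linarith [norm_nonneg (iteratedDeriv j β0 t - iteratedDeriv j β0 s)])
  have hΦ2 : ∀ s t, s ≤ t → ‖pj 2 t - pj 2 s‖ ≤ Φ t - Φ s := by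
    intro s t hst
    refine (hpj 2 s t).trans ?_
    have h1 := cumv_bound A02.1 (causal_iter C0' z0 (j := 2) (by norm_num)) A02.2 hst
    have h2 := cumv_bound A12.1 (causal_iter C1 z1 (j := 2) (by norm_num)) A12.2 hst
    have h3 := cumv_mono A04.1 hst
    have h4 := cumv_mono A14 hst
    simp only [Φ]
    rw [← mul_sub]
    exact mul_le_mul_of_nonneg_left (by linarith) hCb0
  have hΦ4 : ∀ s t, s ≤ t → ‖pj 4 t - pj 4 s‖ ≤ Φ t - Φ s := by
    intro s t hst
    refine (hpj 4 s t).trans ?_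
    have h1 := cumv_bound A04.1 (causal_iter C0' z0 (j := 4) (by norm_num)) A04.2 hst
    have h2 := cumv_bound A14 (causal_iter C1 z1 (j := 4) (by norm_num)) F1 hst
    have h3 := cumv_mono A02.1 hst
    have h4 := cumv_mono A12.1 hst
    simp only [Φ]
    rw [← mul_sub]
    exact mul_le_mul_of_nonneg_left (by linarith) hCb0
  have core := core_estimate sol cm2 (dpj 1 (by norm_num)) (dpj 2 (by norm_num))
    (dpj 3 (by norm_num)) (zpj 1 (by norm_num)) (zpj 2 (by norm_num)) (zpj 3 (by norm_num))
    (zpj 4 (by norm_num)) zm2 mono Φ0 hΦ2 hΦ4 hk ht (mk := fun t => mop (zk t)) (bk := bk)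
    (fun t ht => by simp [zzk t ht]) (fun t ht => by simp [b, bk, zz t ht, zzk t ht])
    (fun t => by
      have := hS _ (V0.sub_mem (hz t) (hzk t))
      convert this using 1
      simp [b, bk])
    (by
      rintro t _ ⟨w, hw, rfl⟩
      have h1 := heqk t w hw
      have h2 := weak (amean k (amean k (fun τ => (β0 τ, β1 τ))) t) w hw
      have e1 : (amean k (amean k (fun τ => (β0 τ, β1 τ))) t).2 = amean k (amean k β1) t := by
        simp [amean]
      have e2 : amean k (amean k (pj 0)) t
          = mop (Zop (amean k (amean k (fun τ => (β0 τ, β1 τ))) t)) := by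
        simp only [amean, pj0, map_smul, map_add]
      have e3 : amean k (amean k bk) t = aop (amean k (amean k zk) t)
          - aop (Zop (amean k (amean k (fun τ => (β0 τ, β1 τ))) t)) := by
        simp only [bk, amean, map_smul, map_add]; module
      rw [e1] at h2
      rw [e2, e3]
      change ⟪_ - _, mop w⟫ + ⟪_ - _, aop w⟫ = 0
      rw [inner_sub_left, inner_sub_left]
      linarith) s hs
  have hΦH : Φ t ≤ Cb * (Hfun 3 (iteratedDeriv 3 β0) t + Hfun 2 (iteratedDeriv 3 β1) t) :=
    mul_le_mul_of_nonneg_left (add_le_add (Hfun_ge (by norm_num) β0 ht)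
      (Hfun_ge (by norm_num) β1 ht)) hCb0
  have hfin : 90 * k ^ 2 * max t (t ^ 2) * Φ t ≤ 90 * Cb * k ^ 2 * max t (t ^ 2)
      * (Hfun 3 (iteratedDeriv 3 β0) t + Hfun 2 (iteratedDeriv 3 β1) t) := by
    have h0 : 0 ≤ max t (t ^ 2) := ht.trans (le_max_left _ _)
    refine (mul_le_mul_of_nonneg_left hΦH (by positivity)).trans (le_of_eq (by ring))
  constructor
  · rw [map_amean]
    simp only [map_sub]
    exact core.1.trans hfin
  · rw [map_amean]
    have : (fun s => aop (z s - zk s)) = fun t => b t - bk t := by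
      funext s; simp [b, bk]
    rw [this]
    exact core.2.trans hfin

end AbstractMain

section Assembly

lemma map_dquot {X Y : Type*} [NormedAddCommGroup X] [NormedSpace ℝ X]
    [NormedAddCommGroup Y] [NormedSpace ℝ Y] (T : X →L[ℝ] Y) (k : ℝ) (f : ℝ → X) (t : ℝ) :
    T (dquot k f t) = dquot k (fun s => T (f s)) t := by
  simp [dquot]

lemma amean_mem {X : Type*} [NormedAddCommGroup X] [NormedSpace ℝ X] (S : Submodule ℝ X)
    {f : ℝ → X} (hf : ∀ t, f t ∈ S) (k t : ℝ) : amean k f t ∈ S :=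
  S.smul_mem _ (S.add_mem (hf _) (hf _))

lemma Hfun_nonneg {X : Type*} [NormedAddCommGroup X] [NormedSpace ℝ X] (k : ℕ) (f : ℝ → X)
    {t : ℝ} (ht : 0 ≤ t) : 0 ≤ Hfun k f t :=
  Finset.sum_nonneg fun _ _ => intervalIntegral.integral_nonneg ht fun _ _ => norm_nonneg _

/-- bounded, not necessarily linear, right inverse of the pair of traces -/
lemma lift_exists {Hp H1s : Type*} [NormedAddCommGroup Hp] [NormedSpace ℝ Hp] [CompleteSpace Hp]
    [NormedAddCommGroup H1s] [NormedSpace ℝ H1s] [CompleteSpace H1s] (γm γp : H1s →L[ℝ] Hp)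
    (hs : ∀ a b : Hp, ∃ w : H1s, γm w = a ∧ γp w = b) :
    ∃ (l : Hp → H1s) (C : ℝ), 0 ≤ C ∧ (∀ a, ‖l a‖ ≤ C * ‖a‖) ∧ (∀ a, γm (l a) = -a) ∧
      ∀ a, γp (l a) = -a := by
  obtain ⟨C, hC, h⟩ := (γm.prod γp).exists_preimage_norm_le (by
    rintro ⟨a, b⟩
    obtain ⟨w, h1, h2⟩ := hs a b
    exact ⟨w, by simp [h1, h2]⟩)
  choose l hl1 hl2 using fun a : Hp => h (-a, -a)
  refine ⟨l, C, hC.le, fun a => (hl2 a).trans (by simp [Prod.norm_mk]), fun a => ?_, fun a => ?_⟩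
  · exact congrArg Prod.fst (hl1 a)
  · exact congrArg Prod.snd (hl1 a)

/-- the homogeneous discrete space -/
def V0sp {Hp Hm H1Ω H1s : Type*} [NormedAddCommGroup Hp] [NormedSpace ℝ Hp]
    [NormedAddCommGroup Hm] [NormedSpace ℝ Hm] [NormedAddCommGroup H1Ω] [NormedSpace ℝ H1Ω]
    [NormedAddCommGroup H1s] [NormedSpace ℝ H1s]
    (γ : H1Ω →L[ℝ] Hp) (γm γp : H1s →L[ℝ] Hp) (dpair : Hm →L[ℝ] Hp →L[ℝ] ℝ)
    (Uh : Submodule ℝ H1Ω) (Xh : Submodule ℝ Hm) (Yh : Submodule ℝ Hp) :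
    Submodule ℝ (H1Ω × H1s) where
  carrier := {z | z.1 ∈ Uh ∧ γm z.2 - γp z.2 ∈ Yh ∧ ∀ μ ∈ Xh, dpair μ (γ z.1 - γp z.2) = 0}
  zero_mem' := by simp
  add_mem' := by
    rintro a b ⟨h1, h2, h3⟩ ⟨g1, g2, g3⟩
    refine ⟨Uh.add_mem h1 g1, ?_, fun μ hμ => ?_⟩
    · have := Yh.add_mem h2 g2
      convert this using 1
      simp only [Prod.snd_add, map_add]
      abel
    · have h := h3 μ hμ
      have g := g3 μ hμ
      simp only [map_sub, Prod.snd_add, Prod.fst_add, map_add] at h g ⊢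
      linarith
  smul_mem' := by
    rintro x a ⟨h1, h2, h3⟩
    refine ⟨Uh.smul_mem x h1, ?_, fun μ hμ => ?_⟩
    · have := Yh.smul_mem x h2
      convert this using 1
      simp only [Prod.smul_snd, map_smul, smul_sub]
    · have h := h3 μ hμ
      simp only [map_sub, Prod.smul_snd, Prod.smul_fst, map_smul, smul_eq_mul] at h ⊢
      rw [← mul_sub, h, mul_zero]

lemma V0sp_closed {Hp Hm H1Ω H1s : Type*} [NormedAddCommGroup Hp] [NormedSpace ℝ Hp]
    [NormedAddCommGroup Hm] [NormedSpace ℝ Hm] [NormedAddCommGroup H1Ω] [NormedSpace ℝ H1Ω]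
    [NormedAddCommGroup H1s] [NormedSpace ℝ H1s]
    (γ : H1Ω →L[ℝ] Hp) (γm γp : H1s →L[ℝ] Hp) (dpair : Hm →L[ℝ] Hp →L[ℝ] ℝ)
    (Uh : Submodule ℝ H1Ω) (Xh : Submodule ℝ Hm) (Yh : Submodule ℝ Hp)
    [FiniteDimensional ℝ Uh] [FiniteDimensional ℝ Yh] :
    IsClosed (V0sp γ γm γp dpair Uh Xh Yh : Set (H1Ω × H1s)) := by
  have h1 : IsClosed {z : H1Ω × H1s | z.1 ∈ Uh} :=
    (Submodule.closed_of_finiteDimensional Uh).preimage continuous_fst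
  have h2 : IsClosed {z : H1Ω × H1s | γm z.2 - γp z.2 ∈ Yh} :=
    (Submodule.closed_of_finiteDimensional Yh).preimage
      (f := fun z : H1Ω × H1s => γm z.2 - γp z.2) (by fun_prop)
  have h3 : IsClosed {z : H1Ω × H1s | ∀ μ ∈ Xh, dpair μ (γ z.1 - γp z.2) = 0} := by
    simp only [Set.setOf_forall]
    exact isClosed_iInter fun μ => isClosed_iInter fun _ =>
      isClosed_eq (by fun_prop) continuous_const
  exact h1.inter (h2.inter h3)

end Assembly


set_option maxHeartbeats 1000000

/-- Fully discrete boundary trace estimate (Theorem 4.2, estimate (4.7)): bound on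
$‖α_k^2 ⟦γ e_k^⋆(t)⟧‖_{1/2,Γ}$, where $⟦γ e_k^⋆⟧ = φ_k^h - φ^h$. -/
theorem fully_discrete_boundary_trace_estimate
    {L2Ω L2Ωv L2s L2sv Hp Hm H1Ω H1s Hdiv : Type*}
    [NormedAddCommGroup L2Ω] [InnerProductSpace ℝ L2Ω] [CompleteSpace L2Ω]
    [NormedAddCommGroup L2Ωv] [InnerProductSpace ℝ L2Ωv] [CompleteSpace L2Ωv]
    [NormedAddCommGroup L2s] [InnerProductSpace ℝ L2s] [CompleteSpace L2s]
    [NormedAddCommGroup L2sv] [InnerProductSpace ℝ L2sv] [CompleteSpace L2sv]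
    [NormedAddCommGroup Hp] [InnerProductSpace ℝ Hp] [CompleteSpace Hp]
    [NormedAddCommGroup Hm] [InnerProductSpace ℝ Hm] [CompleteSpace Hm]
    [NormedAddCommGroup H1Ω] [NormedSpace ℝ H1Ω] [CompleteSpace H1Ω]
    [NormedAddCommGroup H1s] [NormedSpace ℝ H1s] [CompleteSpace H1s]
    [NormedAddCommGroup Hdiv] [NormedSpace ℝ Hdiv] [CompleteSpace Hdiv]
    (ι : H1Ω →L[ℝ] L2Ω) (grad : H1Ω →L[ℝ] L2Ωv) (γ : H1Ω →L[ℝ] Hp)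
    (ιs : H1s →L[ℝ] L2s) (grads : H1s →L[ℝ] L2sv) (γm γp : H1s →L[ℝ] Hp)
    (ιdiv : Hdiv →L[ℝ] L2sv) (divs : Hdiv →L[ℝ] L2s) (γνm γνp : Hdiv →L[ℝ] Hm)
    (dpair : Hm →L[ℝ] Hp →L[ℝ] ℝ)
    (cinv cinv2 : L2Ω →L[ℝ] L2Ω) (kap khalf : L2Ωv →L[ℝ] L2Ωv)
    (hGreen : ∀ (v : Hdiv) (w : H1s),
      ⟪divs v, ιs w⟫ + ⟪ιdiv v, grads w⟫
        = dpair (γνm v) (γm w) - dpair (γνp v) (γp w))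
    (htrace_surj : ∀ a b : Hp, ∃ w : H1s, γm w = a ∧ γp w = b)
    (hH1Ωnorm : ∀ u : H1Ω, ‖u‖ ^ 2 = ‖ι u‖ ^ 2 + ‖grad u‖ ^ 2)
    (hH1snorm : ∀ u : H1s, ‖u‖ ^ 2 = ‖ιs u‖ ^ 2 + ‖grads u‖ ^ 2)
    (hHdivnorm : ∀ v : Hdiv, ‖v‖ ^ 2 = ‖ιdiv v‖ ^ 2 + ‖divs v‖ ^ 2)
    (hcinv : ∀ x y : L2Ω, ⟪cinv2 x, y⟫ = ⟪cinv x, cinv y⟫)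
    (hκhalf : ∀ x y : L2Ωv, ⟪kap x, y⟫ = ⟪khalf x, khalf y⟫)
    (c0 κ0 : ℝ) (hc0 : 0 < c0) (hκ0 : 0 < κ0)
    (hc2pos : ∀ x : L2Ω, c0 * ‖x‖ ^ 2 ≤ ⟪cinv2 x, x⟫)
    (hκpos : ∀ x : L2Ωv, κ0 * ‖x‖ ^ 2 ≤ ⟪kap x, x⟫) :
    ∃ C : ℝ, 0 < C ∧
      ∀ (Uh : Submodule ℝ H1Ω) (Xh : Submodule ℝ Hm) (Yh : Submodule ℝ Hp),
        FiniteDimensional ℝ Uh → FiniteDimensional ℝ Xh → FiniteDimensional ℝ Yh →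
        ∀ k : ℝ, 0 < k →
        ∀ (β0 : ℝ → Hp) (β1 : ℝ → Hm), WP 6 β0 → WP 5 β1 →
        ∀ (uh : ℝ → H1Ω) (us : ℝ → H1s) (wst : ℝ → Hdiv),
          Solves210 ι grad γ ιs grads γm γp ιdiv divs γνm γνp dpair cinv2 kap
            Uh Xh Yh β0 β1 uh us wst →
        ∀ (ukh : ℝ → H1Ω) (uks : ℝ → H1s) (wkst : ℝ → Hdiv),
          Solves43 ι grad γ ιs grads γm γp ιdiv divs γνm γνp dpair cinv2 kap
            Uh Xh Yh k β0 β1 ukh uks wkst →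
        ∀ t : ℝ, 0 ≤ t →
          ‖amean k (amean k (fun τ => (γm (us τ) - γp (us τ)) - (γm (uks τ) - γp (uks τ)))) t‖
          ≤ C * k ^ 2 * max t (t ^ 2)
              * (Hfun 3 (iteratedDeriv 3 β0) t + Hfun 2 (iteratedDeriv 3 β1) t) := by
  obtain ⟨l, Cl, hCl, hl, lm, lp⟩ := lift_exists γm γp htrace_surj
  let A : L2Ω × L2s →L[ℝ] WithLp 2 (L2Ω × L2s) :=
    mk2 (cinv.comp (ContinuousLinearMap.fst ℝ L2Ω L2s)) (ContinuousLinearMap.snd ℝ L2Ω L2s)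
  let mop : H1Ω × H1s →L[ℝ] WithLp 2 (L2Ω × L2s) := A.comp (ι.prodMap ιs)
  let aop : H1Ω × H1s →L[ℝ] WithLp 2 (L2Ωv × L2sv) :=
    mk2 ((khalf.comp grad).comp (ContinuousLinearMap.fst ℝ H1Ω H1s))
      (grads.comp (ContinuousLinearMap.snd ℝ H1Ω H1s))
  let f : Hm →L[ℝ] (H1Ω × H1s) →L[ℝ] ℝ :=
    ((ContinuousLinearMap.compL ℝ (H1Ω × H1s) Hp ℝ).flip
      (γ.comp (ContinuousLinearMap.fst ℝ H1Ω H1s))).comp dpair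
  have fapp : ∀ b w, f b w = dpair b (γ w.1) := fun b w => rfl
  have mapp : ∀ x, mop x = A (ι x.1, ιs x.2) := fun x => rfl
  have Ainner : ∀ x y, ⟪A x, A y⟫ = ⟪cinv2 x.1, y.1⟫ + ⟪x.2, y.2⟫ := fun x y => by
    rw [hcinv]; exact mk2_inner _ _ _ _ x y
  have ainner : ∀ x y, ⟪aop x, aop y⟫ = ⟪kap (grad x.1), grad y.1⟫ + ⟪grads x.2, grads y.2⟫ :=
    fun x y => by rw [hκhalf]; exact mk2_inner _ _ _ _ x y
  have msq : ∀ x, ‖mop x‖ ^ 2 = ⟪cinv2 (ι x.1), ι x.1⟫ + ‖ιs x.2‖ ^ 2 := fun x => by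
    rw [← real_inner_self_eq_norm_sq, mapp, Ainner, real_inner_self_eq_norm_sq]
  have asq : ∀ x, ‖aop x‖ ^ 2 = ⟪kap (grad x.1), grad x.1⟫ + ‖grads x.2‖ ^ 2 := fun x => by
    rw [← real_inner_self_eq_norm_sq, ainner, real_inner_self_eq_norm_sq]
  set c : ℝ := 1 + 1 / c0 + 1 / κ0 with hcdef
  have hcc : 0 < 1 / c0 := by positivity
  have hck : 0 < 1 / κ0 := by positivity
  have hJ : ∀ v, ‖v‖ ≤ c * ‖mk2 mop aop v‖ := by
    intro v
    have e : ‖mk2 mop aop v‖ ^ 2 = ⟪cinv2 (ι v.1), ι v.1⟫ + ‖ιs v.2‖ ^ 2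
        + (⟪kap (grad v.1), grad v.1⟫ + ‖grads v.2‖ ^ 2) := by
      rw [mk2_norm_sq, msq, asq]
    have g1 := hc2pos (ι v.1)
    have g2 := hκpos (grad v.1)
    have k1 : ‖ι v.1‖ ^ 2 ≤ 1 / c0 * ‖mk2 mop aop v‖ ^ 2 := by
      rw [div_mul_eq_mul_div, le_div_iff₀ hc0, e]
      nlinarith [sq_nonneg ‖ιs v.2‖, sq_nonneg ‖grads v.2‖,
        mul_nonneg hκ0.le (sq_nonneg ‖grad v.1‖)]
    have k2 : ‖grad v.1‖ ^ 2 ≤ 1 / κ0 * ‖mk2 mop aop v‖ ^ 2 := by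
      rw [div_mul_eq_mul_div, le_div_iff₀ hκ0, e]
      nlinarith [sq_nonneg ‖ιs v.2‖, sq_nonneg ‖grads v.2‖,
        mul_nonneg hc0.le (sq_nonneg ‖ι v.1‖)]
    have k3 : ‖ιs v.2‖ ^ 2 + ‖grads v.2‖ ^ 2 ≤ ‖mk2 mop aop v‖ ^ 2 := by
      rw [e]
      nlinarith [mul_nonneg hc0.le (sq_nonneg ‖ι v.1‖),
        mul_nonneg hκ0.le (sq_nonneg ‖grad v.1‖)]
    have hN := sq_nonneg ‖mk2 mop aop v‖
    have c1 : 1 ≤ c := by rw [hcdef]; linarith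
    have hcN : c * ‖mk2 mop aop v‖ ^ 2 ≤ (c * ‖mk2 mop aop v‖) ^ 2 := by
      rw [mul_pow]
      exact mul_le_mul_of_nonneg_right (by nlinarith) hN
    have hpos : 0 ≤ c * ‖mk2 mop aop v‖ := by positivity
    have hexp : c * ‖mk2 mop aop v‖ ^ 2 = ‖mk2 mop aop v‖ ^ 2
        + 1 / c0 * ‖mk2 mop aop v‖ ^ 2 + 1 / κ0 * ‖mk2 mop aop v‖ ^ 2 := by
      rw [hcdef]; ring
    have p1 := mul_nonneg hcc.le hN
    have p2 := mul_nonneg hck.le hN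
    rw [Prod.norm_def]
    refine max_le ?_ ?_
    · refine (sq_le_sq₀ (norm_nonneg _) hpos).1 ?_
      rw [hH1Ωnorm]; linarith
    · refine (sq_le_sq₀ (norm_nonneg _) hpos).1 ?_
      rw [hH1snorm]; linarith
  obtain ⟨C, hC, main⟩ := abstract_main mop aop c (by positivity) hJ f
    (fun a => ((0 : H1Ω), l a)) Cl hCl (fun a => by simpa [Prod.norm_mk] using hl a)
  set G := ‖γm‖ + ‖γp‖ with hGdef
  have hG0 : 0 ≤ G := by positivity
  refine ⟨2 * C * G + 1, by positivity, ?_⟩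
  intro Uh Xh Yh fU fX fY k hk β0 β1 hβ0 hβ1 uh us wst hS ukh uks wkst hSk t ht
  obtain ⟨a1, a2, a3, a4, a5, a6, a7, a8, a9, a10, a11, a12, a13, a14, a15⟩ := hS
  obtain ⟨b1, b2, b3, b4, b5, b6, b7, b8, b9, b10, b11⟩ := hSk
  have green : ∀ v : Hdiv, γνm v - γνp v ∈ Xh → (∀ ψ ∈ Yh, dpair (γνm v) ψ = 0) →
      ∀ w ∈ V0sp γ γm γp dpair Uh Xh Yh,
        ⟪divs v, ιs w.2⟫ + ⟪ιdiv v, grads w.2⟫ = dpair (γνm v - γνp v) (γ w.1) := by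
    rintro v h1 h2 w ⟨w1, w2, w3⟩
    have e1 := h2 _ w2
    have e2 := w3 _ h1
    rw [hGreen]
    simp only [map_sub, ContinuousLinearMap.sub_apply] at e1 e2 ⊢
    linarith
  have key := main (V0sp γ γm γp dpair Uh Xh Yh) (V0sp_closed γ γm γp dpair Uh Xh Yh)
    (fun a b => by
      refine ⟨by simp, ?_, fun μ _ => ?_⟩
      · have : γm (l (a + b) - l a - l b) - γp (l (a + b) - l a - l b) = 0 := by
          simp [lm, lp]
        simpa only [Prod.snd_sub, this] using Yh.zero_mem
      · have : γp (l (a + b) - l a - l b) = 0 := by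
          simp [lp]
        simp only [Prod.snd_sub, Prod.fst_sub, this]
        simp)
    (fun x a => by
      refine ⟨by simp, ?_, fun μ _ => ?_⟩
      · have : γm (l (x • a) - x • l a) - γp (l (x • a) - x • l a) = 0 := by
          simp [lm, lp]
        simpa only [Prod.snd_sub, Prod.smul_snd, this] using Yh.zero_mem
      · have : γp (l (x • a) - x • l a) = 0 := by
          simp [lp]
        simp only [Prod.snd_sub, Prod.fst_sub, Prod.smul_snd, Prod.smul_fst, this]
        simp)
    k hk β0 β1 hβ0 hβ1 (fun t => (uh t, us t))
    (fun t => A (iteratedDeriv 1 (fun τ => ι (uh τ)) t, iteratedDeriv 1 (fun τ => ιs (us τ)) t))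
    (fun t => A (iteratedDeriv 2 (fun τ => ι (uh τ)) t, iteratedDeriv 2 (fun τ => ιs (us τ)) t))
    (fun t ht => by simp [a2 t ht, a3 t ht]) (a7.prodMk a8)
    (fun x => by
      have h := (hasDerivAt_iter (n := 2) a5 (j := 0) (by norm_num) x).prodMk
        (hasDerivAt_iter (n := 2) a6 (j := 0) (by norm_num) x)
      simp only [iteratedDeriv_zero, zero_add] at h
      exact A.hasFDerivAt.comp_hasDerivAt x h)
    (fun x => A.hasFDerivAt.comp_hasDerivAt x
      ((hasDerivAt_iter (n := 2) a5 (j := 1) (by norm_num) x).prodMk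
        (hasDerivAt_iter (n := 2) a6 (j := 1) (by norm_num) x)))
    (A.continuous.comp ((a5.continuous_iteratedDeriv 2 le_rfl).prodMk
      (a6.continuous_iteratedDeriv 2 le_rfl)))
    (fun t => by
      refine ⟨by simpa using a1 t, ?_, fun μ hμ => ?_⟩
      · have : γm (us t - l (β0 t)) - γp (us t - l (β0 t)) = γm (us t) - γp (us t) := by
          simp [lm, lp]
        simpa only [Prod.snd_sub, this] using a12 t
      · have e := a15 t μ hμ
        simp only [Prod.snd_sub, Prod.fst_sub, sub_zero, map_sub, lp, map_neg] at e ⊢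
        linarith)
    (fun t w hw => by
      have e1 := a10 t w.1 hw.1
      have e2 := green (wst t) (a13 t) (a14 t) w hw
      rw [fapp, mapp, Ainner, ainner]
      simp only
      rw [a11 t, ← a9 t]
      linarith)
    (fun t => (ukh t, uks t))
    (fun t ht => by simp [b2 t ht, b3 t ht])
    (fun t => by
      refine ⟨by simpa using b1 t, ?_, fun μ hμ => ?_⟩
      · have : γm (uks t - l (β0 t)) - γp (uks t - l (β0 t)) = γm (uks t) - γp (uks t) := by
          simp [lm, lp]
        simpa only [Prod.snd_sub, this] using b8 t
      · have e := b11 t μ hμ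
        simp only [Prod.snd_sub, Prod.fst_sub, sub_zero, map_sub, lp, map_neg] at e ⊢
        linarith)
    (fun t w hw => by
      have e1 := b6 t w.1 hw.1
      let v := amean k (amean k wkst) t
      have v1 : γνm v - γνp v = amean k (amean k (fun τ => γνm (wkst τ) - γνp (wkst τ))) t := by
        simp only [v, amean, map_smul, map_add]; module
      have v2 : divs v = amean k (amean k (fun τ => divs (wkst τ))) t := by
        simp only [v, amean, map_smul, map_add]
      have v3 : ιdiv v = grads (amean k (amean k uks) t) := by
        simp only [v, amean, map_smul, map_add, b5]
      have v4 : γνm v - γνp v ∈ Xh := by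
        rw [v1]; exact amean_mem _ (amean_mem _ b9 k) k t
      have v5 : ∀ ψ ∈ Yh, dpair (γνm v) ψ = 0 := fun ψ hψ => by
        have z := fun s => b10 s ψ hψ
        simp only [v, amean, map_smul, map_add, ContinuousLinearMap.add_apply,
          ContinuousLinearMap.smul_apply, z]
        simp
      have e2 := green v v4 v5 w hw
      rw [v1, v2, v3, ← b7 t] at e2
      have d1 : dquot k (dquot k (fun τ => mop (ukh τ, uks τ))) t
          = A (dquot k (dquot k (fun τ => ι (ukh τ))) t,
            dquot k (dquot k (fun τ => ιs (uks τ))) t) := by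
        simp only [mapp, dquot, ← map_sub, ← map_smul, Prod.mk_sub_mk, Prod.smul_mk]
      have d2 : amean k (amean k (fun τ => (ukh τ, uks τ))) t
          = (amean k (amean k ukh) t, amean k (amean k uks) t) := by
        simp only [amean, Prod.mk_add_mk, Prod.smul_mk]
      rw [d1, d2, fapp, mapp, Ainner, ainner]
      simp only
      linarith)
    t ht
  set B := k ^ 2 * max t (t ^ 2)
      * (Hfun 3 (iteratedDeriv 3 β0) t + Hfun 2 (iteratedDeriv 3 β1) t) with hB
  have hB0 : 0 ≤ B := by
    have h1 := Hfun_nonneg 3 (iteratedDeriv 3 β0) ht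
    have h2 := Hfun_nonneg 2 (iteratedDeriv 3 β1) ht
    have h3 : 0 ≤ max t (t ^ 2) := ht.trans (le_max_left _ _)
    positivity
  have bd : ∀ s ≤ t, ‖amean k (fun τ => (γm (us τ) - γp (us τ)) - (γm (uks τ) - γp (uks τ))) s‖
      ≤ 2 * C * G * B := by
    intro s hs
    obtain ⟨q1, q2⟩ := key s hs
    set ζ := amean k (fun t => (uh t, us t) - (ukh t, uks t)) s with hζ
    have hC1 : C * k ^ 2 * max t (t ^ 2)
      * (Hfun 3 (iteratedDeriv 3 β0) t + Hfun 2 (iteratedDeriv 3 β1) t) = C * B := by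
      rw [hB]; ring
    rw [hC1] at q1 q2
    have ez : amean k (fun τ => (γm (us τ) - γp (us τ)) - (γm (uks τ) - γp (uks τ))) s
        = γm ζ.2 - γp ζ.2 := by
      have : ζ.2 = amean k (fun τ => us τ - uks τ) s := by
        simp [hζ, amean]
      rw [this]
      simp only [amean, map_smul, map_add, map_sub]; module
    have hn : ‖ζ.2‖ ≤ ‖mop ζ‖ + ‖aop ζ‖ := by
      refine (sq_le_sq₀ (norm_nonneg _) (by positivity)).1 ?_
      have m := msq ζ
      have a := asq ζ
      have g1 := hc2pos (ι ζ.1)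
      have g2 := hκpos (grad ζ.1)
      have g3 := mul_nonneg hc0.le (sq_nonneg ‖ι ζ.1‖)
      have g4 := mul_nonneg hκ0.le (sq_nonneg ‖grad ζ.1‖)
      rw [hH1snorm]
      nlinarith [mul_nonneg (norm_nonneg (mop ζ)) (norm_nonneg (aop ζ))]
    rw [ez]
    calc ‖γm ζ.2 - γp ζ.2‖ ≤ ‖γm ζ.2‖ + ‖γp ζ.2‖ := norm_sub_le _ _
      _ ≤ ‖γm‖ * ‖ζ.2‖ + ‖γp‖ * ‖ζ.2‖ := add_le_add (γm.le_opNorm _) (γp.le_opNorm _)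
      _ = G * ‖ζ.2‖ := by rw [hGdef]; ring
      _ ≤ G * (C * B + C * B) :=
        mul_le_mul_of_nonneg_left (hn.trans (add_le_add q1 q2)) hG0
      _ = 2 * C * G * B := by ring
  refine (amean_norm_le (bd t le_rfl) (bd (t - k) (by linarith))).trans ?_
  have : (2 * C * G + 1) * k ^ 2 * max t (t ^ 2)
      * (Hfun 3 (iteratedDeriv 3 β0) t + Hfun 2 (iteratedDeriv 3 β1) t)
      = 2 * C * G * B + B := by rw [hB]; ring
  rw [this]
  linarith
end
end
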